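/- Let p be a prime with p ≡ 1 or 4 (mod 5). If p ≡ 1 or 4 (mod 15), then there are integers x, y with p = x^2 + 15y^2, and for any such x, Σ_{n=0}^{p-1} A_n ≡ 4x^2 (mod p). If p ≡ 11 or 14 (mod 15), then Σ_{n=0}^{p-1} A_n ≡ 0 (mod p). -/

import Mathlib

open Finset

/-- `A n = ∑_{k=0}^{n} C(2k,k)·C(2n-2k,n-k)·C(n,k)^2`. -/
def A (n : ℕ) : ℕ :=
  ∑ k ∈ Finset.range (n + 1),
    Nat.choose (2 * k) k * Nat.choose (2 * n - 2 * k) (n - k) * Nat.choose n k ^ 2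

/-!
Let `k` be an algebraic closure of `𝔽_p`, and let `φ ^ 2 = φ + 1` in `𝔽_p`. The curve
`E : Y² = X³ + a X + b` with `a = 24 φ - 27` and `b = 70 - 56 φ` has complex multiplication of
discriminant `-15`; its endomorphisms commuting with negation are the points over `k(t)` of the
twist `f Y² = X³ + a X + b`, where `f = t³ + a t + b`.

The sum of the `A n` is the square of the Hasse invariant of `E`: the Domb numbers have a
single-sum formula, by which the sum modulo `p` becomes a hypergeometric polynomial; by Clausen's
identity this is the square of the Legendre polynomial `P_{⌊p/3⌋}` at `φ`, and that value is the
coefficient of `X ^ (p - 1)` in `(X³ + a X + b) ^ ((p - 1) / 2)` up to sign.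

The Hasse invariant is computed through the height of points over `k(t)`, that is the degree of
endomorphisms, a quadratic form by the parallelogram law, and through the multiplier by which an
endomorphism acts on the invariant differential. If `p = x² + 15 y²`, the endomorphism
`x + y √-15`, for a suitable sign of `y`, has degree `p` and multiplier `0`, so it is Frobenius up
to sign; hence Frobenius has trace `± 2 x`, and counting points modulo `p` identifies the Hasse
invariant with this trace. If `p ≡ 2` modulo `3`, then a nonzero Hasse invariant would force all
multipliers to lie in `𝔽_p`, where `-15` has no square root.
-/

section ParallelogramLaw

open WeierstrassCurve WeierstrassCurve.Affine

variable {F : Type*} [Field F]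

theorem eval_addSubMap (W : WeierstrassCurve F) (s t u : F) :
    (fun i ↦ (W.addSubMap i).eval ![s, t, u]) =
      ![s ^ 2 - W.b₄ * s * u - W.b₆ * t * u - W.b₈ * u ^ 2,
        2 * t * s + W.b₂ * s * u + W.b₄ * t * u + W.b₆ * u ^ 2, t ^ 2 - 4 * s * u] := by
  ext i
  fin_cases i <;> simp [addSubMap]

variable {W : Affine F} {x₁ y₁ x₂ y₂ L M : F}

theorem addX_add_addX_of_slopes (h₁ : W.Equation x₁ y₁) (h₂ : W.Equation x₂ y₂)
    (hL : L * (x₁ - x₂) = y₁ - y₂) (hM : M * (x₁ - x₂) = y₁ - W.negY x₂ y₂) :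
    (x₁ - x₂) ^ 2 * (W.addX x₁ x₂ L + W.addX x₁ x₂ M) =
      2 * (x₁ + x₂) * (x₁ * x₂) + W.b₂ * (x₁ * x₂) + W.b₄ * (x₁ + x₂) + W.b₆ := by
  rw [equation_iff] at h₁ h₂
  simp only [b₂, b₄, b₆, addX, negY] at hM ⊢
  obtain rfl : y₁ = L * (x₁ - x₂) + y₂ := by linear_combination -hL
  grind

theorem addX_mul_addX_of_slopes (h₁ : W.Equation x₁ y₁) (h₂ : W.Equation x₂ y₂) (hx : x₁ ≠ x₂)
    (hL : L * (x₁ - x₂) = y₁ - y₂) (hM : M * (x₁ - x₂) = y₁ - W.negY x₂ y₂) :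
    (x₁ - x₂) ^ 2 * (W.addX x₁ x₂ L * W.addX x₁ x₂ M) =
      (x₁ * x₂) ^ 2 - W.b₄ * (x₁ * x₂) - W.b₆ * (x₁ + x₂) - W.b₈ := by
  rw [equation_iff] at h₁ h₂
  simp only [b₄, b₆, b₈, addX, negY] at hM ⊢
  set g₁ := x₁ ^ 3 + W.a₂ * x₁ ^ 2 + W.a₄ * x₁ + W.a₆
  set g₂ := x₂ ^ 3 + W.a₂ * x₂ ^ 2 + W.a₄ * x₂ + W.a₆
  set l₁ := W.a₁ * x₁ + W.a₃
  set l₂ := W.a₁ * x₂ + W.a₃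
  -- `2 * T + l₁ * l₂` is the product of the two values of `2 * y + a₁ * x + a₃`
  set T := 2 * (y₁ * y₂) + y₁ * l₂ + y₂ * l₁
  set G := g₁ + g₂ - (W.a₂ + x₁ + x₂) * (x₁ - x₂) ^ 2
  have hsub : (x₁ - x₂) ^ 2 * (L ^ 2 + W.a₁ * L - W.a₂ - x₁ - x₂) = G - T := by
    linear_combination
      (L * (x₁ - x₂) + (y₁ - y₂) + W.a₁ * (x₁ - x₂)) * hL + h₁ + h₂
  have hadd : (x₁ - x₂) ^ 2 * (M ^ 2 + W.a₁ * M - W.a₂ - x₁ - x₂) = G + T + l₁ * l₂ := by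
    linear_combination
      (M * (x₁ - x₂) + (y₁ + y₂ + l₂) + W.a₁ * (x₁ - x₂)) * hM + h₁ + h₂
  have hprod : T * (T + l₁ * l₂) = 4 * (g₁ * g₂) + g₁ * l₂ ^ 2 + g₂ * l₁ ^ 2 := by
    linear_combination
      (4 * (y₂ ^ 2 + l₂ * y₂) + l₂ ^ 2) * h₁ + (4 * g₁ + l₁ ^ 2) * h₂
  apply mul_left_cancel₀ (pow_ne_zero 2 (sub_ne_zero.2 hx))
  linear_combination (x₁ - x₂) ^ 2 * (M ^ 2 + W.a₁ * M - W.a₂ - x₁ - x₂) * hsub +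
    (G - T) * hadd - hprod

theorem addSubMap_zero_sym2x (P : W.Point) :
    (fun i ↦ (W.addSubMap i).eval ((0 : W.Point).sym2x P)) = P.sym2x (-P) := by
  rw [Point.sym2x_neg_right]
  rcases P with _ | ⟨x, y, h⟩
  · rw [← Point.zero_def, Point.sym2x_zero_zero, eval_addSubMap]
    simp
  · rw [Point.sym2x_zero_some, Point.sym2x_some_some, eval_addSubMap]
    ext i
    fin_cases i <;> simp <;> ring

variable [DecidableEq F]

theorem addSubMap_sym2x_of_X_ne (h₁ : W.Nonsingular x₁ y₁) (h₂ : W.Nonsingular x₂ y₂)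
    (hx : x₁ ≠ x₂) :
    (fun i ↦ (W.addSubMap i).eval ((Point.some x₁ y₁ h₁).sym2x (.some x₂ y₂ h₂))) =
      (x₁ - x₂) ^ 2 •
        (Point.some x₁ y₁ h₁ + .some x₂ y₂ h₂).sym2x (.some x₁ y₁ h₁ - .some x₂ y₂ h₂) := by
  have hd := sub_ne_zero.2 hx
  have hL : W.slope x₁ x₂ y₁ y₂ * (x₁ - x₂) = y₁ - y₂ := by
    rw [slope_of_X_ne hx, div_mul_cancel₀ _ hd]
  have hM : W.slope x₁ x₂ y₁ (W.negY x₂ y₂) * (x₁ - x₂) = y₁ - W.negY x₂ y₂ := by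
    rw [slope_of_X_ne hx, div_mul_cancel₀ _ hd]
  have hsum := addX_add_addX_of_slopes h₁.1 h₂.1 hL hM
  have hprod := addX_mul_addX_of_slopes h₁.1 h₂.1 hx hL hM
  rw [sub_eq_add_neg (Point.some ..), Point.neg_some, Point.add_of_X_ne hx, Point.add_of_X_ne hx,
    Point.sym2x_some_some, Point.sym2x_some_some, eval_addSubMap]
  ext i
  fin_cases i
  · simp only [Fin.zero_eta, Matrix.cons_val_zero, Pi.smul_apply, smul_eq_mul]
    linear_combination -hprod
  · simp only [Fin.mk_one, Matrix.cons_val_one, Matrix.cons_val_zero, Pi.smul_apply, smul_eq_mul]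
    linear_combination -hsum
  · simp only [Fin.reduceFinMk, Matrix.cons_val, Pi.smul_apply, smul_eq_mul]
    ring

theorem addSubMap_sym2x_self {P : W.Point} (hP : P + P ≠ 0) :
    ∃ c : F, c ≠ 0 ∧
      (fun i ↦ (W.addSubMap i).eval (P.sym2x P)) = c • (P + P).sym2x 0 := by
  rcases P with _ | ⟨x, y, h⟩
  · exact absurd (add_zero 0) hP
  by_cases hy : y = W.negY x y
  · exact absurd (Point.add_of_Y_eq rfl hy) hP
  have hη := sub_ne_zero.2 hy
  have hL : W.slope x x y y * (y - W.negY x y) =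
      3 * x ^ 2 + 2 * W.a₂ * x + W.a₄ - W.a₁ * y := by
    rw [slope_of_Y_ne rfl hy, div_mul_cancel₀ _ hη]
  have hxy := (equation_iff ..).1 h.1
  refine ⟨(y - W.negY x y) ^ 2, pow_ne_zero 2 hη, ?_⟩
  rw [Point.add_of_Y_ne hy, Point.sym2x_some_some, Point.sym2x_some_zero, eval_addSubMap]
  simp only [b₂, b₄, b₆, b₈, addX, negY] at hL ⊢
  generalize W.slope x x y y = L at hL ⊢
  ext i
  fin_cases i
  · simp only [Fin.zero_eta, Matrix.cons_val_zero, Pi.smul_apply, smul_eq_mul]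
    linear_combination (W.a₁ ^ 2 + 4 * (W.a₂ + 2 * x)) * hxy -
      (L * (2 * y + W.a₁ * x + W.a₃) + (3 * x ^ 2 + 2 * W.a₂ * x + W.a₄ - W.a₁ * y) +
        W.a₁ * (2 * y + W.a₁ * x + W.a₃)) * hL
  · simp only [Fin.mk_one, Matrix.cons_val_one, Matrix.cons_val_zero, Pi.smul_apply, smul_eq_mul]
    linear_combination -4 * hxy
  · simp only [Fin.reduceFinMk, Matrix.cons_val, Pi.smul_apply, smul_eq_mul]
    ring

variable [W.IsElliptic]

theorem exists_addSubMap_sym2x_self (P : W.Point) :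
    ∃ c : F, c ≠ 0 ∧
      (fun i ↦ (W.addSubMap i).eval (P.sym2x P)) = c • (P + P).sym2x 0 := by
  by_cases hP : P + P = 0
  · suffices h : ∃ c : F, (fun i ↦ (W.addSubMap i).eval (P.sym2x P)) = c • (P + P).sym2x 0 by
      obtain ⟨c, hc⟩ := h
      refine ⟨c, ?_, hc⟩
      rintro rfl
      exact addSubMap_ne_zero W (Point.sym2x_ne_zero P P) (by rw [hc, zero_smul])
    rw [hP, Point.sym2x_zero_zero]
    rcases P with _ | ⟨x, y, h⟩
    · exact ⟨1, by rw [← Point.zero_def, addSubMap_zero_sym2x, neg_zero, Point.sym2x_zero_zero,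
        one_smul]⟩
    · have hxy := (equation_iff ..).1 h.1
      have hy : y = W.negY x y := by
        by_contra hy
        exact Point.some_ne_zero _ ((Point.add_of_Y_ne hy).symm.trans hP)
      rw [Point.sym2x_some_some, eval_addSubMap]
      refine ⟨(x * x) ^ 2 - W.b₄ * (x * x) * 1 - W.b₆ * (x + x) * 1 - W.b₈ * 1 ^ 2, ?_⟩
      ext i
      fin_cases i
      · simp
      · simp only [negY, b₂, b₄, b₆, Fin.mk_one, Matrix.cons_val_one, Matrix.cons_val_zero,
          Pi.smul_apply, smul_eq_mul] at hy ⊢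
        linear_combination -4 * hxy + (2 * y + W.a₁ * x + W.a₃) * hy
      · simp only [Fin.reduceFinMk, Matrix.cons_val, Pi.smul_apply, smul_eq_mul]
        ring
  · exact addSubMap_sym2x_self hP

theorem exists_addSubMap_sym2x (P Q : W.Point) :
    ∃ c : F, c ≠ 0 ∧
      (fun i ↦ (W.addSubMap i).eval (P.sym2x Q)) = c • (P + Q).sym2x (P - Q) := by
  rcases eq_or_ne P 0 with rfl | hP
  · exact ⟨1, one_ne_zero, by rw [zero_add, zero_sub, addSubMap_zero_sym2x, one_smul]⟩
  rcases eq_or_ne Q 0 with rfl | hQ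
  · refine ⟨1, one_ne_zero, ?_⟩
    rw [add_zero, sub_zero, Point.sym2x_comm, addSubMap_zero_sym2x, Point.sym2x_neg_right,
      one_smul]
  by_cases hPQ : P = Q
  · subst hPQ
    simpa only [sub_self] using exists_addSubMap_sym2x_self P
  by_cases hPQ' : P = -Q
  · obtain ⟨c, hc, h⟩ := exists_addSubMap_sym2x_self Q
    refine ⟨c, hc, ?_⟩
    rw [hPQ', neg_add_cancel, Point.sym2x_neg_left, h, ← neg_add', Point.sym2x_neg_right,
      Point.sym2x_comm]
  rcases P with _ | ⟨x₁, y₁, h₁⟩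
  · exact absurd rfl hP
  rcases Q with _ | ⟨x₂, y₂, h₂⟩
  · exact absurd rfl hQ
  have hx : x₁ ≠ x₂ := fun hx ↦ (Point.X_eq_iff.1 hx).elim hPQ hPQ'
  exact ⟨_, pow_ne_zero 2 (sub_ne_zero.2 hx), addSubMap_sym2x_of_X_ne h₁ h₂ hx⟩

end ParallelogramLaw

section QuadraticForm

variable {M : Type*} [AddCommGroup M] {h : M → ℤ}
  (hp : ∀ P Q, h (P + Q) + h (P - Q) = 2 * h P + 2 * h Q)
include hp

theorem add_zsmul_of_parallelogram (P Q : M) (n : ℤ) :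
    h (P + n • Q) = h P + n * (h (P + Q) - h P - h Q) + n ^ 2 * h Q := by
  suffices H : ∀ n : ℤ, h (P + n • Q) = h P + n * (h (P + Q) - h P - h Q) + n ^ 2 * h Q ∧
      h (P + (n + 1) • Q) = h P + (n + 1) * (h (P + Q) - h P - h Q) + (n + 1) ^ 2 * h Q from
    (H n).1
  intro n
  induction n using Int.induction_on with
  | zero =>
    simp only [zero_smul, add_zero, zero_add, one_smul]
    exact ⟨by ring, by ring⟩
  | succ i ih =>
    have e := hp (P + ((i : ℤ) + 1) • Q) Q
    rw [show P + ((i : ℤ) + 1) • Q + Q = P + ((i : ℤ) + 1 + 1) • Q by module,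
      show P + ((i : ℤ) + 1) • Q - Q = P + (i : ℤ) • Q by module, ih.1, ih.2] at e
    exact ⟨ih.2, by linear_combination e⟩
  | pred i ih =>
    have e := hp (P + (-(i : ℤ)) • Q) Q
    rw [show P + (-(i : ℤ)) • Q + Q = P + (-(i : ℤ) + 1) • Q by module,
      show P + (-(i : ℤ)) • Q - Q = P + (-(i : ℤ) - 1) • Q by module, ih.1, ih.2] at e
    exact ⟨by linear_combination e, by rw [sub_add_cancel, ih.1]⟩

theorem zsmul_of_parallelogram (P : M) (n : ℤ) : h (n • P) = n ^ 2 * h P := by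
  have h0 := hp 0 0
  simp only [add_zero, sub_zero] at h0
  obtain h0 : h 0 = 0 := by lia
  have := add_zsmul_of_parallelogram hp 0 P n
  rw [zero_add, zero_add, h0] at this
  linear_combination this

theorem zsmul_add_zsmul_of_parallelogram (P Q : M) (m n : ℤ) :
    h (m • P + n • Q) = m ^ 2 * h P + m * n * (h (P + Q) - h P - h Q) + n ^ 2 * h Q := by
  rw [add_zsmul_of_parallelogram hp (m • P) Q n, zsmul_of_parallelogram hp, add_comm (m • P) Q,
    add_zsmul_of_parallelogram hp Q P m, add_comm Q P]
  ring

end QuadraticForm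

section PrimitiveVectors

open Polynomial

variable {k ι κ : Type*} [Field k]

/-- The polynomials `v i` are the coordinates of a morphism of degree `N` from the projective line:
they have no common zero, not even at infinity when regarded as forms of degree `N`. -/
def IsPrimitiveOfDegree (v : ι → k[X]) (N : ℕ) : Prop :=
  (∀ r, (fun i ↦ (v i).eval r) ≠ 0) ∧ (∀ i, (v i).natDegree ≤ N) ∧ (fun i ↦ (v i).coeff N) ≠ 0

theorem isPrimitiveOfDegree_of_isCoprime {u v : k[X]} (h : IsCoprime u v) :
    IsPrimitiveOfDegree ![u, v] (max u.natDegree v.natDegree) := by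
  refine ⟨fun r hr ↦ ?_, fun i ↦ ?_, fun hN ↦ ?_⟩
  · obtain ⟨s, t, hst⟩ := h
    have hu : u.eval r = 0 := congrFun hr 0
    have hv : v.eval r = 0 := congrFun hr 1
    simpa [hu, hv] using congrArg (Polynomial.eval r) hst
  · fin_cases i <;> simp
  · have hu : u.coeff (max u.natDegree v.natDegree) = 0 := congrFun hN 0
    have hv : v.coeff (max u.natDegree v.natDegree) = 0 := congrFun hN 1
    rcases le_total u.natDegree v.natDegree with huv | huv
    · rw [max_eq_right huv] at hu hv
      obtain rfl : v = 0 := leadingCoeff_eq_zero.1 hv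
      rw [natDegree_zero] at huv hu
      rw [eq_C_of_natDegree_le_zero huv, hu, C_0] at h
      exact not_isCoprime_zero_zero h
    · rw [max_eq_left huv] at hu hv
      obtain rfl : u = 0 := leadingCoeff_eq_zero.1 hu
      rw [natDegree_zero] at huv hv
      rw [eq_C_of_natDegree_le_zero huv, hv, C_0] at h
      exact not_isCoprime_zero_zero h

theorem isUnit_of_forall_eval_ne_zero [IsAlgClosed k] {g : k[X]} (hg : ∀ r, g.eval r ≠ 0) :
    IsUnit g := by
  by_contra h
  obtain ⟨r, hr⟩ := IsAlgClosed.exists_root g fun h0 ↦ h (isUnit_iff_degree_eq_zero.2 h0)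
  exact hg r hr

theorem IsPrimitiveOfDegree.exists_eq_C_mul [IsAlgClosed k] {v w : ι → k[X]} {N M : ℕ}
    (hv : IsPrimitiveOfDegree v N) (hw : IsPrimitiveOfDegree w M) {c : RatFunc k}
    (h : ∀ i, algebraMap k[X] (RatFunc k) (w i) = c * algebraMap k[X] (RatFunc k) (v i)) :
    ∃ u : k, u ≠ 0 ∧ ∀ i, w i = C u * v i := by
  have hcross (i : ι) : c.denom * w i = c.num * v i := by
    apply RatFunc.algebraMap_injective k
    have hd : algebraMap k[X] (RatFunc k) c.denom ≠ 0 :=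
      RatFunc.algebraMap_ne_zero c.denom_ne_zero
    rw [map_mul, map_mul, h]
    nth_rewrite 2 [← RatFunc.num_div_denom c]
    field_simp
  have heval (i : ι) (r : k) : c.denom.eval r * (w i).eval r = c.num.eval r * (v i).eval r := by
    rw [← eval_mul, hcross, eval_mul]
  have hdn (r : k) : c.num.eval r ≠ 0 ∧ c.denom.eval r ≠ 0 := by
    obtain ⟨s, t, hst⟩ := RatFunc.isCoprime_num_denom c
    replace hst := congrArg (Polynomial.eval r) hst
    simp only [eval_add, eval_mul, eval_one] at hst
    refine ⟨fun hr ↦ hw.1 r (funext fun i ↦ ?_), fun hr ↦ hv.1 r (funext fun i ↦ ?_)⟩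
    · have := heval i r
      rw [Pi.zero_apply]
      grind
    · have := heval i r
      rw [Pi.zero_apply]
      grind
  obtain ⟨n, hn, hn'⟩ := Polynomial.isUnit_iff.1 (isUnit_of_forall_eval_ne_zero fun r ↦ (hdn r).1)
  obtain ⟨d, hd, hd'⟩ := Polynomial.isUnit_iff.1 (isUnit_of_forall_eval_ne_zero fun r ↦ (hdn r).2)
  refine ⟨n / d, div_ne_zero hn.ne_zero hd.ne_zero, fun i ↦ ?_⟩
  apply mul_left_cancel₀ (C_ne_zero.2 hd.ne_zero)
  rw [← mul_assoc, ← C_mul, mul_div_cancel₀ _ hd.ne_zero, hd', hn', hcross]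

theorem IsPrimitiveOfDegree.eq_of_eq_mul [IsAlgClosed k] {v w : ι → k[X]} {N M : ℕ}
    (hv : IsPrimitiveOfDegree v N) (hw : IsPrimitiveOfDegree w M) {c : RatFunc k}
    (h : ∀ i, algebraMap k[X] (RatFunc k) (w i) = c * algebraMap k[X] (RatFunc k) (v i)) :
    N = M := by
  obtain ⟨u, hu, hwv⟩ := hv.exists_eq_C_mul hw h
  obtain ⟨i, hi⟩ := Function.ne_iff.1 hv.2.2
  obtain ⟨j, hj⟩ := Function.ne_iff.1 hw.2.2
  have hi' : (w i).coeff N ≠ 0 := by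
    rw [hwv, coeff_C_mul]
    exact mul_ne_zero hu hi
  have hj' : (v j).coeff M ≠ 0 := by
    simp only [hwv, coeff_C_mul] at hj
    exact right_ne_zero_of_mul hj
  exact le_antisymm ((le_natDegree_of_ne_zero hi').trans (hw.2.1 i))
    ((le_natDegree_of_ne_zero hj').trans (hv.2.1 j))

theorem coeff_prod_sum_of_natDegree_le (s : Finset ι) (f : ι → k[X]) (n : ι → ℕ)
    (h : ∀ i ∈ s, (f i).natDegree ≤ n i) :
    (∏ i ∈ s, f i).coeff (∑ i ∈ s, n i) = ∏ i ∈ s, (f i).coeff (n i) := by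
  classical
  induction s using Finset.induction_on with
  | empty => simp
  | insert i s hi ih =>
    have hs : ∀ j ∈ s, (f j).natDegree ≤ n j := fun j hj ↦ h j (mem_insert_of_mem hj)
    rw [prod_insert hi, prod_insert hi, sum_insert hi, coeff_mul_add_eq_of_natDegree_le
      (h i (mem_insert_self i s)) ((natDegree_prod_le _ _).trans (sum_le_sum hs)), ih hs]

theorem natDegree_aeval_le_and_coeff_aeval {F : MvPolynomial ι k} {d N : ℕ}
    (hF : F.IsHomogeneous d) {v : ι → k[X]} (hv : ∀ i, (v i).natDegree ≤ N) :
    (MvPolynomial.aeval v F).natDegree ≤ d * N ∧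
      (MvPolynomial.aeval v F).coeff (d * N) = MvPolynomial.eval (fun i ↦ (v i).coeff N) F := by
  have hmon (e : ι →₀ ℕ) (he : e ∈ F.support) : d * N = ∑ i ∈ e.support, e i * N := by
    rw [← sum_mul, ← hF (MvPolynomial.mem_support_iff.1 he), Pi.one_def,
      ← Finsupp.degree_eq_weight_one, Finsupp.degree_apply]
  have hpow (e : ι →₀ ℕ) (i : ι) : (v i ^ e i).natDegree ≤ e i * N :=
    natDegree_pow_le_of_le _ (hv i)
  rw [MvPolynomial.aeval_def, MvPolynomial.eval₂_eq, MvPolynomial.eval_eq]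
  constructor
  · refine natDegree_sum_le_of_forall_le _ _ fun e he ↦ (natDegree_C_mul_le _ _).trans ?_
    rw [hmon e he]
    exact (natDegree_prod_le _ _).trans (sum_le_sum fun i _ ↦ hpow e i)
  · rw [finsetSum_coeff]
    refine sum_congr rfl fun e he ↦ ?_
    rw [algebraMap_eq, coeff_C_mul, hmon e he]
    rw [coeff_prod_sum_of_natDegree_le _ _ _ fun i _ ↦ hpow e i]
    simp only [coeff_pow_of_natDegree_le (hv _)]

theorem IsPrimitiveOfDegree.aeval {v : ι → k[X]} {N : ℕ}
    (hv : IsPrimitiveOfDegree v N) {F : κ → MvPolynomial ι k} {d : ℕ}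
    (hF : ∀ i, (F i).IsHomogeneous d)
    (hF0 : ∀ x : ι → k, x ≠ 0 → (fun i ↦ MvPolynomial.eval x (F i)) ≠ 0) :
    IsPrimitiveOfDegree (fun i ↦ MvPolynomial.aeval v (F i)) (d * N) := by
  refine ⟨fun r ↦ ?_, fun i ↦ (natDegree_aeval_le_and_coeff_aeval (hF i) hv.2.1).1, ?_⟩
  · convert hF0 _ (hv.1 r) with i
    simp only [← coe_evalRingHom]
    rw [MvPolynomial.aeval_def, MvPolynomial.hom_eval₂, MvPolynomial.eval,
      MvPolynomial.coe_eval₂Hom, algebraMap_eq]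
    congr 1
    ext
    simp
  · simp only [(natDegree_aeval_le_and_coeff_aeval (hF _) hv.2.1).2]
    exact hF0 _ hv.2.2

/-- The coefficients of the product of two binary linear forms with coefficients `u` and `v`. -/
def symProd {R : Type*} [CommSemiring R] (u v : Fin 2 → R) : Fin 3 → R :=
  ![u 0 * v 0, u 0 * v 1 + u 1 * v 0, u 1 * v 1]

theorem symProd_ne_zero {u v : Fin 2 → k} (hu : u ≠ 0) (hv : v ≠ 0) : symProd u v ≠ 0 := by
  intro h
  have h0 : u 0 * v 0 = 0 := congrFun h 0
  have h1 : u 0 * v 1 + u 1 * v 0 = 0 := congrFun h 1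
  have h2 : u 1 * v 1 = 0 := congrFun h 2
  have hu' : ¬ (u 0 = 0 ∧ u 1 = 0) := fun h ↦ hu (funext (Fin.forall_fin_two.2 h))
  have hv' : ¬ (v 0 = 0 ∧ v 1 = 0) := fun h ↦ hv (funext (Fin.forall_fin_two.2 h))
  grind

theorem IsPrimitiveOfDegree.symProd {u v : Fin 2 → k[X]} {M N : ℕ}
    (hu : IsPrimitiveOfDegree u M) (hv : IsPrimitiveOfDegree v N) :
    IsPrimitiveOfDegree (symProd u v) (M + N) := by
  have hdeg (i j : Fin 2) : (u i * v j).natDegree ≤ M + N :=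
    natDegree_mul_le_of_le (hu.2.1 i) (hv.2.1 j)
  have hcoeff (i j : Fin 2) : (u i * v j).coeff (M + N) = (u i).coeff M * (v j).coeff N :=
    coeff_mul_add_eq_of_natDegree_le (hu.2.1 i) (hv.2.1 j)
  refine ⟨fun r ↦ ?_, fun i ↦ ?_, ?_⟩
  · convert symProd_ne_zero (hu.1 r) (hv.1 r) with i
    fin_cases i <;> simp [_root_.symProd]
  · fin_cases i
    · exact hdeg 0 0
    · exact natDegree_add_le_of_degree_le (hdeg 0 1) (hdeg 1 0)
    · exact hdeg 1 1
  · convert symProd_ne_zero hu.2.2 hv.2.2 with i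
    fin_cases i <;> simp [_root_.symProd, hcoeff]

end PrimitiveVectors

open WeierstrassCurve WeierstrassCurve.Affine in
theorem isUnit_Δ_shortWeierstrass {F : Type*} [Field F] {a b : F} (h2 : (2 : F) ≠ 0)
    (hΔ : 4 * a ^ 3 + 27 * b ^ 2 ≠ 0) : IsUnit (⟨0, 0, 0, a, b⟩ : WeierstrassCurve F).Δ := by
  have hΔ' : (⟨0, 0, 0, a, b⟩ : WeierstrassCurve F).Δ = -2 ^ 4 * (4 * a ^ 3 + 27 * b ^ 2) := by
    simp only [Δ, b₂, b₄, b₆, b₈]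
    ring
  rw [hΔ', isUnit_iff_ne_zero]
  exact mul_ne_zero (neg_ne_zero.2 (pow_ne_zero _ h2)) hΔ

section TwistedCurve

open WeierstrassCurve.Affine

variable {K : Type*} [Field K]

/-- The curve `f Y² = X³ + a X + b`, the quadratic twist by `f` of `Y² = X³ + a X + b`, in the
Weierstrass coordinates `x = f X` and `y = f² Y`. -/
def twistCurve (f a b : K) : WeierstrassCurve.Affine K := ⟨0, 0, 0, a * f ^ 2, b * f ^ 3⟩

/-- `P` is the point with coordinates `(X, Y)` in the model `f Y² = X³ + a X + b` of
`twistCurve f a b`. -/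
def IsPt (f a b : K) (P : (twistCurve f a b).Point) (X Y : K) : Prop :=
  ∃ h, P = .some (f * X) (f ^ 2 * Y) h

variable {f a b : K}

theorem isUnit_Δ_twistCurve (hf : f ≠ 0) (h2 : (2 : K) ≠ 0) (hΔ : 4 * a ^ 3 + 27 * b ^ 2 ≠ 0) :
    IsUnit (twistCurve f a b).Δ := by
  refine isUnit_Δ_shortWeierstrass h2 ?_
  rw [show 4 * (a * f ^ 2) ^ 3 + 27 * (b * f ^ 3) ^ 2 = f ^ 6 * (4 * a ^ 3 + 27 * b ^ 2) by ring]
  exact mul_ne_zero (pow_ne_zero _ hf) hΔ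

theorem negY_twistCurve (x y : K) : (twistCurve f a b).negY x y = -y := by
  simp [twistCurve, negY]

theorem exists_isPt (hf : f ≠ 0) (h2 : (2 : K) ≠ 0) (hΔ : 4 * a ^ 3 + 27 * b ^ 2 ≠ 0) {X Y : K}
    (h : f * Y ^ 2 = X ^ 3 + a * X + b) : ∃ P, IsPt f a b P X Y := by
  refine ⟨_, (equation_iff_nonsingular_of_Δ_ne_zero
    (isUnit_Δ_twistCurve hf h2 hΔ).ne_zero).1 ?_, rfl⟩
  rw [equation_iff]
  simp only [twistCurve]
  linear_combination f ^ 3 * h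

theorem eq_zero_or_exists_isPt (hf : f ≠ 0) (P : (twistCurve f a b).Point) :
    P = 0 ∨ ∃ X Y, IsPt f a b P X Y := by
  rcases P with _ | ⟨x, y, h⟩
  · exact .inl rfl
  · refine .inr ⟨x / f, y / f ^ 2, ?_⟩
    simp only [IsPt, mul_div_cancel₀ _ hf, mul_div_cancel₀ _ (pow_ne_zero 2 hf)]
    exact ⟨h, trivial⟩

namespace IsPt

theorem equation (hf : f ≠ 0) {P : (twistCurve f a b).Point} {X Y : K} (h : IsPt f a b P X Y) :
    f * Y ^ 2 = X ^ 3 + a * X + b := by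
  obtain ⟨h, -⟩ := h
  have := (equation_iff ..).1 h.1
  simp only [twistCurve] at this
  apply mul_left_cancel₀ (pow_ne_zero 3 hf)
  linear_combination this

theorem ne_zero {P : (twistCurve f a b).Point} {X Y : K} (h : IsPt f a b P X Y) : P ≠ 0 := by
  obtain ⟨h, rfl⟩ := h
  exact Point.some_ne_zero h

theorem unique (hf : f ≠ 0) {P : (twistCurve f a b).Point} {X Y X' Y' : K}
    (h : IsPt f a b P X Y) (h' : IsPt f a b P X' Y') : X = X' ∧ Y = Y' := by
  obtain ⟨h, rfl⟩ := h
  obtain ⟨h', e⟩ := h'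
  rw [Point.some.injEq] at e
  exact ⟨mul_left_cancel₀ hf e.1, mul_left_cancel₀ (pow_ne_zero 2 hf) e.2⟩

theorem ext {P Q : (twistCurve f a b).Point} {X Y : K}
    (h : IsPt f a b P X Y) (h' : IsPt f a b Q X Y) : P = Q := by
  obtain ⟨h, rfl⟩ := h
  obtain ⟨h', rfl⟩ := h'
  rfl

theorem neg {P : (twistCurve f a b).Point} {X Y : K}
    (h : IsPt f a b P X Y) : IsPt f a b (-P) X (-Y) := by
  obtain ⟨h, rfl⟩ := h
  rw [Point.neg_some, IsPt]
  simp only [negY_twistCurve, mul_neg, exists_prop, and_true]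
  simpa only [negY_twistCurve] using (nonsingular_neg ..).2 h

variable [DecidableEq K]

theorem add_of_slope {P Q : (twistCurve f a b).Point} {X₁ Y₁ X₂ Y₂ : K}
    (h₁ : IsPt f a b P X₁ Y₁) (h₂ : IsPt f a b Q X₂ Y₂)
    (hXY : ¬ (f * X₁ = f * X₂ ∧ f ^ 2 * Y₁ = (twistCurve f a b).negY (f * X₂) (f ^ 2 * Y₂)))
    {L X₃ Y₃ : K}
    (hL : (twistCurve f a b).slope (f * X₁) (f * X₂) (f ^ 2 * Y₁) (f ^ 2 * Y₂) = f * L)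
    (hX₃ : X₃ = f * L ^ 2 - X₁ - X₂) (hY₃ : Y₃ = -(Y₁ + L * (X₃ - X₁))) :
    IsPt f a b (P + Q) X₃ Y₃ := by
  obtain ⟨h₁, rfl⟩ := h₁
  obtain ⟨h₂, rfl⟩ := h₂
  have hx : (twistCurve f a b).addX (f * X₁) (f * X₂) (f * L) = f * X₃ := by
    simp only [twistCurve, addX, hX₃]
    ring
  have hy : (twistCurve f a b).addY (f * X₁) (f * X₂) (f ^ 2 * Y₁) (f * L) = f ^ 2 * Y₃ := by
    rw [addY, negAddY, hx, negY_twistCurve, hY₃]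
    ring
  have hns := nonsingular_add h₁ h₂ hXY
  rw [hL, hx, hy] at hns
  refine ⟨hns, ?_⟩
  rw [Point.add_some hXY]
  simp only [hL, hx, hy]

theorem add (hf : f ≠ 0) {P Q : (twistCurve f a b).Point} {X₁ Y₁ X₂ Y₂ : K}
    (h₁ : IsPt f a b P X₁ Y₁) (h₂ : IsPt f a b Q X₂ Y₂) (hX : X₁ ≠ X₂) {L X₃ Y₃ : K}
    (hL : L * (X₁ - X₂) = Y₁ - Y₂) (hX₃ : X₃ = f * L ^ 2 - X₁ - X₂)
    (hY₃ : Y₃ = -(Y₁ + L * (X₃ - X₁))) : IsPt f a b (P + Q) X₃ Y₃ := by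
  have hne : f * X₁ ≠ f * X₂ := fun h ↦ hX (mul_left_cancel₀ hf h)
  refine h₁.add_of_slope h₂ (fun h ↦ hne h.1) ?_ hX₃ hY₃
  rw [slope_of_X_ne hne, div_eq_iff (sub_ne_zero.2 hne)]
  linear_combination -f ^ 2 * hL

theorem double (hf : f ≠ 0) (h2 : (2 : K) ≠ 0) {P : (twistCurve f a b).Point} {X₁ Y₁ : K}
    (h₁ : IsPt f a b P X₁ Y₁) (hY : Y₁ ≠ 0) {L X₃ Y₃ : K}
    (hL : L * (2 * f * Y₁) = 3 * X₁ ^ 2 + a) (hX₃ : X₃ = f * L ^ 2 - X₁ - X₁)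
    (hY₃ : Y₃ = -(Y₁ + L * (X₃ - X₁))) : IsPt f a b (P + P) X₃ Y₃ := by
  have hne : f ^ 2 * Y₁ ≠ (twistCurve f a b).negY (f * X₁) (f ^ 2 * Y₁) := by
    rw [negY_twistCurve, ne_eq, eq_neg_iff_add_eq_zero, ← two_mul]
    exact mul_ne_zero h2 (mul_ne_zero (pow_ne_zero 2 hf) hY)
  refine h₁.add_of_slope h₁ (fun h ↦ hne h.2) ?_ hX₃ hY₃
  rw [slope_of_Y_ne rfl hne, div_eq_iff (sub_ne_zero.2 hne), negY_twistCurve]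
  simp only [twistCurve]
  linear_combination -f ^ 2 * hL

end IsPt

end TwistedCurve

section Height

open Polynomial WeierstrassCurve.Affine

variable {k : Type*} [Field k]

local notation "ι" => algebraMap k[X] (RatFunc k)

/-- The group of points over `k(t)` of the twist by `f` of `Y² = X³ + a X + b`. For
`f = t³ + a t + b` it is the group of morphisms from this curve to itself that commute with
negation. -/
abbrev TwistGroup (f : k[X]) (a b : k) : Type _ := (twistCurve (ι f) (ι (C a)) (ι (C b))).Point

/-- The point `P` of `f Y² = X³ + a X + b` has coordinates `(X, Y)`. -/
abbrev IsTwistPt (f : k[X]) (a b : k) (P : TwistGroup f a b) (X Y : RatFunc k) : Prop :=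
  IsPt (ι f) (ι (C a)) (ι (C b)) P X Y

/-- `v 0 / v 1` is the coordinate `X = x / f` of `P`. -/
def IsXVec (f : k[X]) (a b : k) (P : TwistGroup f a b) (v : Fin 2 → k[X]) : Prop :=
  ∃ c : RatFunc k, c ≠ 0 ∧ ι (v 0) = c * P.xRep 0 ∧ ι (v 1) = c * (ι f * P.xRep 1)

/-- The degree of the `X`-coordinate of a point. As `x / 0 = 0`, the point at infinity has
height `0`. -/
noncomputable def height {f : k[X]} {a b : k} (P : TwistGroup f a b) : ℕ :=
  max (P.xRep 0 / (ι f * P.xRep 1)).num.natDegree (P.xRep 0 / (ι f * P.xRep 1)).denom.natDegree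

variable {f : k[X]} {a b : k}

theorem IsTwistPt.isXVec (hf : f ≠ 0) {P : TwistGroup f a b} {u v : k[X]} {Y : RatFunc k}
    (h : IsTwistPt f a b P (ι u / ι v) Y) (hv : v ≠ 0) : IsXVec f a b P ![u, v] := by
  obtain ⟨h, rfl⟩ := h
  have hf' := RatFunc.algebraMap_ne_zero hf
  have hv' := RatFunc.algebraMap_ne_zero hv
  refine ⟨ι v / ι f, div_ne_zero hv' hf', ?_, ?_⟩ <;>
  · simp only [Point.xRep_some, Matrix.cons_val_zero, Matrix.cons_val_one]
    field_simp

theorem IsTwistPt.height_def (hf : f ≠ 0) {P : TwistGroup f a b} {X Y : RatFunc k}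
    (h : IsTwistPt f a b P X Y) : height P = max X.num.natDegree X.denom.natDegree := by
  obtain ⟨h, rfl⟩ := h
  have hX : ι f * X / ι f = X := mul_div_cancel_left₀ X (RatFunc.algebraMap_ne_zero hf)
  simp only [height, Point.xRep_some, Matrix.cons_val_zero, Matrix.cons_val_one, mul_one, hX]

theorem isXVec_zero : IsXVec f a b 0 ![1, 0] :=
  ⟨1, one_ne_zero, by simp only [Point.xRep_zero]; simp, by simp only [Point.xRep_zero]; simp⟩

theorem height_zero : height (0 : TwistGroup f a b) = 0 := by
  simp only [height, Point.xRep_zero, Matrix.cons_val_zero, Matrix.cons_val_one, mul_zero,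
    div_zero, RatFunc.num_zero, RatFunc.denom_zero, natDegree_zero, natDegree_one, max_self]

theorem height_neg (P : TwistGroup f a b) : height (-P) = height P := by
  simp only [height, Point.xRep_neg]

theorem exists_isXVec (hf : f ≠ 0) (P : TwistGroup f a b) :
    ∃ v, IsXVec f a b P v ∧ IsPrimitiveOfDegree v (height P) := by
  rcases eq_zero_or_exists_isPt (RatFunc.algebraMap_ne_zero hf) P with rfl | ⟨X, Y, h⟩
  · refine ⟨![1, 0], isXVec_zero, ?_⟩
    convert isPrimitiveOfDegree_of_isCoprime (isCoprime_one_left (x := (0 : k[X]))) using 1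
    simp [height_zero]
  · refine ⟨![X.num, X.denom], IsTwistPt.isXVec hf (Y := Y) ?_ X.denom_ne_zero, ?_⟩
    · rwa [RatFunc.num_div_denom]
    · rw [IsTwistPt.height_def hf h]
      exact isPrimitiveOfDegree_of_isCoprime (RatFunc.isCoprime_num_denom X)

theorem algebraMap_symProd {p q : Fin 2 → k[X]} {P Q : TwistGroup f a b} {c d : RatFunc k}
    (hp : ι (p 0) = c * P.xRep 0 ∧ ι (p 1) = c * (ι f * P.xRep 1))
    (hq : ι (q 0) = d * Q.xRep 0 ∧ ι (q 1) = d * (ι f * Q.xRep 1)) (i : Fin 3) :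
    ι (symProd p q i) = c * d * ι f ^ (i : ℕ) * P.sym2x Q i := by
  fin_cases i <;> simp [symProd, Point.sym2x, hp, hq] <;> ring

theorem algebraMap_aeval_addSubMap {s : Fin 3 → k[X]} {S : Fin 3 → RatFunc k} {c : RatFunc k}
    (hs : ∀ i, ι (s i) = c * ι f ^ (i : ℕ) * S i) (i : Fin 3) :
    ι (MvPolynomial.aeval s ((⟨0, 0, 0, a, b⟩ : WeierstrassCurve k).addSubMap i)) =
      c ^ 2 * ι f ^ (i : ℕ) *
        MvPolynomial.eval S ((twistCurve (ι f) (ι (C a)) (ι (C b))).addSubMap i) := by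
  have hC2 : RatFunc.C (2 : k) = 2 := map_ofNat _ 2
  have hC4 : RatFunc.C (4 : k) = 4 := map_ofNat _ 4
  fin_cases i <;>
  · simp [WeierstrassCurve.addSubMap, twistCurve, hs, WeierstrassCurve.b₂, WeierstrassCurve.b₄,
      WeierstrassCurve.b₆, WeierstrassCurve.b₈, hC2, hC4]
    ring

theorem ratFunc_two_ne_zero (h2 : (2 : k) ≠ 0) : (2 : RatFunc k) ≠ 0 := by
  rw [← map_ofNat (RatFunc.C (K := k)) 2]
  exact (_root_.map_ne_zero _).2 h2

theorem algebraMap_disc_ne_zero (hΔ : 4 * a ^ 3 + 27 * b ^ 2 ≠ 0) :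
    4 * ι (C a) ^ 3 + 27 * ι (C b) ^ 2 ≠ 0 := by
  rw [RatFunc.algebraMap_C, RatFunc.algebraMap_C, ← map_ofNat (RatFunc.C (K := k)) 4,
    ← map_ofNat (RatFunc.C (K := k)) 27, ← map_pow, ← map_pow, ← map_mul, ← map_mul, ← map_add]
  exact (_root_.map_ne_zero _).2 hΔ

variable [IsAlgClosed k]

theorem IsXVec.height_eq {P : TwistGroup f a b} {v : Fin 2 → k[X]} {N : ℕ} (hf : f ≠ 0)
    (hv : IsXVec f a b P v) (hN : IsPrimitiveOfDegree v N) : height P = N := by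
  obtain ⟨w, ⟨d, hd, hw0, hw1⟩, hw⟩ := exists_isXVec hf P
  obtain ⟨c, -, hv0, hv1⟩ := hv
  refine hw.eq_of_eq_mul hN (c := c / d) (Fin.forall_fin_two.2 ⟨?_, ?_⟩)
  · rw [hv0, hw0, ← mul_assoc, div_mul_cancel₀ _ hd]
  · rw [hv1, hw1, ← mul_assoc (c / d), div_mul_cancel₀ _ hd]

theorem IsTwistPt.height_eq (hf : f ≠ 0) {P : TwistGroup f a b} {u v : k[X]} {Y : RatFunc k}
    (h : IsTwistPt f a b P (ι u / ι v) Y) (huv : IsCoprime u v) (hv : v ≠ 0) :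
    height P = max u.natDegree v.natDegree :=
  (h.isXVec hf hv).height_eq hf (isPrimitiveOfDegree_of_isCoprime huv)

variable [DecidableEq (RatFunc k)]

theorem height_add_add_height_sub (hf : f ≠ 0) (h2 : (2 : k) ≠ 0)
    (hΔ : 4 * a ^ 3 + 27 * b ^ 2 ≠ 0) (P Q : TwistGroup f a b) :
    height (P + Q) + height (P - Q) = 2 * (height P + height Q) := by
  have : (⟨0, 0, 0, a, b⟩ : WeierstrassCurve k).IsElliptic := ⟨isUnit_Δ_shortWeierstrass h2 hΔ⟩
  have : (twistCurve (ι f) (ι (C a)) (ι (C b))).IsElliptic :=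
    ⟨isUnit_Δ_twistCurve (RatFunc.algebraMap_ne_zero hf)
      (ratFunc_two_ne_zero h2) (algebraMap_disc_ne_zero hΔ)⟩
  obtain ⟨p, ⟨cp, hcp, hp⟩, hp'⟩ := exists_isXVec hf P
  obtain ⟨q, ⟨cq, hcq, hq⟩, hq'⟩ := exists_isXVec hf Q
  obtain ⟨r, ⟨cr, hcr, hr⟩, hr'⟩ := exists_isXVec hf (P + Q)
  obtain ⟨s, ⟨cs, hcs, hs⟩, hs'⟩ := exists_isXVec hf (P - Q)
  obtain ⟨c, hc, hadd⟩ := exists_addSubMap_sym2x P Q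
  have himage := (hp'.symProd hq').aeval
    (⟨0, 0, 0, a, b⟩ : WeierstrassCurve k).isHomogeneous_addSubMap
    fun x ↦ WeierstrassCurve.addSubMap_ne_zero _
  refine (himage.eq_of_eq_mul (hr'.symProd hs') (c := cr * cs / (c * (cp * cq) ^ 2))
    fun i ↦ ?_).symm
  rw [algebraMap_aeval_addSubMap (algebraMap_symProd hp hq), algebraMap_symProd hr hs,
    congrFun hadd i, Pi.smul_apply, smul_eq_mul]
  field_simp

end Height

/-- The derivations of a field. For `K = k(t)`, a bare `Derivation ℤ K K` would refer to the
`ℤ`-algebra structure inherited from `k[t]`, which is not definitionally the one of the ring `K`. -/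
abbrev FieldDerivation (K : Type*) [Field K] : Type _ := Derivation ℤ K K

/-- The derivation of a field with a given underlying function. -/
def derivationOfLeibniz {K : Type*} [Field K] (d : K → K) (hadd : ∀ x y, d (x + y) = d x + d y)
    (hmul : ∀ x y, d (x * y) = x * d y + y * d x) : FieldDerivation K :=
  .mk' (AddMonoidHom.mk' d hadd).toIntLinearMap hmul

section RatFuncDerivation

open Polynomial

variable {k : Type*} [Field k]

local notation "ι" => algebraMap k[X] (RatFunc k)

/-- The derivative of a rational function, computed by the quotient rule from its reduced form. -/
noncomputable def ratFuncDerivFun (x : RatFunc k) : RatFunc k :=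
  ι (derivative x.num * x.denom - x.num * derivative x.denom) / ι x.denom ^ 2

theorem ratFuncDerivFun_div (u v : k[X]) (hv : v ≠ 0) :
    ratFuncDerivFun (ι u / ι v) = ι (derivative u * v - u * derivative v) / ι v ^ 2 := by
  have hv' := RatFunc.algebraMap_ne_zero hv
  set x := ι u / ι v with hx
  have hd := RatFunc.algebraMap_ne_zero x.denom_ne_zero
  have hcross : x.num * v = u * x.denom := by
    have h := x.num_div_denom.trans hx
    rw [div_eq_div_iff hd hv', ← map_mul, ← map_mul] at h
    exact RatFunc.algebraMap_injective k h
  have hderiv := congrArg derivative hcross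
  simp only [derivative_mul] at hderiv
  rw [ratFuncDerivFun, div_eq_div_iff (pow_ne_zero 2 hd) (pow_ne_zero 2 hv'), ← map_pow,
    ← map_pow, ← map_mul, ← map_mul]
  congr 1
  linear_combination (x.denom * v) * hderiv -
    (derivative x.denom * v + x.denom * derivative v) * hcross

theorem exists_eq_div (x : RatFunc k) : ∃ u v : k[X], v ≠ 0 ∧ x = ι u / ι v :=
  ⟨x.num, x.denom, x.denom_ne_zero, x.num_div_denom.symm⟩

theorem ratFuncDerivFun_add (x y : RatFunc k) :
    ratFuncDerivFun (x + y) = ratFuncDerivFun x + ratFuncDerivFun y := by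
  obtain ⟨a, b, hb, rfl⟩ := exists_eq_div x
  obtain ⟨c, d, hd, rfl⟩ := exists_eq_div y
  have hb' := RatFunc.algebraMap_ne_zero hb
  have hd' := RatFunc.algebraMap_ne_zero hd
  have hsum : ι a / ι b + ι c / ι d = ι (a * d + b * c) / ι (b * d) := by
    simp only [map_add, map_mul]
    field_simp
  rw [hsum, ratFuncDerivFun_div _ _ (mul_ne_zero hb hd), ratFuncDerivFun_div _ _ hb,
    ratFuncDerivFun_div _ _ hd]
  simp only [derivative_mul, map_add, map_mul, map_sub]
  field_simp
  ring

theorem ratFuncDerivFun_mul (x y : RatFunc k) :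
    ratFuncDerivFun (x * y) = x * ratFuncDerivFun y + y * ratFuncDerivFun x := by
  obtain ⟨a, b, hb, rfl⟩ := exists_eq_div x
  obtain ⟨c, d, hd, rfl⟩ := exists_eq_div y
  have hb' := RatFunc.algebraMap_ne_zero hb
  have hd' := RatFunc.algebraMap_ne_zero hd
  rw [div_mul_div_comm, ← map_mul, ← map_mul, ratFuncDerivFun_div _ _ (mul_ne_zero hb hd),
    ratFuncDerivFun_div _ _ hb, ratFuncDerivFun_div _ _ hd]
  simp only [derivative_mul, map_add, map_mul, map_sub]
  field_simp
  ring

/-- The derivation `d/dt` of `k(t)`. -/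
noncomputable def ratFuncDeriv : FieldDerivation (RatFunc k) :=
  derivationOfLeibniz ratFuncDerivFun ratFuncDerivFun_add ratFuncDerivFun_mul

theorem ratFuncDeriv_div (u v : k[X]) (hv : v ≠ 0) :
    ratFuncDeriv (ι u / ι v) = ι (derivative u * v - u * derivative v) / ι v ^ 2 :=
  ratFuncDerivFun_div u v hv

theorem ratFuncDeriv_algebraMap (u : k[X]) : ratFuncDeriv (ι u) = ι (derivative u) := by
  simpa using ratFuncDeriv_div u 1 one_ne_zero

theorem ratFuncDeriv_C (c : k) : ratFuncDeriv (ι (C c)) = 0 := by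
  rw [ratFuncDeriv_algebraMap, derivative_C, map_zero]

end RatFuncDerivation

section Multiplier

variable {K : Type*} [Field K] {f a b : K} {δ : FieldDerivation K}

/-- The derivation `δ` extends to the function field of `f Y² = X³ + a X + b`, and the pull-back
of the invariant differential `dX / Y` along the point `P` is `c` times the one normalized by `δ`.
The second equation is the derivative of the equation of the curve; it follows from the first one
unless `Y = 0`. -/
def IsMultiplier (δ : FieldDerivation K) (P : (twistCurve f a b).Point) (c : K) : Prop :=
  (P = 0 ∧ c = 0) ∨ ∃ X Y, IsPt f a b P X Y ∧ δ X = c * Y ∧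
    2 * f * δ Y = (3 * X ^ 2 + a) * c - δ f * Y

theorem isMultiplier_zero : IsMultiplier δ (0 : (twistCurve f a b).Point) 0 :=
  .inl ⟨rfl, rfl⟩

theorem IsPt.isMultiplier {P : (twistCurve f a b).Point} {X Y c : K} (hP : IsPt f a b P X Y)
    (hf : f ≠ 0) (ha : δ a = 0) (hb : δ b = 0) (hX : δ X = c * Y) (hY : Y ≠ 0) :
    IsMultiplier δ P c := by
  refine .inr ⟨X, Y, hP, hX, mul_right_cancel₀ hY ?_⟩
  have h := congrArg δ (hP.equation hf)
  simp only [Derivation.leibniz, map_add, Derivation.leibniz_pow, smul_eq_mul, nsmul_eq_mul, ha,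
    hb, hX] at h
  push_cast at h
  linear_combination h

theorem three_mul_sq_add_ne_zero (hΔ : 4 * a ^ 3 + 27 * b ^ 2 ≠ 0) {X : K}
    (h : X ^ 3 + a * X + b = 0) : 3 * X ^ 2 + a ≠ 0 := by
  intro h'
  apply hΔ
  linear_combination (27 * b - 27 * X ^ 3 - 27 * a * X) * h +
    (4 * a ^ 2 + 15 * a * X ^ 2 + 9 * X ^ 4) * h'

theorem IsMultiplier.exists_ne_zero (hf : f ≠ 0) (hΔ : 4 * a ^ 3 + 27 * b ^ 2 ≠ 0)
    {P : (twistCurve f a b).Point} {c : K} (hc : c ≠ 0) (h : IsMultiplier δ P c) :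
    ∃ X Y, IsPt f a b P X Y ∧ Y ≠ 0 ∧ δ X = c * Y := by
  obtain ⟨-, h0⟩ | ⟨X, Y, hP, hX, hY⟩ := h
  · exact absurd h0 hc
  refine ⟨X, Y, hP, ?_, hX⟩
  rintro rfl
  rw [map_zero, mul_zero, mul_zero, sub_zero, eq_comm, mul_eq_zero, or_iff_left hc] at hY
  refine three_mul_sq_add_ne_zero hΔ ?_ hY
  rw [← hP.equation hf, zero_pow two_ne_zero, mul_zero]

theorem deriv_slope_double {X Y L c : K} (ha : δ a = 0) (hY : Y ≠ 0)
    (hL : L * (2 * f * Y) = 3 * X ^ 2 + a) (hδX : δ X = c * Y)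
    (hδY : 2 * f * δ Y = (3 * X ^ 2 + a) * c - δ f * Y) :
    2 * f * δ L = 6 * X * c - L * δ f - 2 * f * L ^ 2 * c := by
  have hδ2 : δ (2 : K) = 0 := mod_cast δ.map_natCast 2
  have hδ3 : δ (3 : K) = 0 := mod_cast δ.map_natCast 3
  have h := congrArg δ hL
  simp only [Derivation.leibniz, map_add, Derivation.leibniz_pow, smul_eq_mul, nsmul_eq_mul, hδ2,
    hδ3, ha, hδX] at h
  push_cast at h
  apply mul_right_cancel₀ hY
  linear_combination h - L * hδY + c * L * hL

theorem deriv_slope_add {X₁ Y₁ X₂ Y₂ L c d : K} (hL : L * (X₁ - X₂) = Y₁ - Y₂)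
    (hδX₁ : δ X₁ = c * Y₁) (hδY₁ : 2 * f * δ Y₁ = (3 * X₁ ^ 2 + a) * c - δ f * Y₁)
    (hδX₂ : δ X₂ = d * Y₂) (hδY₂ : 2 * f * δ Y₂ = (3 * X₂ ^ 2 + a) * d - δ f * Y₂) :
    2 * f * (X₁ - X₂) * δ L = (3 * X₁ ^ 2 + a) * c - (3 * X₂ ^ 2 + a) * d -
      δ f * L * (X₁ - X₂) - 2 * f * L * (c * Y₁ - d * Y₂) := by
  have h := congrArg δ hL
  simp only [Derivation.leibniz, map_sub, smul_eq_mul, hδX₁, hδX₂] at h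
  linear_combination 2 * f * h + hδY₁ - hδY₂ + δ f * hL

namespace IsMultiplier

theorem neg {P : (twistCurve f a b).Point} {c : K} (h : IsMultiplier δ P c) :
    IsMultiplier δ (-P) (-c) := by
  rcases h with ⟨rfl, rfl⟩ | ⟨X, Y, h, hX, hY⟩
  · exact .inl ⟨by simp, neg_zero⟩
  · refine .inr ⟨X, -Y, h.neg, by rw [hX]; ring, ?_⟩
    rw [map_neg]
    linear_combination -hY

theorem unique (hf : f ≠ 0) (hΔ : 4 * a ^ 3 + 27 * b ^ 2 ≠ 0) {P : (twistCurve f a b).Point}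
    {c d : K} (h : IsMultiplier δ P c) (h' : IsMultiplier δ P d) : c = d := by
  rcases h with ⟨rfl, rfl⟩ | ⟨X, Y, h, hX, hY⟩ <;>
    rcases h' with ⟨h0, rfl⟩ | ⟨X', Y', h', hX', hY'⟩
  · rfl
  · exact absurd rfl h'.ne_zero
  · exact absurd h0 h.ne_zero
  · obtain ⟨rfl, rfl⟩ := h.unique hf h'
    by_cases hY0 : Y = 0
    · refine mul_left_cancel₀ (three_mul_sq_add_ne_zero (b := b) (X := X) hΔ ?_) ?_
      · rw [← h.equation hf, hY0]
        ring
      · linear_combination hY' - hY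
    · exact mul_right_cancel₀ hY0 (hX.symm.trans hX')

variable [DecidableEq K]

theorem double (hf : f ≠ 0) (h2 : (2 : K) ≠ 0) (hΔ : 4 * a ^ 3 + 27 * b ^ 2 ≠ 0)
    (ha : δ a = 0) {P : (twistCurve f a b).Point} {c : K}
    (h : IsMultiplier δ P c) : IsMultiplier δ (P + P) (c + c) := by
  rcases h with ⟨rfl, rfl⟩ | ⟨X, Y, h, hX, hY⟩
  · exact .inl ⟨add_zero 0, add_zero 0⟩
  by_cases hY0 : Y = 0
  · subst hY0
    have hneg := h.neg
    rw [neg_zero] at hneg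
    have hX0 := three_mul_sq_add_ne_zero (b := b) (X := X) hΔ (by rw [← h.equation hf]; ring)
    rw [map_zero, mul_zero, mul_zero, sub_zero, zero_eq_mul, or_iff_right hX0] at hY
    refine .inl ⟨?_, by rw [hY, add_zero]⟩
    nth_rewrite 2 [h.ext hneg]
    exact add_neg_cancel P
  · obtain ⟨L, hL⟩ : ∃ L, L * (2 * f * Y) = 3 * X ^ 2 + a :=
      ⟨_, div_mul_cancel₀ _ (mul_ne_zero (mul_ne_zero h2 hf) hY0)⟩
    have hδL := deriv_slope_double ha hY0 hL hX hY
    refine .inr ⟨_, _, h.double hf h2 hY0 hL rfl rfl, ?_, ?_⟩ <;>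
    simp only [Derivation.leibniz, map_add, map_sub, map_neg, Derivation.leibniz_pow, smul_eq_mul,
      nsmul_eq_mul, hX] <;>
    push_cast
    · linear_combination L * hδL
    · linear_combination -hY - (3 * f * L ^ 2 - 3 * X) * hδL + 3 * c * hL

theorem add_of_X_ne (hf : f ≠ 0) {P Q : (twistCurve f a b).Point} {X₁ Y₁ X₂ Y₂ c d : K}
    (h₁ : IsPt f a b P X₁ Y₁) (hX₁ : δ X₁ = c * Y₁)
    (hY₁ : 2 * f * δ Y₁ = (3 * X₁ ^ 2 + a) * c - δ f * Y₁)
    (h₂ : IsPt f a b Q X₂ Y₂) (hX₂ : δ X₂ = d * Y₂)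
    (hY₂ : 2 * f * δ Y₂ = (3 * X₂ ^ 2 + a) * d - δ f * Y₂) (hX : X₁ ≠ X₂) :
    IsMultiplier δ (P + Q) (c + d) := by
  have hne : X₁ - X₂ ≠ 0 := sub_ne_zero.2 hX
  obtain ⟨L, hL⟩ : ∃ L, L * (X₁ - X₂) = Y₁ - Y₂ := ⟨_, div_mul_cancel₀ _ hne⟩
  have hY : Y₂ = Y₁ - L * (X₁ - X₂) := by linear_combination hL
  have ha : a = f * L * (2 * Y₁ - L * (X₁ - X₂)) - (X₁ ^ 2 + X₁ * X₂ + X₂ ^ 2) := by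
    apply mul_right_cancel₀ hne
    have heq₂ := h₂.equation hf
    rw [hY] at heq₂
    linear_combination heq₂ - h₁.equation hf
  have hδL := deriv_slope_add hL hX₁ hY₁ hX₂ hY₂
  rw [ha, hY] at hδL
  refine .inr ⟨_, _, h₁.add hf h₂ hX hL rfl rfl, mul_right_cancel₀ hne ?_,
    mul_right_cancel₀ hne ?_⟩ <;>
  simp only [Derivation.leibniz, map_add, map_sub, map_neg, Derivation.leibniz_pow, smul_eq_mul,
    nsmul_eq_mul, hX₁, hX₂] <;>
  push_cast
  · rw [hY]
    linear_combination L * hδL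
  · rw [ha] at hY₁ ⊢
    rw [hY]
    linear_combination -(X₁ - X₂) * hY₁ - (3 * f * L ^ 2 - 2 * X₁ - X₂) * hδL

theorem add (hf : f ≠ 0) (h2 : (2 : K) ≠ 0) (hΔ : 4 * a ^ 3 + 27 * b ^ 2 ≠ 0) (ha : δ a = 0)
    {P Q : (twistCurve f a b).Point} {c d : K} (hP : IsMultiplier δ P c)
    (hQ : IsMultiplier δ Q d) : IsMultiplier δ (P + Q) (c + d) := by
  have hP' := hP
  have hQ' := hQ
  rcases hP with ⟨rfl, rfl⟩ | ⟨X₁, Y₁, h₁, hX₁, hY₁⟩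
  · rwa [zero_add, zero_add]
  rcases hQ with ⟨rfl, rfl⟩ | ⟨X₂, Y₂, h₂, hX₂, hY₂⟩
  · rwa [add_zero, add_zero]
  by_cases hX : X₁ = X₂
  · subst hX
    have hY : (Y₁ - Y₂) * (Y₁ + Y₂) = 0 := by
      apply mul_left_cancel₀ hf
      linear_combination h₁.equation hf - h₂.equation hf
    rcases mul_eq_zero.1 hY with hY | hY
    · obtain rfl := sub_eq_zero.1 hY
      obtain rfl := h₁.ext h₂
      rw [← hP'.unique hf hΔ hQ']
      exact hP'.double hf h2 hΔ ha
    · rw [eq_neg_of_add_eq_zero_right hY] at h₂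
      obtain rfl := h₁.neg.ext h₂
      rw [← hP'.neg.unique hf hΔ hQ', add_neg_cancel, add_neg_cancel]
      exact isMultiplier_zero
  · exact add_of_X_ne hf h₁ hX₁ hY₁ h₂ hX₂ hY₂ hX

theorem nsmul (hf : f ≠ 0) (h2 : (2 : K) ≠ 0) (hΔ : 4 * a ^ 3 + 27 * b ^ 2 ≠ 0)
    (ha : δ a = 0) {P : (twistCurve f a b).Point} {c : K}
    (h : IsMultiplier δ P c) (n : ℕ) : IsMultiplier δ (n • P) (n * c) := by
  induction n with
  | zero => simpa using isMultiplier_zero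
  | succ n ih =>
    rw [succ_nsmul, Nat.cast_succ, add_one_mul]
    exact ih.add hf h2 hΔ ha h

theorem zsmul (hf : f ≠ 0) (h2 : (2 : K) ≠ 0) (hΔ : 4 * a ^ 3 + 27 * b ^ 2 ≠ 0)
    (ha : δ a = 0) {P : (twistCurve f a b).Point} {c : K}
    (h : IsMultiplier δ P c) (n : ℤ) : IsMultiplier δ (n • P) (n * c) := by
  obtain ⟨m, rfl | rfl⟩ := n.eq_nat_or_neg
  · simpa using h.nsmul hf h2 hΔ ha m
  · simpa using (h.nsmul hf h2 hΔ ha m).neg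

end IsMultiplier

end Multiplier

section TwistMultiplier

open Polynomial

variable {k : Type*} [Field k] {f : k[X]} {a b : k}

local notation "ι" => algebraMap k[X] (RatFunc k)

/-- The morphism of curves given by `P` multiplies the invariant differential by `c`. -/
abbrev HasMultiplier (P : TwistGroup f a b) (c : k) : Prop :=
  IsMultiplier ratFuncDeriv P (ι (C c))

theorem HasMultiplier.comb [DecidableEq (RatFunc k)] (hf : f ≠ 0) (h2 : (2 : k) ≠ 0)
    (hΔ : 4 * a ^ 3 + 27 * b ^ 2 ≠ 0) {P Q : TwistGroup f a b} {c d : k}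
    (hP : HasMultiplier P c) (hQ : HasMultiplier Q d) (m n : ℤ) :
    HasMultiplier (m • P + n • Q) (m * c + n * d) := by
  have hf' := RatFunc.algebraMap_ne_zero hf
  have h2' := ratFunc_two_ne_zero h2
  have hΔ' := algebraMap_disc_ne_zero hΔ
  have hmP := hP.zsmul hf' h2' hΔ' (ratFuncDeriv_C a) m
  have hnQ := hQ.zsmul hf' h2' hΔ' (ratFuncDeriv_C a) n
  have hcast (n : ℤ) (c : k) : (n : RatFunc k) * ι (C c) = ι (C (n * c)) := by simp
  rw [hcast] at hmP hnQ
  have hsum := hmP.add hf' h2' hΔ' (ratFuncDeriv_C a) hnQ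
  rwa [← map_add, ← C_add] at hsum

theorem derivative_eq_zero_of_dvd {u : k[X]} (h : u ∣ derivative u) : derivative u = 0 := by
  by_contra hu
  refine (natDegree_le_of_dvd h hu).not_gt (natDegree_derivative_lt fun h0 ↦ hu ?_)
  rw [eq_C_of_natDegree_eq_zero h0, derivative_C]

theorem derivative_eq_zero_of_isCoprime {u v : k[X]} (h : IsCoprime u v)
    (huv : derivative u * v - u * derivative v = 0) : derivative u = 0 ∧ derivative v = 0 :=
  ⟨derivative_eq_zero_of_dvd (h.dvd_of_dvd_mul_right
      (Dvd.intro (derivative v) (by linear_combination -huv))),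
    derivative_eq_zero_of_dvd (h.symm.dvd_of_dvd_mul_left
      (Dvd.intro (derivative u) (by linear_combination huv)))⟩

theorem derivative_num_denom_eq_zero {x : RatFunc k} (hx : ratFuncDeriv x = 0) :
    derivative x.num = 0 ∧ derivative x.denom = 0 := by
  refine derivative_eq_zero_of_isCoprime x.isCoprime_num_denom ?_
  rw [← x.num_div_denom, ratFuncDeriv_div _ _ x.denom_ne_zero, div_eq_zero_iff,
    or_iff_left (pow_ne_zero 2 (RatFunc.algebraMap_ne_zero x.denom_ne_zero))] at hx
  exact RatFunc.algebraMap_injective k (hx.trans (map_zero _).symm)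

variable {p : ℕ} [Fact p.Prime] [CharP k p]

/-- A morphism that kills the differential factors through the Frobenius map. -/
theorem HasMultiplier.exists_expand (hf : f ≠ 0) {P : TwistGroup f a b} (hP : HasMultiplier P 0)
    (hP0 : P ≠ 0) : ∃ u v Y, IsCoprime u v ∧ v ≠ 0 ∧
      IsTwistPt f a b P (ι (expand k p u) / ι (expand k p v)) Y ∧
      height P = max u.natDegree v.natDegree * p := by
  have hp := (Fact.out : p.Prime).ne_zero
  obtain ⟨h, -⟩ | ⟨X, Y, h, hX, -⟩ := hP
  · exact absurd h hP0
  rw [map_zero, map_zero, zero_mul] at hX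
  obtain ⟨hnum, hdenom⟩ := derivative_num_denom_eq_zero hX
  have hu := expand_contract p hnum hp
  have hv := expand_contract p hdenom hp
  refine ⟨contract p X.num, contract p X.denom, Y, ?_, fun h0 ↦ X.denom_ne_zero ?_, ?_, ?_⟩
  · rw [← isCoprime_expand hp, hu, hv]
    exact X.isCoprime_num_denom
  · rw [← hv, h0, map_zero]
  · rwa [hu, hv, X.num_div_denom]
  · rw [IsTwistPt.height_def hf h, ← hu, ← hv, natDegree_expand, natDegree_expand,
      contract_expand p hp, contract_expand p hp, Nat.mul_max_mul_right]

theorem HasMultiplier.dvd_height (hf : f ≠ 0) {P : TwistGroup f a b} (hP : HasMultiplier P 0) :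
    p ∣ height P := by
  rcases eq_or_ne P 0 with rfl | hP0
  · rw [height_zero]
    exact dvd_zero p
  · obtain ⟨u, v, -, -, -, -, h⟩ := hP.exists_expand (p := p) hf hP0
    exact h ▸ dvd_mul_left _ _

end TwistMultiplier

section ShortCubic

open Polynomial

/-- The polynomial `X³ + a X + b` of a short Weierstrass equation. -/
noncomputable def shortCubic {R : Type*} [CommRing R] (a b : R) : R[X] := X ^ 3 + C a * X + C b

section CommRing

variable {R : Type*} [CommRing R] {a b : R}

theorem eval_shortCubic (x : R) : (shortCubic a b).eval x = x ^ 3 + a * x + b := by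
  simp [shortCubic]

theorem map_shortCubic {S : Type*} [CommRing S] (c : R →+* S) :
    (shortCubic a b).map c = shortCubic (c a) (c b) := by
  simp [shortCubic]

theorem derivative_shortCubic : derivative (shortCubic a b) = 3 * X ^ 2 + C a := by
  norm_num [shortCubic, C_ofNat]

theorem monic_shortCubic : (shortCubic a b).Monic := by
  rw [shortCubic]
  monicity!

variable [Nontrivial R]

theorem natDegree_shortCubic : (shortCubic a b).natDegree = 3 := by
  rw [shortCubic]
  compute_degree!

theorem shortCubic_ne_zero : shortCubic a b ≠ 0 :=
  monic_shortCubic.ne_zero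

end CommRing

variable {k : Type*} [Field k] {a b : k}

local notation "ι" => algebraMap k[X] (RatFunc k)

theorem exists_isTwistPt_X (h2 : (2 : k) ≠ 0) (hΔ : 4 * a ^ 3 + 27 * b ^ 2 ≠ 0) :
    ∃ I : TwistGroup (shortCubic a b) a b, IsTwistPt _ _ _ I (ι X) 1 :=
  exists_isPt (RatFunc.algebraMap_ne_zero shortCubic_ne_zero) (ratFunc_two_ne_zero h2)
    (algebraMap_disc_ne_zero hΔ) (by simp [shortCubic])

theorem height_eq_one_of_isTwistPt_X [IsAlgClosed k] {I : TwistGroup (shortCubic a b) a b}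
    (hI : IsTwistPt _ _ _ I (ι X) 1) : height I = 1 := by
  rw [← div_one (ι X), ← map_one ι] at hI
  simpa using IsTwistPt.height_eq shortCubic_ne_zero hI isCoprime_one_right one_ne_zero

theorem hasMultiplier_one_of_isTwistPt_X {I : TwistGroup (shortCubic a b) a b}
    (hI : IsTwistPt _ _ _ I (ι X) 1) : HasMultiplier I 1 := by
  refine IsPt.isMultiplier hI (RatFunc.algebraMap_ne_zero shortCubic_ne_zero)
    (ratFuncDeriv_C a) (ratFuncDeriv_C b) ?_ one_ne_zero
  rw [ratFuncDeriv_algebraMap, derivative_X, C_1, mul_one]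

end ShortCubic

section CMCurve

open Polynomial

/-- The coefficient of `X` in an equation `Y² = X³ + A X + B` of the elliptic curve over `ℚ(√5)`
with complex multiplication by `ℤ[(1 + √-15) / 2]`; here `φ² = φ + 1`. -/
def cmA {R : Type*} [CommRing R] (φ : R) : R := 24 * φ - 27

/-- The constant coefficient in the equation of the curve with complex multiplication. -/
def cmB {R : Type*} [CommRing R] (φ : R) : R := 70 - 56 * φ

/-- The cubic of the curve with complex multiplication. -/
noncomputable abbrev cmCubic {R : Type*} [CommRing R] (φ : R) : R[X] := shortCubic (cmA φ) (cmB φ)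

variable {k : Type*} [Field k]

variable (φ ω : k)

/-- The rational root of the cubic; `cmRoot₁` and `cmRoot₂` are the two others, defined over
`ℚ(√5, √-3)`. In all these formulas `ω` is a primitive cube root of unity. -/
def cmRoot₀ : k := 4 * φ - 5

/-- The root of the cubic that generates the kernel of the isogeny together with `cmPole`. -/
def cmRoot₁ : k := 3 - φ + ω + 2 * φ * ω

/-- The third root of the cubic. -/
def cmRoot₂ : k := 2 - 3 * φ - ω - 2 * φ * ω

/-- The `X`-coordinate of the two points of order four in the kernel of the isogeny. -/
def cmPole : k := 3 - 2 * φ - 2 * ω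

/-- The `X`-coordinate of points that the isogeny maps to `(cmRoot₂, 0)`. -/
def cmZero : k := 4 * φ * ω + 4 * ω + 3

/-- The multiplier of the isogeny: `(1 + √-15) / 2`, as `√5 = 2φ - 1` and `√-3 = 2ω + 1`. -/
def cmMult : k := 1 - φ + ω * (1 - 2 * φ)

/-- The residue at `cmRoot₁` of the `X`-coordinate of the isogeny, before division by
`cmMult ^ 2`. -/
def cmResidue₁ : k := -6 * φ * ω - 15 * φ - 9 * ω - 12

/-- The residue at `cmPole`. -/
def cmResidue₂ : k := 48 * φ * ω - 96 * ω

/-- The coefficient of the double pole at `cmPole`. -/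
def cmResidue₃ : k := 96 * φ * ω + 48 * φ - 240 * ω - 192

/-- The denominator of `cmMult ^ 2 * x`, where `x` is the `X`-coordinate of the isogeny. -/
noncomputable def isogenyDen : k[X] := (X - C (cmRoot₁ φ ω)) * (X - C (cmPole φ ω)) ^ 2

/-- The numerator of the `X`-coordinate of the isogeny, found with Vélu's formulas. -/
noncomputable def isogenyNum : k[X] :=
  X * isogenyDen φ ω + C (cmResidue₁ φ ω) * (X - C (cmPole φ ω)) ^ 2 +
    C (cmResidue₂ φ ω) * ((X - C (cmRoot₁ φ ω)) * (X - C (cmPole φ ω))) +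
    C (cmResidue₃ φ ω) * (X - C (cmRoot₁ φ ω))

/-- The polynomial vanishing at the preimages of `cmRoot₀`, which are double points. -/
noncomputable def isogenyFiber₀ : k[X] :=
  X ^ 2 + C (-4 * φ * ω + 8 * φ + 8 * ω - 10) * X + C (12 * φ * ω - 24 * φ - 40 * ω + 21)

/-- The polynomial vanishing at the preimages of `cmRoot₁`, which are double points. -/
noncomputable def isogenyFiber₁ : k[X] :=
  X ^ 2 + C (4 * φ * ω - 2) * X + C (4 * φ * ω + 8 * φ + 8 * ω - 3)

/-- The numerator of the `Y`-coordinate of the isogeny. -/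
noncomputable def isogenyNumY : k[X] :=
  isogenyFiber₀ φ ω * isogenyFiber₁ φ ω * (X - C (cmZero φ ω))

variable {φ ω}

theorem cm_disc_ne_zero (h2 : (2 : k) ≠ 0) (h3 : (3 : k) ≠ 0) (hφ : φ ^ 2 = φ + 1) :
    4 * cmA φ ^ 3 + 27 * cmB φ ^ 2 ≠ 0 := by
  have hφ0 : φ ≠ 0 := by
    rintro rfl
    simp at hφ
  have hdisc : 4 * cmA φ ^ 3 + 27 * cmB φ ^ 2 = 2 ^ 8 * 3 ^ 3 * φ ^ 2 := by
    rw [cmA, cmB]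
    grind
  rw [hdisc]
  positivity

theorem isCoprime_X_sub_C {u : k[X]} {r : k} (h : u.eval r ≠ 0) : IsCoprime u (X - C r) := by
  rw [isCoprime_comm, (irreducible_X_sub_C r).coprime_iff_not_dvd, dvd_iff_isRoot]
  exact h

theorem natDegree_isogenyDen : (isogenyDen φ ω).natDegree = 3 := by
  rw [isogenyDen]
  compute_degree!

theorem natDegree_isogenyNum : (isogenyNum φ ω).natDegree = 4 := by
  have hX : (X * isogenyDen φ ω).natDegree = 4 := by
    rw [natDegree_X_mul (by rintro h; simpa [h] using natDegree_isogenyDen (φ := φ) (ω := ω)),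
      natDegree_isogenyDen]
  rw [isogenyNum, add_assoc, add_assoc, natDegree_add_eq_left_of_natDegree_lt, hX]
  rw [hX, Nat.lt_succ_iff]
  compute_degree!

theorem isogenyNumY_ne_zero : isogenyNumY φ ω ≠ 0 := by
  have h₀ : (isogenyFiber₀ φ ω).Monic := by
    rw [isogenyFiber₀]
    monicity!
  have h₁ : (isogenyFiber₁ φ ω).Monic := by
    rw [isogenyFiber₁]
    monicity!
  exact ((h₀.mul h₁).mul (monic_X_sub_C _)).ne_zero

theorem C_sq_eq_add_one (hφ : φ ^ 2 = φ + 1) : (C φ : k[X]) ^ 2 = C φ + 1 := by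
  rw [← C_pow, hφ, C_add, C_1]

theorem C_sq_eq_neg_sub_one (hω : ω ^ 2 = -ω - 1) : (C ω : k[X]) ^ 2 = -C ω - 1 := by
  rw [← C_pow, hω, C_sub, C_neg, C_1]

variable (hφ : φ ^ 2 = φ + 1) (hω : ω ^ 2 = -ω - 1)
include hφ hω

theorem cmMult_sq : cmMult φ ω ^ 2 = cmMult φ ω - 4 := by
  rw [cmMult]
  grind

theorem cmMult_ne_zero (h2 : (2 : k) ≠ 0) : cmMult φ ω ≠ 0 := by
  have h := cmMult_sq hφ hω
  intro h0
  rw [h0] at h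
  exact pow_ne_zero 2 h2 (by linear_combination h)

theorem cmCubic_eq_mul : cmCubic φ =
    (X - C (cmRoot₀ φ)) * (X - C (cmRoot₁ φ ω)) * (X - C (cmRoot₂ φ ω)) := by
  have hφ' := C_sq_eq_add_one hφ
  have hω' := C_sq_eq_neg_sub_one hω
  simp only [shortCubic, cmA, cmB, cmRoot₀, cmRoot₁, cmRoot₂, map_add, map_sub, map_mul, map_ofNat]
  grind

theorem isogenyNum_sub_root₀ :
    isogenyNum φ ω - C (cmRoot₀ φ * cmMult φ ω ^ 2) * isogenyDen φ ω = isogenyFiber₀ φ ω ^ 2 := by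
  have hφ' := C_sq_eq_add_one hφ
  have hω' := C_sq_eq_neg_sub_one hω
  simp only [isogenyNum, isogenyDen, isogenyFiber₀, cmMult, cmRoot₀, cmRoot₁,
    cmPole, cmResidue₁, cmResidue₂, cmResidue₃, map_add, map_sub, map_mul, map_neg, map_ofNat,
    map_one, map_pow]
  grind

theorem isogenyNum_sub_root₁ : isogenyNum φ ω - C (cmRoot₁ φ ω * cmMult φ ω ^ 2) * isogenyDen φ ω =
    isogenyFiber₁ φ ω ^ 2 := by
  have hφ' := C_sq_eq_add_one hφ
  have hω' := C_sq_eq_neg_sub_one hω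
  simp only [isogenyNum, isogenyDen, isogenyFiber₁, cmMult, cmRoot₁,
    cmPole, cmResidue₁, cmResidue₂, cmResidue₃, map_add, map_sub, map_mul, map_neg, map_ofNat,
    map_one, map_pow]
  grind

theorem isogenyNum_sub_root₂ : isogenyNum φ ω - C (cmRoot₂ φ ω * cmMult φ ω ^ 2) * isogenyDen φ ω =
    (X - C (cmRoot₀ φ)) * (X - C (cmRoot₂ φ ω)) * (X - C (cmZero φ ω)) ^ 2 := by
  have hφ' := C_sq_eq_add_one hφ
  have hω' := C_sq_eq_neg_sub_one hω
  simp only [isogenyNum, isogenyDen, cmMult, cmRoot₀, cmRoot₁, cmRoot₂, cmZero,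
    cmPole, cmResidue₁, cmResidue₂, cmResidue₃, map_add, map_sub, map_mul, map_neg, map_ofNat,
    map_one, map_pow]
  grind

theorem wronskian_isogenyNum_isogenyDen :
    derivative (isogenyNum φ ω) * isogenyDen φ ω - isogenyNum φ ω * derivative (isogenyDen φ ω) =
      isogenyNumY φ ω * (X - C (cmPole φ ω)) := by
  have hφ' := C_sq_eq_add_one hφ
  have hω' := C_sq_eq_neg_sub_one hω
  simp only [isogenyNumY, isogenyNum, isogenyDen, isogenyFiber₀, isogenyFiber₁, cmRoot₁, cmZero,
    cmPole, cmResidue₁, cmResidue₂, cmResidue₃, derivative_mul, derivative_pow, derivative_X,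
    derivative_ofNat, derivative_C, map_add, map_sub, map_mul, map_neg, map_ofNat, map_natCast,
    mul_zero, zero_mul, add_zero, sub_zero, neg_zero]
  push_cast
  grind

theorem isCoprime_isogenyNum_isogenyDen (h2 : (2 : k) ≠ 0) (h3 : (3 : k) ≠ 0) :
    IsCoprime (isogenyNum φ ω) (isogenyDen φ ω) := by
  have h₁ : cmResidue₁ φ ω * (-5 * φ * ω - 3 * φ + 9 * ω + 4) = 2 ^ 4 * 3 := by
    rw [cmResidue₁]
    grind
  have h₃ : cmResidue₃ φ ω * (φ * ω - φ + 3 * ω) = 2 ^ 6 * 3 ^ 2 := by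
    rw [cmResidue₃]
    grind
  have hpole : (cmRoot₁ φ ω - cmPole φ ω) * (φ * ω + 2 * φ - 4 * ω - 5) = 2 ^ 2 * 3 := by
    rw [cmRoot₁, cmPole]
    linear_combination (2 * ω ^ 2 + 5 * ω + 2) * hφ - (3 * φ + 10) * hω
  replace h₁ : cmResidue₁ φ ω ≠ 0 := left_ne_zero_of_mul (h₁.trans_ne (by positivity))
  replace h₃ : cmResidue₃ φ ω ≠ 0 := left_ne_zero_of_mul (h₃.trans_ne (by positivity))
  replace hpole := sub_ne_zero.1 (left_ne_zero_of_mul (hpole.trans_ne (by positivity)))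
  refine (isCoprime_X_sub_C ?_).mul_right (isCoprime_X_sub_C ?_).pow_right <;>
  · rw [isogenyNum, isogenyDen]
    simp [h₁, h₃, sub_eq_zero, hpole, hpole.symm]

end CMCurve

section CMIsogeny

open Polynomial

variable {k : Type*} [Field k] {φ ω : k}

local notation "ι" => algebraMap k[X] (RatFunc k)

/-- The quadratic twist by its own cubic of the curve with complex multiplication, over `k(t)`: its
points are the morphisms from the curve to itself that commute with `-1`. -/
abbrev CMTwistGroup (φ : k) := TwistGroup (cmCubic φ) (cmA φ) (cmB φ)

variable (φ ω) in
/-- The `X`-coordinate of the isogeny of degree four. -/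
noncomputable def isogenyX : RatFunc k :=
  ι (isogenyNum φ ω) / ι (C (cmMult φ ω ^ 2) * isogenyDen φ ω)

variable (φ ω) in
/-- The `Y`-coordinate of the isogeny of degree four. -/
noncomputable def isogenyY : RatFunc k :=
  ι (isogenyNumY φ ω) /
    ι (C (cmMult φ ω) ^ 3 * (X - C (cmRoot₁ φ ω)) ^ 2 * (X - C (cmPole φ ω)) ^ 3)

theorem isogenyDen_ne_zero : isogenyDen φ ω ≠ 0 :=
  mul_ne_zero (X_sub_C_ne_zero _) (pow_ne_zero 2 (X_sub_C_ne_zero _))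

variable (hφ : φ ^ 2 = φ + 1) (hω : ω ^ 2 = -ω - 1)
include hφ hω

theorem cmCubic_homogenization (u v : k[X]) :
    u ^ 3 + C (cmA φ) * u * v ^ 2 + C (cmB φ) * v ^ 3 =
      (u - C (cmRoot₀ φ) * v) * (u - C (cmRoot₁ φ ω) * v) * (u - C (cmRoot₂ φ ω) * v) := by
  have hφ' := C_sq_eq_add_one hφ
  have hω' := C_sq_eq_neg_sub_one hω
  simp only [cmA, cmB, cmRoot₀, cmRoot₁, cmRoot₂, map_add, map_sub, map_mul, map_ofNat]
  grind

theorem cmCubic_homogenization_isogeny :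
    isogenyNum φ ω ^ 3 +
        C (cmA φ) * isogenyNum φ ω * (C (cmMult φ ω ^ 2) * isogenyDen φ ω) ^ 2 +
        C (cmB φ) * (C (cmMult φ ω ^ 2) * isogenyDen φ ω) ^ 3 =
      (X - C (cmRoot₀ φ)) * (X - C (cmRoot₂ φ ω)) * isogenyNumY φ ω ^ 2 := by
  simp only [cmCubic_homogenization hφ hω, ← mul_assoc, ← C_mul, isogenyNum_sub_root₀ hφ hω,
    isogenyNum_sub_root₁ hφ hω, isogenyNum_sub_root₂ hφ hω]
  rw [isogenyNumY]
  ring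

variable (h2 : (2 : k) ≠ 0)
include h2

theorem isogeny_equation : ι (cmCubic φ) * isogenyY φ ω ^ 2 =
    isogenyX φ ω ^ 3 + ι (C (cmA φ)) * isogenyX φ ω + ι (C (cmB φ)) := by
  have hρ := RatFunc.algebraMap_ne_zero (C_ne_zero.2 (cmMult_ne_zero hφ hω h2))
  have hroot := RatFunc.algebraMap_ne_zero (X_sub_C_ne_zero (cmRoot₁ φ ω))
  have hpole := RatFunc.algebraMap_ne_zero (X_sub_C_ne_zero (cmPole φ ω))
  have hcubic := congrArg ι (cmCubic_homogenization_isogeny hφ hω)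
  rw [cmCubic_eq_mul hφ hω, isogenyX, isogenyY]
  simp only [isogenyDen, map_add, map_mul, map_pow] at hcubic ⊢
  field_simp
  linear_combination -hcubic

theorem ratFuncDeriv_isogenyX :
    ratFuncDeriv (isogenyX φ ω) = ι (C (cmMult φ ω)) * isogenyY φ ω := by
  have hρ := cmMult_ne_zero hφ hω h2
  have hρ' := RatFunc.algebraMap_ne_zero (C_ne_zero.2 hρ)
  have hroot := RatFunc.algebraMap_ne_zero (X_sub_C_ne_zero (cmRoot₁ φ ω))
  have hpole := RatFunc.algebraMap_ne_zero (X_sub_C_ne_zero (cmPole φ ω))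
  rw [isogenyX, isogenyY, ratFuncDeriv_div _ _
    (mul_ne_zero (C_ne_zero.2 (pow_ne_zero 2 hρ)) isogenyDen_ne_zero), derivative_C_mul,
    mul_left_comm, mul_left_comm (isogenyNum φ ω), ← mul_sub, wronskian_isogenyNum_isogenyDen hφ hω]
  simp only [isogenyDen, map_mul, map_pow]
  field_simp

variable [IsAlgClosed k]

theorem exists_isogeny (h3 : (3 : k) ≠ 0) :
    ∃ R : CMTwistGroup φ, height R = 4 ∧ HasMultiplier R (cmMult φ ω) := by
  have hcubic : cmCubic φ ≠ 0 := shortCubic_ne_zero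
  have hρ : cmMult φ ω ^ 2 ≠ 0 := pow_ne_zero 2 (cmMult_ne_zero hφ hω h2)
  have hY : isogenyY φ ω ≠ 0 :=
    div_ne_zero (RatFunc.algebraMap_ne_zero isogenyNumY_ne_zero) (RatFunc.algebraMap_ne_zero
      (by simp [cmMult_ne_zero hφ hω h2, X_sub_C_ne_zero]))
  have hcop : IsCoprime (isogenyNum φ ω) (C (cmMult φ ω ^ 2) * isogenyDen φ ω) :=
    (isCoprime_mul_unit_left_right (isUnit_C.2 hρ.isUnit) _ _).2
      (isCoprime_isogenyNum_isogenyDen hφ hω h2 h3)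
  obtain ⟨R, hR⟩ := exists_isPt (RatFunc.algebraMap_ne_zero hcubic) (ratFunc_two_ne_zero h2)
    (algebraMap_disc_ne_zero (cm_disc_ne_zero h2 h3 hφ)) (isogeny_equation hφ hω h2)
  refine ⟨R, ?_, IsPt.isMultiplier hR (RatFunc.algebraMap_ne_zero hcubic) (ratFuncDeriv_C _)
    (ratFuncDeriv_C _) (ratFuncDeriv_isogenyX hφ hω h2) hY⟩
  rw [IsTwistPt.height_eq hcubic hR hcop (mul_ne_zero (C_ne_zero.2 hρ) isogenyDen_ne_zero),
    natDegree_C_mul hρ, natDegree_isogenyNum, natDegree_isogenyDen]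
  rfl

end CMIsogeny

section Exact

variable {K : Type*} [Field K] (δ : FieldDerivation K)

/-- The values of a derivation. If `δ t = 1`, these are the `z` such that `z dt` is exact. -/
def exactElements : AddSubgroup K := (δ : K →ₗ[ℤ] K).toAddMonoidHom.range

variable {δ} {p : ℕ}

theorem mem_exactElements {z : K} : z ∈ exactElements δ ↔ ∃ w, δ w = z :=
  Iff.rfl

theorem const_mul_mem_exactElements {c z : K} (hc : δ c = 0) (hz : z ∈ exactElements δ) :
    c * z ∈ exactElements δ := by
  obtain ⟨w, rfl⟩ := mem_exactElements.1 hz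
  exact mem_exactElements.2 ⟨c * w, by simp [Derivation.leibniz, hc]⟩

theorem pow_mul_mem_exactElements (x : K) {n : ℕ} (hn : ((n + 1 : ℕ) : K) ≠ 0) :
    x ^ n * δ x ∈ exactElements δ := by
  refine mem_exactElements.2 ⟨((n + 1 : ℕ) : K)⁻¹ * x ^ (n + 1), ?_⟩
  have hconst : δ ((n + 1 : ℕ) : K)⁻¹ = 0 := by simp [Derivation.leibniz_inv]
  rw [Derivation.leibniz, hconst, Derivation.leibniz_pow]
  simp only [smul_eq_mul, nsmul_eq_mul, Nat.add_sub_cancel, mul_zero, add_zero]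
  field_simp

variable [CharP K p]

variable (δ) in
theorem derivation_pow_char_mul (x y : K) : δ (x ^ p * y) = x ^ p * δ y := by
  simp [Derivation.leibniz, Derivation.leibniz_pow]

theorem derivation_pow_char (x : K) : δ (x ^ p) = 0 := by
  simp [Derivation.leibniz_pow]

variable [hp : Fact p.Prime]

theorem natCast_succ_ne_zero {n : ℕ} (hn : n < 2 * p - 1) (hn' : n ≠ p - 1) :
    ((n + 1 : ℕ) : K) ≠ 0 := by
  rw [Ne, CharP.cast_eq_zero_iff K p]
  rintro ⟨c, hc⟩
  have hp0 := hp.out.pos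
  have hc2 : c < 2 := Nat.lt_of_mul_lt_mul_left (a := p) (by lia)
  interval_cases c <;> lia

open Polynomial in
/-- The Cartier operator sends `g(x) dx` to the `p`-th root of the coefficient of `X ^ (p - 1)`,
times `dx`. -/
theorem eval_mul_sub_mem_exactElements {g : K[X]} (hg : ∀ n, δ (g.coeff n) = 0)
    (hdeg : g.natDegree < 2 * p - 1) (x : K) :
    g.eval x * δ x - g.coeff (p - 1) * (x ^ (p - 1) * δ x) ∈ exactElements δ := by
  have hp2 := hp.out.two_le
  rw [eval_eq_sum_range' hdeg, sum_mul,
    ← add_sum_erase _ _ (mem_range.2 (show p - 1 < 2 * p - 1 by lia)), mul_assoc,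
    add_sub_cancel_left]
  refine sum_mem fun n hn ↦ ?_
  rw [mem_erase, mem_range] at hn
  rw [mul_assoc]
  exact const_mul_mem_exactElements (hg n)
    (pow_mul_mem_exactElements x (natCast_succ_ne_zero hn.2 hn.1))

variable (δ p) in
/-- Katz's formula `C(x ^ (p - 1) dx) = dx` for the Cartier operator `C`, where `δ t = 1`: since
`C(g ^ p t ^ (p - 1) dt) = g dt`, it says that the two arguments of `C` agree up to an exact form.
The elements that satisfy it form a submonoid. -/
def katzSubmonoid (t : K) : Submonoid K where
  carrier := {x | x ^ (p - 1) * δ x - δ x ^ p * t ^ (p - 1) ∈ exactElements δ}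
  one_mem' := by simp [hp.out.ne_zero, zero_mem]
  mul_mem' {x y} hx hy := by
    have hmem := add_mem (const_mul_mem_exactElements (derivation_pow_char (p := p) y) hx)
      (const_mul_mem_exactElements (derivation_pow_char (p := p) x) hy)
    rw [Set.mem_ofPred_eq]
    convert hmem using 1
    rw [Derivation.leibniz, smul_eq_mul, smul_eq_mul, add_pow_char, mul_pow, mul_pow, mul_pow,
      ← pow_sub_one_mul hp.out.ne_zero x, ← pow_sub_one_mul hp.out.ne_zero y]
    ring

theorem mem_katzSubmonoid {t x : K} : x ∈ katzSubmonoid δ p t ↔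
    x ^ (p - 1) * δ x - δ x ^ p * t ^ (p - 1) ∈ exactElements δ :=
  Iff.rfl

theorem inv_mem_katzSubmonoid {t x : K} (hx : x ∈ katzSubmonoid δ p t) :
    x⁻¹ ∈ katzSubmonoid δ p t := by
  rcases eq_or_ne x 0 with rfl | hx0
  · rwa [inv_zero]
  have hmem := neg_mem (const_mul_mem_exactElements (derivation_pow_char (p := p) (x⁻¹ ^ 2)) hx)
  rw [mem_katzSubmonoid]
  convert hmem using 1
  have hxp := pow_sub_one_mul hp.out.ne_zero x
  have hneg : (-δ x) ^ p = -δ x ^ p := map_neg (frobenius K p) (δ x)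
  rw [Derivation.leibniz_inv, smul_eq_mul, neg_mul, ← mul_neg, mul_pow, hneg, ← pow_mul, mul_comm 2,
    pow_mul, inv_pow, inv_pow, inv_pow, ← hxp]
  field_simp
  ring

theorem const_mem_katzSubmonoid (t : K) {c : K} (hc : δ c = 0) : c ∈ katzSubmonoid δ p t := by
  simp [mem_katzSubmonoid, hc, hp.out.ne_zero, zero_mem]

theorem sub_const_mem_katzSubmonoid {t r : K} (ht : δ t = 1) (hr : δ r = 0) :
    t - r ∈ katzSubmonoid δ p t := by
  have hp1 := hp.out.one_lt
  have hδ : δ (t - r) = 1 := by rw [map_sub, ht, hr, sub_zero]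
  rw [mem_katzSubmonoid, hδ, mul_one, one_pow, one_mul, sub_eq_add_neg t, add_pow, sum_range_succ,
    Nat.sub_self, pow_zero, Nat.choose_self, Nat.cast_one, mul_one, mul_one, add_sub_cancel_right]
  refine sum_mem fun n hn ↦ ?_
  have hmem := pow_mul_mem_exactElements (δ := δ) t
    (natCast_succ_ne_zero (p := p) (n := n) (by grind) (by grind))
  rw [ht, mul_one] at hmem
  rw [mul_assoc, mul_comm]
  exact const_mul_mem_exactElements (by simp [Derivation.leibniz, Derivation.leibniz_pow, hr]) hmem

/-- Compares the Cartier operator on the two differentials `f ^ (m + 1/2) dt` and its pullback. -/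
theorem pow_mul_eq_mul_of_mem_exactElements {t f x y c H : K} {m : ℕ} (hm : p - 1 = 2 * m)
    (hy : y ≠ 0) (hx : δ x = c * y) (hc : δ c = 0) (hH : δ H = 0)
    (hf : f ^ m - H * t ^ (p - 1) ∈ exactElements δ)
    (hg : (f * y ^ 2) ^ m * δ x - H * (x ^ (p - 1) * δ x) ∈ exactElements δ)
    (hxt : x ∈ katzSubmonoid δ p t) (ht : t ^ (p - 1) ∉ exactElements δ) : c ^ p * H = c * H := by
  by_contra hne
  have hcy : δ (c * y ^ p) = 0 := by simp [Derivation.leibniz, hc]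
  have hmem := sub_mem (sub_mem (const_mul_mem_exactElements hcy hf) hg)
    (const_mul_mem_exactElements hH (mem_katzSubmonoid.1 hxt))
  have hpullback : (f * y ^ 2) ^ m * δ x = c * y ^ p * f ^ m := by
    rw [hx, mul_pow, ← pow_mul, ← hm, ← pow_sub_one_mul hp.out.ne_zero y]
    ring
  have hsum : c * y ^ p * (f ^ m - H * t ^ (p - 1)) - ((f * y ^ 2) ^ m * δ x -
      H * (x ^ (p - 1) * δ x)) - H * (x ^ (p - 1) * δ x - δ x ^ p * t ^ (p - 1)) =
        (c ^ p * H - c * H) * y ^ p * t ^ (p - 1) := by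
    rw [hpullback, hx, mul_pow]
    ring
  have hz : (c ^ p * H - c * H) * y ^ p ≠ 0 :=
    mul_ne_zero (sub_ne_zero.2 hne) (pow_ne_zero p hy)
  have hz' : δ ((c ^ p * H - c * H) * y ^ p)⁻¹ = 0 := by
    simp [Derivation.leibniz_inv, Derivation.leibniz, hc, hH]
  rw [hsum] at hmem
  have := const_mul_mem_exactElements hz' hmem
  rw [inv_mul_cancel_left₀ hz] at this
  exact ht this

end Exact

section Cartier

open Polynomial

variable {k : Type*} [Field k] {p : ℕ} [hp : Fact p.Prime]

local notation "ι" => algebraMap k[X] (RatFunc k)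

theorem algebraMap_mem_katzSubmonoid [IsAlgClosed k] [CharP (RatFunc k) p] (u : k[X]) :
    ι u ∈ katzSubmonoid ratFuncDeriv p (ι X) := by
  rw [(IsAlgClosed.splits u).eq_prod_roots, map_mul, map_multiset_prod, Multiset.map_map]
  refine mul_mem (const_mem_katzSubmonoid _ (ratFuncDeriv_C _)) (multiset_prod_mem _ fun x hx ↦ ?_)
  obtain ⟨r, -, rfl⟩ := Multiset.mem_map.1 hx
  rw [Function.comp_apply, map_sub]
  refine sub_const_mem_katzSubmonoid ?_ (ratFuncDeriv_C r)
  rw [ratFuncDeriv_algebraMap, derivative_X, map_one]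

theorem mem_katzSubmonoid_ratFunc [IsAlgClosed k] [CharP (RatFunc k) p] (x : RatFunc k) :
    x ∈ katzSubmonoid ratFuncDeriv p (ι X) := by
  obtain ⟨u, v, -, rfl⟩ := exists_eq_div x
  rw [div_eq_mul_inv]
  exact mul_mem (algebraMap_mem_katzSubmonoid u)
    (inv_mem_katzSubmonoid (algebraMap_mem_katzSubmonoid v))

theorem X_pow_notMem_exactElements [CharP k p] [CharP (RatFunc k) p] :
    ι X ^ (p - 1) ∉ exactElements (ratFuncDeriv (k := k)) := by
  rintro ⟨w, hw⟩
  obtain ⟨u, v, hv, rfl⟩ := exists_eq_div w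
  have hv' := RatFunc.algebraMap_ne_zero hv
  have hp0 := hp.out.ne_zero
  have hderiv : derivative (u * v ^ (p - 1)) = v ^ p * X ^ (p - 1) := by
    apply RatFunc.algebraMap_injective k
    have huv : ι (u * v ^ (p - 1)) = ι v ^ p * (ι u / ι v) := by
      rw [← pow_sub_one_mul hp0 (ι v), map_mul, map_pow]
      field_simp
    rw [← ratFuncDeriv_algebraMap, huv, derivation_pow_char_mul, map_mul, map_pow, map_pow]
    exact congrArg _ hw
  have hcoeff := congrArg (coeff · (v.natDegree * p + (p - 1))) hderiv
  have hcast : ((v.natDegree * p + (p - 1) : ℕ) : k) + 1 = 0 := by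
    rw [← Nat.cast_succ, CharP.cast_eq_zero_iff k p]
    exact ⟨v.natDegree + 1, by have := hp.out.pos; grind⟩
  rw [coeff_derivative, hcast, mul_zero, coeff_mul_X_pow, mul_comm, coeff_pow_mul_natDegree]
    at hcoeff
  exact pow_ne_zero p (leadingCoeff_ne_zero.2 hv) hcoeff.symm

/-- The Hasse invariant of `Y² = X³ + a X + b` in characteristic `p`. -/
noncomputable def hasseInvariant {R : Type*} [CommRing R] (p : ℕ) (a b : R) : R :=
  (shortCubic a b ^ ((p - 1) / 2)).coeff (p - 1)

theorem shortCubic_pow_mul_sub_mem_exactElements [CharP (RatFunc k) p] (a b : k) (z : RatFunc k) :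
    (z ^ 3 + ι (C a) * z + ι (C b)) ^ ((p - 1) / 2) * ratFuncDeriv z -
        ι (C (hasseInvariant p a b)) * (z ^ (p - 1) * ratFuncDeriv z) ∈
      exactElements ratFuncDeriv := by
  have hp2 := hp.out.two_le
  have hdeg : (shortCubic a b ^ ((p - 1) / 2)).natDegree < 2 * p - 1 := by
    rw [natDegree_pow, natDegree_shortCubic]
    lia
  have hexact := eval_mul_sub_mem_exactElements (δ := ratFuncDeriv) (p := p)
    (g := (shortCubic a b ^ ((p - 1) / 2)).map ((ι).comp C))
    (fun n ↦ by rw [coeff_map]; exact ratFuncDeriv_C _) (natDegree_map_le.trans_lt hdeg) z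
  rwa [coeff_map, Polynomial.map_pow, map_shortCubic, eval_pow, eval_shortCubic] at hexact

/-- The Cartier operator acts on the invariant differential by the Hasse invariant and commutes
with pullbacks. -/
theorem HasMultiplier.pow_mul_hasseInvariant [IsAlgClosed k] [CharP k p] (h2 : p ≠ 2) {a b c : k}
    (hΔ : 4 * a ^ 3 + 27 * b ^ 2 ≠ 0) {P : TwistGroup (shortCubic a b) a b}
    (h : HasMultiplier P c) : c ^ p * hasseInvariant p a b = c * hasseInvariant p a b := by
  have : CharP (RatFunc k) p :=
    charP_of_injective_ringHom (f := (ι).comp C) (RingHom.injective _) p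
  rcases eq_or_ne c 0 with rfl | hc
  · rw [zero_pow hp.out.ne_zero]
  have hf := RatFunc.algebraMap_ne_zero (shortCubic_ne_zero (a := a) (b := b))
  obtain ⟨x, y, hP, hy, hx⟩ := IsMultiplier.exists_ne_zero hf (algebraMap_disc_ne_zero hΔ)
    (RatFunc.algebraMap_ne_zero (C_ne_zero.2 hc)) h
  have hm : p - 1 = 2 * ((p - 1) / 2) := by
    obtain ⟨r, hr⟩ := hp.out.odd_of_ne_two h2
    lia
  have hX : ratFuncDeriv (ι X) = 1 := by rw [ratFuncDeriv_algebraMap, derivative_X, map_one]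
  have hexact := shortCubic_pow_mul_sub_mem_exactElements (p := p) a b
  have hcubic : ι X ^ 3 + ι (C a) * ι X + ι (C b) = ι (shortCubic a b) := by
    simp [shortCubic]
  have hXexact := hexact (ι X)
  rw [hcubic, hX, mul_one, mul_one] at hXexact
  have hxexact := hexact x
  rw [← hP.equation hf] at hxexact
  have hcH := pow_mul_eq_mul_of_mem_exactElements hm hy hx (ratFuncDeriv_C c) (ratFuncDeriv_C _)
    hXexact hxexact (mem_katzSubmonoid_ratFunc x) X_pow_notMem_exactElements
  simpa only [← map_pow, ← map_mul, (RatFunc.algebraMap_injective k).eq_iff, C_inj]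
    using hcH

end Cartier

theorem not_dvd_of_prime_eq_sq_add {p d x y : ℤ} (hp : Prime p) (h : p = x ^ 2 + d * y ^ 2) :
    ¬p ∣ y := by
  rintro ⟨c, rfl⟩
  obtain ⟨e, rfl⟩ : p ∣ x :=
    hp.dvd_of_dvd_pow (n := 2) ⟨1 - d * p * c ^ 2, by linear_combination -h⟩
  refine hp.not_isUnit (isUnit_of_dvd_one ⟨e ^ 2 + d * c ^ 2, mul_left_cancel₀ hp.ne_zero ?_⟩)
  linear_combination h

theorem natCast_ne_zero_of_lt (k : Type*) [Ring k] {p : ℕ} [CharP k p] {n : ℕ} (h0 : n ≠ 0)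
    (hn : n < p) : (n : k) ≠ 0 := by
  rw [Ne, CharP.cast_eq_zero_iff k p]
  exact Nat.not_dvd_of_pos_of_lt (Nat.pos_of_ne_zero h0) hn

section FrobeniusCandidate

open Polynomial

variable {k : Type*} [Field k] [IsAlgClosed k] [DecidableEq (RatFunc k)]

local notation "ι" => algebraMap k[X] (RatFunc k)

theorem height_zsmul_add_zsmul {f : k[X]} {a b : k} (hf : f ≠ 0) (h2 : (2 : k) ≠ 0)
    (hΔ : 4 * a ^ 3 + 27 * b ^ 2 ≠ 0) (P Q : TwistGroup f a b) (m n : ℤ) :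
    (height (m • P + n • Q) : ℤ) =
      m ^ 2 * height P + m * n * (height (P + Q) - height P - height Q) + n ^ 2 * height Q :=
  zsmul_add_zsmul_of_parallelogram (h := fun P : TwistGroup f a b ↦ (height P : ℤ))
    (fun P Q ↦ by
      rw [← mul_add]
      exact_mod_cast height_add_add_height_sub hf h2 hΔ P Q) P Q m n

-- `2 * ρ - 1` is a square root of `-15`, hence equal to `x / y` up to sign.
omit [IsAlgClosed k] [DecidableEq (RatFunc k)] in
theorem exists_int_sub_add_two_mul_eq_zero {ρ : k} (hρ : ρ ^ 2 = ρ - 4) {x y : ℤ}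
    (hxy : (x : k) ^ 2 + 15 * (y : k) ^ 2 = 0) :
    ∃ z : ℤ, z ^ 2 = y ^ 2 ∧ ((x - z : ℤ) : k) + (2 * z : ℤ) * ρ = 0 := by
  have h : ((x : k) + y * (2 * ρ - 1)) * (x - y * (2 * ρ - 1)) = 0 := by
    linear_combination hxy - 4 * (y : k) ^ 2 * hρ
  rcases mul_eq_zero.1 h with h | h
  · exact ⟨y, rfl, by push_cast; linear_combination h⟩
  · exact ⟨-y, by ring, by push_cast; linear_combination h⟩

variable {p : ℕ} [hp : Fact p.Prime] [CharP k p]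

section

variable {f : k[X]} {a b ρ : k} {P Q : TwistGroup f a b} {x z : ℤ}

/- The bilinear form at `(P, Q)` is at most five in absolute value by positivity, and it is one
modulo `p` because `p` divides the height of a point whose multiplier vanishes. -/
theorem height_add_eq_six (hp11 : 11 ≤ p) (hf : f ≠ 0) (hΔ : 4 * a ^ 3 + 27 * b ^ 2 ≠ 0)
    (hρ : ρ ≠ 0) (hP : HasMultiplier P 1) (hQ : HasMultiplier Q ρ) (hP1 : height P = 1)
    (hQ4 : height Q = 4) (hxz : (p : ℤ) = x ^ 2 + 15 * z ^ 2)
    (hrel : ((x - z : ℤ) : k) + (2 * z : ℤ) * ρ = 0) : height (P + Q) = 6 := by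
  have h2 : (2 : k) ≠ 0 := natCast_ne_zero_of_lt k two_ne_zero (by lia : 2 < p)
  have hpp := Nat.prime_iff_prime_int.1 hp.out
  have form := height_zsmul_add_zsmul hf h2 hΔ P Q
  simp only [hP1, hQ4] at form
  have hz : (z : k) ≠ 0 := by
    rw [Ne, CharP.intCast_eq_zero_iff k p]
    exact not_dvd_of_prime_eq_sq_add hpp hxz
  have hxz' : ((x - z : ℤ) : k) ≠ 0 := by
    intro h
    rw [h, zero_add, Int.cast_mul] at hrel
    exact mul_ne_zero (mul_ne_zero (mod_cast h2) hz) hρ hrel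
  have hcoprime : ¬(p : ℤ) ∣ 2 * (x - z) * z := by
    rw [← CharP.intCast_eq_zero_iff k p, Int.cast_mul, Int.cast_mul]
    exact mul_ne_zero (mul_ne_zero (mod_cast h2) hxz') hz
  have hdvd : (p : ℤ) ∣ height ((x - z) • P + (2 * z) • Q) := by
    have h := hP.comb hf h2 hΔ hQ (x - z) (2 * z)
    rw [mul_one, hrel] at h
    exact mod_cast h.dvd_height (p := p) hf
  have hbound : (height (P + Q) : ℤ) ≤ 10 := by
    have h := form 1 (-1)
    push_cast at h
    lia
  have hdvd' : (p : ℤ) ∣ (height (P + Q) - 6) * (2 * (x - z) * z) := by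
    obtain ⟨c, hc⟩ := hdvd
    rw [form] at hc
    push_cast at hc
    exact ⟨c - 1, by linear_combination hc + hxz⟩
  have h0 := Int.eq_zero_of_abs_lt_dvd ((hpp.dvd_or_dvd hdvd').resolve_right hcoprime)
    (abs_lt.2 ⟨by lia, by lia⟩)
  lia

end

theorem exists_height_eq_of_eq_sq_add {φ ω : k} {x y : ℤ} (hp11 : 11 ≤ p) (hφ : φ ^ 2 = φ + 1)
    (hω : ω ^ 2 = -ω - 1) (hxy : (p : ℤ) = x ^ 2 + 15 * y ^ 2) :
    ∃ I α : CMTwistGroup φ, IsTwistPt _ _ _ I (ι X) 1 ∧ HasMultiplier α 0 ∧ height α = p ∧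
      (height (α + I) : ℤ) = p + 1 + 2 * x ∧ (height (α - I) : ℤ) = p + 1 - 2 * x := by
  have h2 : (2 : k) ≠ 0 := natCast_ne_zero_of_lt k two_ne_zero (by lia : 2 < p)
  have h3 : (3 : k) ≠ 0 := natCast_ne_zero_of_lt k three_ne_zero (by lia : 3 < p)
  have hΔ := cm_disc_ne_zero h2 h3 hφ
  obtain ⟨I, hI⟩ := exists_isTwistPt_X h2 hΔ
  obtain ⟨R, hR4, hR⟩ := exists_isogeny hφ hω h2 h3
  have hI1 := height_eq_one_of_isTwistPt_X hI
  have hIm := hasMultiplier_one_of_isTwistPt_X hI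
  have hxy' : (x : k) ^ 2 + 15 * (y : k) ^ 2 = 0 := by
    rw [← CharP.cast_eq_zero k p]
    exact mod_cast congrArg (Int.cast : ℤ → k) hxy.symm
  obtain ⟨z, hzy, hrel⟩ := exists_int_sub_add_two_mul_eq_zero (cmMult_sq hφ hω) hxy'
  rw [← hzy] at hxy
  have form := height_zsmul_add_zsmul shortCubic_ne_zero h2 hΔ I R
  rw [height_add_eq_six hp11 shortCubic_ne_zero hΔ (cmMult_ne_zero hφ hω h2) hIm hR hI1 hR4 hxy
    hrel, hI1, hR4] at form
  have hα := hIm.comb shortCubic_ne_zero h2 hΔ hR (x - z) (2 * z)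
  rw [mul_one, hrel] at hα
  refine ⟨I, (x - z) • I + (2 * z) • R, hI, hα, Int.ofNat_inj.1 ?_, ?_, ?_⟩
  · rw [form, hxy]
    ring
  · rw [show (x - z) • I + (2 * z) • R + I = (x - z + 1) • I + (2 * z) • R by module, form, hxy]
    ring
  · rw [show (x - z) • I + (2 * z) • R - I = (x - z - 1) • I + (2 * z) • R by module, form, hxy]
    ring

end FrobeniusCandidate

section Rigidity

open Polynomial

variable {k : Type*} [Field k] {a b : k}

local notation "ι" => algebraMap k[X] (RatFunc k)

theorem separable_shortCubic (hΔ : 4 * a ^ 3 + 27 * b ^ 2 ≠ 0) : (shortCubic a b).Separable := by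
  have hC : (C (4 * a ^ 3 + 27 * b ^ 2)⁻¹ : k[X]) * (4 * C a ^ 3 + 27 * C b ^ 2) = 1 := by
    rw [← C_1, ← inv_mul_cancel₀ hΔ]
    simp only [map_add, map_mul, map_pow, map_ofNat]
  rw [Separable, derivative_shortCubic]
  refine ⟨C (4 * a ^ 3 + 27 * b ^ 2)⁻¹ * (27 * C b - 27 * X ^ 3 - 27 * C a * X),
    C (4 * a ^ 3 + 27 * b ^ 2)⁻¹ * (4 * C a ^ 2 + 15 * C a * X ^ 2 + 9 * X ^ 4), ?_⟩
  rw [shortCubic]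
  linear_combination hC

theorem exists_eq_mul_sq_of_mul_sq_eq {f u v h : k[X]} {n : ℕ} (hf : Squarefree f) (hn : Odd n)
    (hu : u ≠ 0) (huv : f * u ^ 2 = h ^ n * v ^ 2) : ∃ s, h = f * s ^ 2 := by
  obtain ⟨m, rfl⟩ := hn
  have hsq : f * h * u ^ 2 = (h ^ (m + 1) * v) ^ 2 := by
    linear_combination h * huv
  obtain ⟨r, hr⟩ : u ∣ h ^ (m + 1) * v := by
    rw [← IsIntegrallyClosed.pow_dvd_pow_iff two_ne_zero, ← hsq]
    exact dvd_mul_left _ _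
  have hr : f * h = r ^ 2 := by
    rw [hr, mul_pow, mul_comm] at hsq
    exact mul_left_cancel₀ (pow_ne_zero 2 hu) hsq
  obtain ⟨s, rfl⟩ := (hf.dvd_pow_iff_dvd two_ne_zero).1 ⟨h, hr.symm⟩
  exact ⟨s, mul_left_cancel₀ hf.ne_zero (by rw [hr]; ring)⟩

/-- The binary quartic form `v⁴ · c(u / v)`, where `c` is the cubic `X³ + a X + b`. -/
noncomputable def quarticForm (a b : k) (u v : k[X]) : k[X] :=
  v * (u ^ 3 + C a * u * v ^ 2 + C b * v ^ 3)

theorem quarticForm_ne_zero {u v : k[X]} (hb : b ≠ 0) (huv : IsCoprime u v) (hv : v ≠ 0)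
    (hdeg : u.natDegree ≠ 0 ∨ v.natDegree ≠ 0) : quarticForm a b u v ≠ 0 := by
  intro h
  replace h := (mul_eq_zero.1 h).resolve_left hv
  have hv' : IsUnit v := (huv.symm.pow_right (n := 3)).isUnit_of_dvd' dvd_rfl
    ⟨-(C a * u * v + C b * v ^ 2), by linear_combination h⟩
  have hu' : IsUnit u := isUnit_of_dvd_unit
    ((huv.pow_right (n := 3)).dvd_of_dvd_mul_right
      ⟨-(u ^ 2 + C a * v ^ 2), by linear_combination h⟩) (isUnit_C.2 hb.isUnit)
  rcases hdeg with h | h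
  · exact h (natDegree_eq_zero_of_isUnit hu')
  · exact h (natDegree_eq_zero_of_isUnit hv')

theorem natDegree_quarticForm_le {u v : k[X]} (hu : u.natDegree ≤ 1) (hv : v.natDegree ≤ 1) :
    (quarticForm a b u v).natDegree ≤ 4 := by
  rw [quarticForm, show v * (u ^ 3 + C a * u * v ^ 2 + C b * v ^ 3) =
    v * u ^ 3 + C a * u * v ^ 3 + C b * v ^ 4 by ring]
  compute_degree
  lia

theorem eq_X_of_quarticForm_eq (h3 : (3 : k) ≠ 0) (ha : a ≠ 0) (hb : b ≠ 0) {u : k[X]} {c : k}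
    (hu : u.natDegree ≤ 1) (hc : c ≠ 0) (h : quarticForm a b u 1 = C c * shortCubic a b) :
    u = X := by
  obtain ⟨m, n, rfl⟩ := exists_eq_X_add_C_of_natDegree_le_one hu
  have hcoeff : Cubic.toPoly ⟨m ^ 3, 3 * m ^ 2 * n, 3 * m * n ^ 2 + a * m, n ^ 3 + a * n + b⟩ =
      Cubic.toPoly ⟨c, 0, c * a, c * b⟩ := by
    rw [quarticForm, shortCubic] at h
    simp only [Cubic.toPoly, map_add, map_mul, map_pow, map_ofNat, map_zero]
    linear_combination h
  obtain ⟨h₃, h₂, h₁, h₀⟩ := Cubic.mk.inj ((Cubic.toPoly_injective _ _).1 hcoeff)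
  have hm : m ≠ 0 := by
    rintro rfl
    exact hc (h₃.symm.trans (zero_pow three_ne_zero))
  obtain rfl : n = 0 := (mul_eq_zero.1 h₂).resolve_left (mul_ne_zero h3 (pow_ne_zero 2 hm))
  obtain rfl : c = 1 := mul_right_cancel₀ hb (by linear_combination -h₀)
  obtain rfl : m = 1 := mul_left_cancel₀ ha (by linear_combination h₁)
  rw [C_1, C_0, one_mul, add_zero]

variable {p : ℕ} [hp : Fact p.Prime] [CharP k p]

theorem shortCubic_pow_eq_expand (ha : a ^ p = a) (hb : b ^ p = b) :
    shortCubic a b ^ p = expand k p (shortCubic a b) := by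
  rw [← map_frobenius_expand, map_expand, map_shortCubic, frobenius_def, frobenius_def, ha, hb]

theorem exists_pow_eq_expand [PerfectRing k p] (g : k[X]) :
    ∃ h : k[X], h ^ p = expand k p g ∧ h.natDegree = g.natDegree := by
  refine ⟨g.map (frobeniusEquiv k p).symm.toRingHom, ?_,
    natDegree_map_eq_of_injective (RingHom.injective _) g⟩
  rw [← map_frobenius_expand, map_expand, Polynomial.map_map]
  have hid : (frobenius k p).comp (frobeniusEquiv k p).symm.toRingHom = RingHom.id k :=
    RingHom.ext (frobeniusEquiv k p).apply_symm_apply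
  rw [hid, Polynomial.map_id]

variable [PerfectRing k p]

theorem exists_quarticForm_eq (hp2 : p ≠ 2) (hΔ : 4 * a ^ 3 + 27 * b ^ 2 ≠ 0) (ha : a ^ p = a)
    (hb : b ^ p = b) {u v : k[X]} {y : RatFunc k} (hu : u.natDegree ≤ 1) (hv : v.natDegree ≤ 1)
    (hv0 : v ≠ 0) (huv : quarticForm a b u v ≠ 0)
    (hy : ι (shortCubic a b) * y ^ 2 = (ι (expand k p u) / ι (expand k p v)) ^ 3 +
      ι (C a) * (ι (expand k p u) / ι (expand k p v)) + ι (C b)) :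
    ∃ c : k, c ≠ 0 ∧ quarticForm a b u v = C c * shortCubic a b := by
  have hp0 := hp.out.pos
  have hv' : expand k p v ≠ 0 := (expand_ne_zero hp0).2 hv0
  have hιv := RatFunc.algebraMap_ne_zero hv'
  obtain ⟨h, hh, hdeg⟩ := exists_pow_eq_expand (p := p) (quarticForm a b u v)
  obtain ⟨m, n, hn, rfl⟩ := exists_eq_div y
  have hιn := RatFunc.algebraMap_ne_zero hn
  have key : shortCubic a b * (m * expand k p v ^ 2) ^ 2 = h ^ p * n ^ 2 := by
    apply RatFunc.algebraMap_injective k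
    rw [hh, quarticForm]
    simp only [map_mul, map_add, map_pow, expand_C] at hy ⊢
    field_simp at hy
    linear_combination ι (expand k p v) * hy
  have hh0 : h ^ p ≠ 0 := hh.trans_ne ((expand_ne_zero hp0).2 huv)
  have hm : m * expand k p v ^ 2 ≠ 0 := by
    intro hm
    rw [hm, zero_pow two_ne_zero, mul_zero] at key
    exact mul_ne_zero hh0 (pow_ne_zero 2 hn) key.symm
  obtain ⟨s, rfl⟩ := exists_eq_mul_sq_of_mul_sq_eq (separable_shortCubic hΔ).squarefree
    (hp.out.odd_of_ne_two hp2) hm key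
  have hs0 : s ^ 2 ≠ 0 := right_ne_zero_of_mul (ne_zero_pow hp.out.ne_zero hh0)
  have hs : s.natDegree = 0 := by
    have h4 := hdeg.trans_le (natDegree_quarticForm_le hu hv)
    rw [natDegree_mul shortCubic_ne_zero hs0, natDegree_pow, natDegree_shortCubic] at h4
    lia
  obtain ⟨c, rfl⟩ := natDegree_eq_zero.1 hs
  refine ⟨(c ^ 2) ^ p, pow_ne_zero _ ?_, expand_injective hp0 ?_⟩
  · rwa [← C_pow, C_ne_zero] at hs0
  · rw [← hh, mul_pow, shortCubic_pow_eq_expand ha hb, map_mul, expand_C, ← C_pow, ← C_pow,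
      mul_comm]

theorem eq_X_of_isTwistPt_expand (hp2 : p ≠ 2) (h3 : (3 : k) ≠ 0)
    (hΔ : 4 * a ^ 3 + 27 * b ^ 2 ≠ 0) (ha : a ^ p = a) (hb : b ^ p = b) (ha0 : a ≠ 0)
    (hb0 : b ≠ 0) {P : TwistGroup (shortCubic a b) a b} {u : k[X]} {y : RatFunc k}
    (hu : u.natDegree = 1) (hP : IsTwistPt _ _ _ P (ι (expand k p u)) y) : u = X := by
  have hy := IsPt.equation (RatFunc.algebraMap_ne_zero shortCubic_ne_zero) hP
  obtain ⟨c, hc, h⟩ := exists_quarticForm_eq hp2 hΔ ha hb hu.le (natDegree_one.trans_le zero_le_one)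
    one_ne_zero (quarticForm_ne_zero hb0 isCoprime_one_right one_ne_zero (.inl (by simp [hu])))
    (by rwa [map_one, map_one, div_one])
  exact eq_X_of_quarticForm_eq h3 ha0 hb0 hu.le hc h

omit hp [CharP k p] [PerfectRing k p] in
theorem root_of_quarticForm_eq {r d c : k} {v : k[X]} (hv : v.natDegree = 1)
    (h : quarticForm a b (C r * v + C d) v = C c * shortCubic a b) : r ^ 3 + a * r + b = 0 := by
  by_contra hr
  have hexp : C (r ^ 3 + a * r + b) * v ^ 4 = C c * shortCubic a b -
      (C (d * (3 * r ^ 2 + a)) * v ^ 3 + C (3 * r * d ^ 2) * v ^ 2 + C (d ^ 3) * v) := by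
    rw [← h, quarticForm]
    simp only [map_add, map_mul, map_pow, map_ofNat]
    ring
  have h4 := congrArg natDegree hexp
  rw [natDegree_C_mul hr, natDegree_pow, hv] at h4
  have h3 : (C c * shortCubic a b -
      (C (d * (3 * r ^ 2 + a)) * v ^ 3 + C (3 * r * d ^ 2) * v ^ 2 + C (d ^ 3) * v)).natDegree ≤
        3 := by
    rw [shortCubic]
    compute_degree
    lia
  lia

omit hp [CharP k p] [PerfectRing k p] in
theorem exists_two_torsion [IsAlgClosed k] {f : k[X]} (hf : f ≠ 0) (h2 : (2 : k) ≠ 0)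
    (hΔ : 4 * a ^ 3 + 27 * b ^ 2 ≠ 0) [DecidableEq (RatFunc k)] {r : k}
    (hr : r ^ 3 + a * r + b = 0) :
    ∃ T : TwistGroup f a b, IsTwistPt _ _ _ T (ι (C r)) 0 ∧ T + T = 0 ∧ height T = 0 := by
  obtain ⟨T, hT⟩ := exists_isPt (RatFunc.algebraMap_ne_zero hf) (ratFunc_two_ne_zero h2)
    (algebraMap_disc_ne_zero hΔ) (X := ι (C r)) (Y := 0) (by
      have h := congrArg (fun c ↦ ι (C c)) hr
      simp only [map_add, map_mul, map_pow, map_zero] at h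
      rw [h, zero_pow two_ne_zero, mul_zero])
  refine ⟨T, hT, ?_, ?_⟩
  · have hneg := hT.neg
    rw [neg_zero] at hneg
    exact eq_neg_iff_add_eq_zero.1 (hT.ext hneg)
  · have hT' : IsTwistPt _ _ _ T (ι (C r) / ι 1) 0 := by rwa [map_one, div_one]
    simpa using IsTwistPt.height_eq hf hT' isCoprime_one_right one_ne_zero

theorem IsPt.add_two_torsion {K : Type*} [Field K] [DecidableEq K] {f a b : K} (hf : f ≠ 0)
    {P T : (twistCurve f a b).Point} {X Y r : K} (hP : IsPt f a b P X Y) (hT : IsPt f a b T r 0)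
    (hX : X ≠ r) : ∃ Y', IsPt f a b (P + T) (r + (3 * r ^ 2 + a) / (X - r)) Y' := by
  have hXr := sub_ne_zero.2 hX
  refine ⟨_, hP.add hf hT hX (L := Y / (X - r)) (by field_simp; ring) ?_ rfl⟩
  field_simp
  linear_combination hT.equation hf - hP.equation hf

omit hp [CharP k p] [PerfectRing k p] in
theorem IsTwistPt.add_two_torsion [DecidableEq (RatFunc k)] {f : k[X]} (hf : f ≠ 0)
    {P T : TwistGroup f a b} {w : k[X]} {r d : k} {y : RatFunc k} (hw : w ≠ 0) (hd : d ≠ 0)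
    (hP : IsTwistPt f a b P (ι (C r * w + C d) / ι w) y)
    (hT : IsTwistPt f a b T (ι (C r)) 0) :
    ∃ y', IsTwistPt f a b (P + T) (ι (C r + C ((3 * r ^ 2 + a) / d) * w)) y' := by
  have hιd := RatFunc.algebraMap_ne_zero (C_ne_zero.2 hd)
  have hιw := RatFunc.algebraMap_ne_zero hw
  have hx : ι (C r * w + C d) / ι w - ι (C r) = ι (C d) / ι w := by
    simp only [map_add, map_mul]
    field_simp
    ring
  have hx' : ι (C r) + (3 * ι (C r) ^ 2 + ι (C a)) / (ι (C d) / ι w) =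
      ι (C r + C ((3 * r ^ 2 + a) / d) * w) := by
    have hC : ι (C ((3 * r ^ 2 + a) / d)) * ι (C d) = 3 * ι (C r) ^ 2 + ι (C a) := by
      rw [← map_mul, ← C_mul, div_mul_cancel₀ _ hd]
      simp only [map_add, map_mul, map_pow, map_ofNat]
    rw [← hC]
    simp only [map_add, map_mul]
    field_simp
  obtain ⟨y', hPT⟩ := IsPt.add_two_torsion (RatFunc.algebraMap_ne_zero hf) hP hT
    (sub_ne_zero.1 (hx.trans_ne (div_ne_zero hιd hιw)))
  rw [hx, hx'] at hPT
  exact ⟨y', hPT⟩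

omit hp [CharP k p] [PerfectRing k p] in
theorem exists_eq_C_mul_add_C {u v : k[X]} (hu : u.natDegree ≤ 1) (hv : v.natDegree = 1) :
    ∃ r d, u = C r * v + C d := by
  obtain ⟨m, n, rfl⟩ := exists_eq_X_add_C_of_natDegree_le_one hu
  obtain ⟨m', hm', n', rfl⟩ := natDegree_eq_one.1 hv
  refine ⟨m / m', n - m / m' * n', ?_⟩
  simp only [mul_add, ← mul_assoc, ← C_mul, div_mul_cancel₀ _ hm', C_sub]
  ring

section

variable [IsAlgClosed k] [DecidableEq (RatFunc k)] (hp3 : 3 < p)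
  (hΔ : 4 * a ^ 3 + 27 * b ^ 2 ≠ 0) (ha : a ^ p = a) (hb : b ^ p = b) (ha0 : a ≠ 0) (hb0 : b ≠ 0)
  {P : TwistGroup (shortCubic a b) a b}
include hp3 hΔ ha hb ha0 hb0

theorem exists_add_isTwistPt_of_natDegree_eq_one {u v : k[X]} {y : RatFunc k}
    (huv : IsCoprime u v) (hu : u.natDegree ≤ 1) (hv : v.natDegree = 1)
    (hP : IsTwistPt _ _ _ P (ι (expand k p u) / ι (expand k p v)) y) :
    ∃ T : TwistGroup (shortCubic a b) a b, T + T = 0 ∧ height T = 0 ∧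
      ∃ y', IsTwistPt _ _ _ (P + T) (ι (X ^ p)) y' := by
  have h2 : (2 : k) ≠ 0 := natCast_ne_zero_of_lt k two_ne_zero (by lia : 2 < p)
  have h3 : (3 : k) ≠ 0 := natCast_ne_zero_of_lt k three_ne_zero hp3
  have hf := RatFunc.algebraMap_ne_zero (shortCubic_ne_zero (a := a) (b := b))
  have hv1 : v.natDegree ≠ 0 := hv.trans_ne one_ne_zero
  have hv0 : v ≠ 0 := ne_zero_of_natDegree_gt (Nat.pos_of_ne_zero hv1)
  obtain ⟨c, -, h⟩ := exists_quarticForm_eq (by lia) hΔ ha hb hu hv.le hv0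
    (quarticForm_ne_zero hb0 huv hv0 (.inr hv1)) (IsPt.equation hf hP)
  obtain ⟨r, d, rfl⟩ := exists_eq_C_mul_add_C hu hv
  have hr := root_of_quarticForm_eq hv h
  have hd : d ≠ 0 := by
    rintro rfl
    rw [C_0, add_zero] at huv
    exact hv1 (natDegree_eq_zero_of_isUnit (huv.isUnit_of_dvd' (dvd_mul_left _ _) dvd_rfl))
  obtain ⟨T, hT, hTT, hT0⟩ := exists_two_torsion shortCubic_ne_zero h2 hΔ hr
  have hexpand (r d : k) (v : k[X]) :
      C r * expand k p v + C d = expand k p (C r * v + C d) := by simp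
  rw [← hexpand] at hP
  obtain ⟨y', hPT⟩ := IsTwistPt.add_two_torsion shortCubic_ne_zero
    ((expand_ne_zero hp.out.pos).2 hv0) hd hP hT
  rw [add_comm (C r), hexpand] at hPT
  have hX := eq_X_of_isTwistPt_expand (by lia) h3 hΔ ha hb ha0 hb0 (by
    rw [natDegree_add_C, natDegree_C_mul (div_ne_zero (three_mul_sq_add_ne_zero hΔ hr) hd), hv])
    hPT
  rw [hX, expand_X] at hPT
  exact ⟨T, hTT, hT0, y', hPT⟩

theorem exists_add_isTwistPt_of_hasMultiplier_zero (hP : HasMultiplier P 0) (hPp : height P = p) :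
    ∃ T : TwistGroup (shortCubic a b) a b, T + T = 0 ∧ height T = 0 ∧
      ∃ y, IsTwistPt _ _ _ (P + T) (ι (X ^ p)) y := by
  have hp0 := hp.out.pos
  have hP0 : P ≠ 0 := by
    rintro rfl
    rw [height_zero] at hPp
    exact hp0.ne hPp
  obtain ⟨u, v, y, huv, hv0, hy, hmax⟩ := hP.exists_expand (p := p) shortCubic_ne_zero hP0
  replace hmax : max u.natDegree v.natDegree = 1 :=
    Nat.eq_of_mul_eq_mul_right hp0 (by rw [← hmax, hPp, one_mul])
  rcases Nat.eq_zero_or_pos v.natDegree with hv | hv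
  · obtain ⟨e, rfl⟩ := natDegree_eq_zero.1 hv
    have he := C_ne_zero.1 hv0
    have hx : ι (expand k p u) / ι (expand k p (C e)) = ι (expand k p (C e⁻¹ * u)) := by
      rw [div_eq_iff (RatFunc.algebraMap_ne_zero ((expand_ne_zero hp0).2 hv0)), ← map_mul,
        ← map_mul, mul_right_comm, ← C_mul, inv_mul_cancel₀ he, C_1, one_mul]
    rw [hx] at hy
    have h3 : (3 : k) ≠ 0 := natCast_ne_zero_of_lt k three_ne_zero hp3
    have hX := eq_X_of_isTwistPt_expand (by lia) h3 hΔ ha hb ha0 hb0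
      (by rw [natDegree_C_mul (inv_ne_zero he)]; lia) hy
    rw [hX, expand_X] at hy
    exact ⟨0, add_zero 0, height_zero, y, by rwa [add_zero]⟩
  · exact exists_add_isTwistPt_of_natDegree_eq_one hp3 hΔ ha hb ha0 hb0 huv (by lia) (by lia) hy

end

end Rigidity

section LevelPoly

open Polynomial

variable {F k α : Type*} [Field F] [Fintype F] [Field k] [DecidableEq α] (c : F →+* k) (w : F → α)
  (e : α)

/-- The monic separable polynomial over `k` whose roots are the elements of `F` at which `w` takes
the value `e`. -/
noncomputable def levelPoly : k[X] := ∏ a with w a = e, (X - C (c a))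

theorem natDegree_levelPoly : (levelPoly c w e).natDegree = #{a | w a = e} :=
  natDegree_finsetProd_X_sub_C_eq_card _ _

theorem levelPoly_ne_zero : levelPoly c w e ≠ 0 :=
  (monic_prod_of_monic _ _ fun a _ ↦ monic_X_sub_C (c a)).ne_zero

variable {c w e}

theorem levelPoly_dvd {g : k[X]} (h : ∀ a, w a = e → g.eval (c a) = 0) : levelPoly c w e ∣ g :=
  prod_dvd_of_coprime ((pairwise_coprime_X_sub_C c.injective).set_pairwise _)
    fun a ha ↦ dvd_iff_isRoot.2 (h a (mem_filter_univ a |>.1 ha))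

theorem isCoprime_levelPoly {g : k[X]} (h : ∀ a, w a = e → g.eval (c a) ≠ 0) :
    IsCoprime g (levelPoly c w e) :=
  IsCoprime.prod_right fun a ha ↦ isCoprime_X_sub_C (h a (mem_filter_univ a |>.1 ha))

variable (c) in
theorem prod_X_sub_C_eq_X_pow_card_sub_X :
    ∏ a : F, (X - C (c a)) = X ^ Fintype.card F - X := by
  have h : ∏ a : F, (X - C a) = X ^ Fintype.card F - X := by
    have hroots := FiniteField.roots_X_pow_card_sub_X F
    have hprod := prod_multiset_X_sub_C_of_monic_of_roots_card_eq
      (monic_X_pow_sub (n := Fintype.card F) (p := (X : F[X]))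
        (by rw [degree_X]; exact_mod_cast Fintype.one_lt_card))
      (by rw [hroots, FiniteField.X_pow_card_sub_X_natDegree_eq F Fintype.one_lt_card]; rfl)
    rwa [hroots] at hprod
  simpa only [Polynomial.map_sub, Polynomial.map_pow, map_X, Polynomial.map_prod, map_C] using
    congrArg (Polynomial.map c) h

section Sign

variable {w : F → ℤ} (hw : ∀ a, w a ∈ ({0, -1, 1} : Finset ℤ))
include hw

variable (c) in
theorem levelPoly_mul_levelPoly_mul_levelPoly :
    levelPoly c w 0 * levelPoly c w (-1) * levelPoly c w 1 = X ^ Fintype.card F - X := by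
  rw [← prod_X_sub_C_eq_X_pow_card_sub_X c,
    ← prod_fiberwise_of_maps_to (fun a _ ↦ hw a), prod_insert (by decide),
    prod_pair (by decide), mul_assoc]
  rfl

omit [Field F] in
theorem sum_eq_card_sub_card :
    ∑ a, w a = #{a | w a = 1} - #{a | w a = -1} := by
  rw [← sum_fiberwise_of_maps_to' (fun a _ ↦ hw a) (fun e ↦ e),
    sum_insert (by decide), sum_pair (by decide)]
  simp only [sum_const]
  grind

omit [Field F] in
theorem card_add_card_add_card :
    #{a | w a = 0} + #{a | w a = -1} + #{a | w a = 1} = Fintype.card F := by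
  rw [← card_univ, card_eq_sum_card_fiberwise (s := univ) (fun a _ ↦ hw a),
    sum_insert (by decide), sum_pair (by decide), add_assoc]

end Sign

end LevelPoly

section PointCount

open Polynomial

section CubicChar

variable {p : ℕ} [Fact p.Prime]

/-- The quadratic character of `r³ + A r + B`: the curve `Y² = X³ + A X + B` over `𝔽_p` has
`1 + cubicChar A B r` affine points with first coordinate `r`. -/
def cubicChar (A B r : ZMod p) : ℤ := quadraticChar (ZMod p) (r ^ 3 + A * r + B)

theorem cubicChar_mem (A B r : ZMod p) : cubicChar A B r ∈ ({0, -1, 1} : Finset ℤ) := by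
  rcases quadraticChar_isQuadratic (ZMod p) (r ^ 3 + A * r + B) with h | h | h <;>
    simp [cubicChar, h]

theorem intCast_cubicChar (h2 : p ≠ 2) (A B r : ZMod p) :
    (cubicChar A B r : ZMod p) = (r ^ 3 + A * r + B) ^ ((p - 1) / 2) := by
  rw [cubicChar, quadraticChar_eq_pow_of_char_ne_two' (by rwa [ZMod.ringChar_zmod_n]), ZMod.card,
    show (p - 1) / 2 = p / 2 by
      have := (Fact.out : p.Prime).eq_two_or_odd
      lia]

variable {k : Type*} [Field k] (c : ZMod p →+* k) {A B r : ZMod p}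

theorem eval_shortCubic_map : (shortCubic (c A) (c B)).eval (c r) = c (r ^ 3 + A * r + B) := by
  rw [eval_shortCubic, map_add, map_add, map_mul, map_pow]

theorem eval_shortCubic_pow (h2 : p ≠ 2) :
    (shortCubic (c A) (c B) ^ ((p - 1) / 2)).eval (c r) = cubicChar A B r := by
  rw [eval_pow, eval_shortCubic_map, ← map_pow, ← intCast_cubicChar h2, map_intCast]

theorem eval_shortCubic_eq_zero_iff :
    (shortCubic (c A) (c B)).eval (c r) = 0 ↔ cubicChar A B r = 0 := by
  rw [eval_shortCubic_map, map_eq_zero, cubicChar, quadraticChar_eq_zero_iff]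

end CubicChar

variable {k : Type*} [Field k] {p : ℕ} [hp : Fact p.Prime] [CharP k p]

local notation "ι" => algebraMap k[X] (RatFunc k)

omit [CharP k p] hp in
theorem exists_isTwistPt_sub [DecidableEq (RatFunc k)] {f f₁ q g Z₀ Z₁ Z₂ : k[X]}
    {a b : k} {Q I : TwistGroup f a b} (hf : f ≠ 0) (hf₁ : f = Z₀ * f₁)
    (hq : g + 1 = Z₁ * q) (hZ0 : Z₀ * Z₁ * Z₂ ≠ 0) (hZ : Z₀ * Z₁ * Z₂ = X ^ p - X)
    (hQ : IsTwistPt _ _ _ Q (ι (X ^ p)) (ι g)) (hI : IsTwistPt _ _ _ I (ι X) 1) :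
    ∃ y, IsTwistPt _ _ _ (Q - I)
      (ι (f₁ * q ^ 2 - (X + X ^ p) * (Z₀ * Z₂ ^ 2)) / ι (Z₀ * Z₂ ^ 2)) y := by
  have hne : ι (X ^ p) - ι X ≠ 0 := by
    rw [← map_sub, ← hZ]
    exact RatFunc.algebraMap_ne_zero hZ0
  obtain ⟨⟨hZ₀, hZ₁⟩, hZ₂⟩ := by simpa only [mul_ne_zero_iff] using hZ0
  have hsum := IsPt.add (RatFunc.algebraMap_ne_zero hf) hQ hI.neg (sub_ne_zero.1 hne)
    (L := (ι g + 1) / (ι (X ^ p) - ι X)) (by field_simp; ring) rfl rfl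
  rw [← sub_eq_add_neg] at hsum
  suffices hX : ι (f₁ * q ^ 2 - (X + X ^ p) * (Z₀ * Z₂ ^ 2)) / ι (Z₀ * Z₂ ^ 2) =
      ι f * ((ι g + 1) / (ι (X ^ p) - ι X)) ^ 2 - ι (X ^ p) - ι X by
    rw [hX]
    exact ⟨_, hsum⟩
  have hιZ₀ := RatFunc.algebraMap_ne_zero hZ₀
  have hιZ₁ := RatFunc.algebraMap_ne_zero hZ₁
  have hιZ₂ := RatFunc.algebraMap_ne_zero hZ₂
  rw [← map_sub, ← hZ, ← map_one ι, ← map_add, hq, hf₁]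
  simp only [map_sub, map_mul, map_add, map_pow]
  field_simp
  ring

section

variable (h2 : p ≠ 2) {a b : k} (ha : a ^ p = a) (hb : b ^ p = b)
include h2 ha hb

theorem shortCubic_mul_pow_sq :
    shortCubic a b * (shortCubic a b ^ ((p - 1) / 2)) ^ 2 = (X ^ p) ^ 3 + C a * X ^ p + C b := by
  have hp2 := hp.out.eq_two_or_odd
  rw [← pow_mul, ← pow_succ', show (p - 1) / 2 * 2 + 1 = p by lia, shortCubic_pow_eq_expand ha hb,
    shortCubic]
  simp only [map_add, map_mul, map_pow, expand_X, expand_C]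

theorem natDegree_shortCubic_mul_sq_sub :
    (shortCubic a b * (shortCubic a b ^ ((p - 1) / 2) + 1) ^ 2 -
      (X + X ^ p) * (X ^ p - X) ^ 2).natDegree = 2 * p + 1 := by
  have hp1 := hp.out.one_lt
  have hp2 := hp.out.eq_two_or_odd
  set f := shortCubic a b
  set m := (p - 1) / 2
  have hf3 : f.natDegree = 3 := natDegree_shortCubic
  have hexpand : f * (f ^ m + 1) ^ 2 - (X + X ^ p) * (X ^ p - X) ^ 2 = X ^ (2 * p + 1) +
      (X ^ (p + 2) - X ^ 3 + C a * X ^ p + C b + C 2 * f ^ (m + 1) + f) := by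
    rw [C_ofNat]
    linear_combination shortCubic_mul_pow_sq h2 ha hb
  have hfm : (f ^ (m + 1)).natDegree ≤ 2 * p := by
    rw [natDegree_pow, hf3]
    lia
  have hrest : (X ^ (p + 2) - X ^ 3 + C a * X ^ p + C b + C 2 * f ^ (m + 1) + f).natDegree ≤
      2 * p := by
    refine natDegree_add_le_of_degree_le (natDegree_add_le_of_degree_le ?_
      ((natDegree_C_mul_le _ _).trans hfm)) (by lia)
    compute_degree
    lia
  rw [hexpand, natDegree_add_eq_left_of_natDegree_lt, natDegree_X_pow]
  rw [natDegree_X_pow]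
  lia

end

theorem isCoprime_mul_sq_sub_mul {R : Type*} [CommRing R] {u q s z : R} (hu : IsCoprime u z)
    (hq : IsCoprime q z) : IsCoprime (u * q ^ 2 - s * z) z := by
  simpa only [sub_eq_add_neg, ← neg_mul] using (hu.mul_left hq.pow_left).add_mul_right_left _

section Frobenius

variable [DecidableEq (RatFunc k)] (h2 : p ≠ 2) (c : ZMod p →+* k) {A B : ZMod p}
  (hΔ : 4 * (c A) ^ 3 + 27 * (c B) ^ 2 ≠ 0)
  {Q I : TwistGroup (shortCubic (c A) (c B)) (c A) (c B)}
include h2 hΔ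

theorem exists_isTwistPt_frobenius_sub_id
    (hQ : IsTwistPt _ _ _ Q (ι (X ^ p)) (ι (shortCubic (c A) (c B) ^ ((p - 1) / 2))))
    (hI : IsTwistPt _ _ _ I (ι X) 1) :
    ∃ N Y, IsCoprime N (levelPoly c (cubicChar A B) 0 * levelPoly c (cubicChar A B) 1 ^ 2) ∧
      IsTwistPt _ _ _ (Q - I)
        (ι N / ι (levelPoly c (cubicChar A B) 0 * levelPoly c (cubicChar A B) 1 ^ 2)) Y ∧
      (levelPoly c (cubicChar A B) 0 * levelPoly c (cubicChar A B) (-1) ^ 2 * N).natDegree =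
        2 * p + 1 := by
  have hfix (r : ZMod p) : c r ^ p = c r := by rw [← map_pow, ZMod.pow_card]
  have hk2 : (2 : k) ≠ 0 := Ring.two_ne_zero (by rwa [ringChar.eq k p])
  have hdeg := natDegree_shortCubic_mul_sq_sub h2 (hfix A) (hfix B)
  set f := shortCubic (c A) (c B)
  set g := f ^ ((p - 1) / 2)
  set Z := levelPoly c (cubicChar A B)
  have hZ : Z 0 * Z (-1) * Z 1 = X ^ p - X := by
    rw [levelPoly_mul_levelPoly_mul_levelPoly c (cubicChar_mem A B), ZMod.card]
  have hgv (r : ZMod p) : g.eval (c r) = cubicChar A B r := eval_shortCubic_pow c h2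
  obtain ⟨f₁, hf₁⟩ : Z 0 ∣ f := levelPoly_dvd fun _ ↦ (eval_shortCubic_eq_zero_iff c).2
  obtain ⟨q, hq⟩ : Z (-1) ∣ g + 1 := levelPoly_dvd fun r hr ↦ by
    rw [eval_add, hgv, hr, eval_one, Int.cast_neg, Int.cast_one, neg_add_cancel]
  have hf₁Z₀ : IsCoprime f₁ (Z 0) := (Separable.isCoprime (hf₁ ▸ separable_shortCubic hΔ)).symm
  have hf₁Z₁ : IsCoprime f₁ (Z 1) := isCoprime_levelPoly fun r hr hr' ↦ by
    have := (eval_shortCubic_eq_zero_iff c).1 (show f.eval (c r) = 0 by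
      rw [hf₁, eval_mul, hr', mul_zero])
    lia
  have hqZ {e : ℤ} (he : (e : k) + 1 ≠ 0) : IsCoprime q (Z e) := isCoprime_levelPoly fun r hr hr' ↦
    he (by rw [← hr, ← hgv, ← eval_one (x := c r), ← eval_add, hq, eval_mul, hr', mul_zero])
  have hcop : IsCoprime (f₁ * q ^ 2 - (X + X ^ p) * (Z 0 * Z 1 ^ 2)) (Z 0 * Z 1 ^ 2) :=
    isCoprime_mul_sq_sub_mul (hf₁Z₀.mul_right hf₁Z₁.pow_right)
      ((hqZ (by simp)).mul_right (hqZ (by norm_num [hk2])).pow_right)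
  have hZ0 (e : ℤ) : Z e ≠ 0 := levelPoly_ne_zero _ _ _
  obtain ⟨Y, hY⟩ := exists_isTwistPt_sub shortCubic_ne_zero hf₁ hq
    (mul_ne_zero (mul_ne_zero (hZ0 0) (hZ0 (-1))) (hZ0 1)) hZ hQ hI
  refine ⟨_, Y, hcop, hY, ?_⟩
  rw [← hdeg, hq, ← hZ]
  congr 1
  linear_combination -(Z (-1) ^ 2 * q ^ 2) * hf₁

/-- The height of `F - I`, for `F` the Frobenius and `I` the identity of the curve, is its number of
points over `𝔽_p`. -/
theorem height_frobenius_sub_id [IsAlgClosed k]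
    (hQ : IsTwistPt _ _ _ Q (ι (X ^ p)) (ι (shortCubic (c A) (c B) ^ ((p - 1) / 2))))
    (hI : IsTwistPt _ _ _ I (ι X) 1) :
    (height (Q - I) : ℤ) = p + 1 + ∑ r, cubicChar A B r := by
  obtain ⟨N, Y, hcop, hY, hdeg⟩ := exists_isTwistPt_frobenius_sub_id h2 c hΔ hQ hI
  set Z := levelPoly c (cubicChar A B)
  have hZ0 (e : ℤ) : Z e ≠ 0 := levelPoly_ne_zero _ _ _
  have hN : N ≠ 0 := by
    rintro rfl
    rw [mul_zero, natDegree_zero] at hdeg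
    lia
  have hcard := card_add_card_add_card (cubicChar_mem A B)
  rw [ZMod.card] at hcard
  rw [natDegree_mul (mul_ne_zero (hZ0 _) (pow_ne_zero _ (hZ0 _))) hN, natDegree_mul (hZ0 _)
    (pow_ne_zero _ (hZ0 _)), natDegree_pow, natDegree_levelPoly, natDegree_levelPoly] at hdeg
  rw [IsTwistPt.height_eq shortCubic_ne_zero hY hcop (mul_ne_zero (hZ0 _) (pow_ne_zero _ (hZ0 _))),
    natDegree_mul (hZ0 _) (pow_ne_zero _ (hZ0 _)), natDegree_pow, natDegree_levelPoly,
    natDegree_levelPoly, sum_eq_card_sub_card (cubicChar_mem A B)]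
  lia

end Frobenius

end PointCount

section PowerSums

open Polynomial

variable {F : Type*} [Field F] [Fintype F]

theorem sum_pow_eq_ite {i : ℕ} (hi : i < 2 * (Fintype.card F - 1)) :
    ∑ a : F, a ^ i = if i = Fintype.card F - 1 then -1 else 0 := by
  classical
  have hF := Fintype.one_lt_card (α := F)
  rcases lt_trichotomy i (Fintype.card F - 1) with h | rfl | h
  · rw [FiniteField.sum_pow_lt_card_sub_one F i h, if_neg h.ne]
  · have hpow (a : F) : a ^ (Fintype.card F - 1) = 1 - if a = 0 then 1 else 0 := by
      split_ifs with ha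
      · rw [ha, zero_pow (by lia), sub_self]
      · rw [FiniteField.pow_card_sub_one_eq_one a ha, sub_zero]
    simp only [hpow, sum_sub_distrib, sum_const, card_univ, nsmul_one,
      FiniteField.cast_card_eq_zero, sum_ite_eq', mem_univ, if_true, zero_sub]
  · rw [if_neg h.ne', ← FiniteField.sum_pow_lt_card_sub_one F (i - (Fintype.card F - 1)) (by lia)]
    refine sum_congr rfl fun a _ ↦ ?_
    rw [show i = Fintype.card F + (i - Fintype.card F) by lia, pow_add, FiniteField.pow_card,
      ← pow_succ']
    congr 1
    lia

theorem sum_eval_eq_neg_coeff {g : F[X]} (hg : g.natDegree < 2 * (Fintype.card F - 1)) :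
    ∑ a, g.eval a = -g.coeff (Fintype.card F - 1) := by
  simp_rw [eval_eq_sum_range' hg]
  rw [sum_comm, sum_congr rfl fun i hi ↦ by rw [← mul_sum, sum_pow_eq_ite (mem_range.1 hi)]]
  simp only [mul_ite, mul_neg, mul_one, mul_zero, sum_ite_eq', mem_range]
  rw [if_pos (by have := Fintype.one_lt_card (α := F); lia)]

end PowerSums

section HasseInvariant

open Polynomial

variable {p : ℕ} [hp : Fact p.Prime]

theorem sum_cubicChar_eq_neg_hasseInvariant (h2 : p ≠ 2) (A B : ZMod p) :
    ((∑ r, cubicChar A B r : ℤ) : ZMod p) = -hasseInvariant p A B := by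
  have hp1 := hp.out.one_lt
  have hdeg : (shortCubic A B ^ ((p - 1) / 2)).natDegree < 2 * (Fintype.card (ZMod p) - 1) := by
    rw [natDegree_pow, natDegree_shortCubic, ZMod.card]
    lia
  have hsum := sum_eval_eq_neg_coeff hdeg
  rw [ZMod.card] at hsum
  rw [hasseInvariant, ← hsum, Int.cast_sum]
  exact sum_congr rfl fun r _ ↦ by rw [intCast_cubicChar h2, eval_pow, eval_shortCubic]

theorem map_hasseInvariant {R S : Type*} [CommRing R] [CommRing S] (c : R →+* S) (n : ℕ) (a b : R) :
    c (hasseInvariant n a b) = hasseInvariant n (c a) (c b) := by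
  rw [hasseInvariant, hasseInvariant, ← map_shortCubic, ← Polynomial.map_pow, coeff_map]

theorem map_cmA {R S : Type*} [CommRing R] [CommRing S] (c : R →+* S) (φ : R) :
    c (cmA φ) = cmA (c φ) := by
  simp only [cmA, map_sub, map_mul, map_ofNat]

theorem map_cmB {R S : Type*} [CommRing R] [CommRing S] (c : R →+* S) (φ : R) :
    c (cmB φ) = cmB (c φ) := by
  simp only [cmB, map_sub, map_mul, map_ofNat]

variable {k : Type*} [Field k]

local notation "ι" => algebraMap k[X] (RatFunc k)

theorem height_add_of_two_torsion [IsAlgClosed k] [DecidableEq (RatFunc k)] {f : k[X]} {a b : k}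
    (hf : f ≠ 0) (h2 : (2 : k) ≠ 0) (hΔ : 4 * a ^ 3 + 27 * b ^ 2 ≠ 0) (P : TwistGroup f a b)
    {T : TwistGroup f a b} (hT : T + T = 0) (hT0 : height T = 0) : height (P + T) = height P := by
  have h := height_add_add_height_sub hf h2 hΔ P T
  rw [sub_eq_add_neg, neg_eq_of_add_eq_zero_left hT, hT0] at h
  lia

theorem exists_sq_eq_neg_sub_one (k : Type*) [Field k] [IsAlgClosed k] :
    ∃ ω : k, ω ^ 2 = -ω - 1 := by
  obtain ⟨ω, hω⟩ := IsAlgClosed.exists_root (X ^ 2 + X + 1 : k[X])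
    (by rw [show (X ^ 2 + X + 1 : k[X]).degree = 2 by compute_degree!]; norm_num)
  rw [IsRoot.def, eval_add, eval_add, eval_pow, eval_X, eval_one] at hω
  exact ⟨ω, by linear_combination hω⟩

section

variable {φ : k} (hφ : φ ^ 2 = φ + 1) (h11 : (11 : k) ≠ 0)
include hφ h11

theorem cmA_ne_zero (h3 : (3 : k) ≠ 0) (h5 : (5 : k) ≠ 0) : cmA φ ≠ 0 := by
  intro h
  have hφ0 : 3 * (8 * φ - 9) = 0 := by
    rw [cmA] at h
    linear_combination h
  refine mul_ne_zero h5 h11 ?_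
  linear_combination -64 * hφ + (8 * φ + 1) * (mul_eq_zero.1 hφ0).resolve_left h3

theorem cmB_ne_zero (h2 : (2 : k) ≠ 0) (h7 : (7 : k) ≠ 0) : cmB φ ≠ 0 := by
  intro h
  have hφ0 : 2 * 7 * (5 - 4 * φ) = 0 := by
    rw [cmB] at h
    linear_combination h
  refine h11 ?_
  linear_combination
    -16 * hφ - (4 * φ + 1) * (mul_eq_zero.1 hφ0).resolve_left (mul_ne_zero h2 h7)

end

theorem eq_or_eq_neg_of_isTwistPt_X_pow [CharP k p] (h2 : p ≠ 2) {a b : k} (ha : a ^ p = a)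
    (hb : b ^ p = b) {P : TwistGroup (shortCubic a b) a b} {y : RatFunc k}
    (hP : IsTwistPt _ _ _ P (ι (X ^ p)) y) :
    y = ι (shortCubic a b ^ ((p - 1) / 2)) ∨ y = -ι (shortCubic a b ^ ((p - 1) / 2)) := by
  have hf := RatFunc.algebraMap_ne_zero (shortCubic_ne_zero (a := a) (b := b))
  refine sq_eq_sq_iff_eq_or_eq_neg.1 (mul_left_cancel₀ hf ?_)
  have h := congrArg ι (shortCubic_mul_pow_sq h2 ha hb)
  simp only [map_add, map_mul, map_pow] at h ⊢
  rw [h, IsPt.equation hf hP, map_pow]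

theorem sum_cubicChar_eq_or_eq_neg [IsAlgClosed k] [DecidableEq (RatFunc k)] (hp3 : 3 < p)
    (c : ZMod p →+* k) {A B : ZMod p} {a b : k} (hA : c A = a) (hB : c B = b) (ha0 : a ≠ 0)
    (hb0 : b ≠ 0) (hΔ : 4 * a ^ 3 + 27 * b ^ 2 ≠ 0) {I α : TwistGroup (shortCubic a b) a b}
    (hI : IsTwistPt _ _ _ I (ι X) 1) (hα : HasMultiplier α 0) (hαp : height α = p) {t : ℤ}
    (hplus : (height (α + I) : ℤ) = p + 1 + t) (hminus : (height (α - I) : ℤ) = p + 1 - t) :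
    ∑ r, cubicChar A B r = t ∨ ∑ r, cubicChar A B r = -t := by
  subst hA hB
  have := charP_of_injective_ringHom c.injective p
  have hfix (r : ZMod p) : c r ^ p = c r := by rw [← map_pow, ZMod.pow_card]
  have h2 : (2 : k) ≠ 0 := Ring.two_ne_zero (by rw [ringChar.eq k p]; lia)
  have hf := shortCubic_ne_zero (a := c A) (b := c B)
  obtain ⟨T, hT, hT0, y, hy⟩ := exists_add_isTwistPt_of_hasMultiplier_zero hp3 hΔ
    (hfix A) (hfix B) ha0 hb0 hα hαp
  rcases eq_or_eq_neg_of_isTwistPt_X_pow (by lia) (hfix A) (hfix B) hy with rfl | rfl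
  · right
    have hcount := height_frobenius_sub_id (by lia) c hΔ hy hI
    rw [show α + T - I = α - I + T by abel, height_add_of_two_torsion hf h2 hΔ _ hT hT0,
      hminus] at hcount
    lia
  · left
    have hneg := hy.neg
    rw [neg_neg] at hneg
    have hcount := height_frobenius_sub_id (by lia) c hΔ hneg hI
    rw [show -(α + T) - I = -(α + I + T) by abel, height_neg,
      height_add_of_two_torsion hf h2 hΔ _ hT hT0, hplus] at hcount
    lia

variable {φ : ZMod p} (hp11 : 11 ≤ p) (hφ : φ ^ 2 = φ + 1)
include hp11 hφ

theorem sum_cubicChar_cm {x y : ℤ} (hp' : p ≠ 11) (hxy : (p : ℤ) = x ^ 2 + 15 * y ^ 2) :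
    ∑ r, cubicChar (cmA φ) (cmB φ) r = 2 * x ∨ ∑ r, cubicChar (cmA φ) (cmB φ) r = -(2 * x) := by
  classical
  let k := AlgebraicClosure (ZMod p)
  let c := algebraMap (ZMod p) k
  have hne {n : ℕ} (h0 : n ≠ 0) (hn : n < 12) : (n : k) ≠ 0 := natCast_ne_zero_of_lt k h0 (by lia)
  have h2 : (2 : k) ≠ 0 := hne two_ne_zero (by norm_num)
  have h3 : (3 : k) ≠ 0 := hne three_ne_zero (by norm_num)
  have h11 : (11 : k) ≠ 0 := hne (n := 11) (by norm_num) (by norm_num)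
  have hφ' : c φ ^ 2 = c φ + 1 := by rw [← map_pow, hφ, map_add, map_one]
  have hA := cmA_ne_zero hφ' h11 h3 (hne (n := 5) (by norm_num) (by norm_num))
  have hB := cmB_ne_zero hφ' h11 h2 (hne (n := 7) (by norm_num) (by norm_num))
  obtain ⟨ω, hω⟩ := exists_sq_eq_neg_sub_one k
  obtain ⟨I, α, hI, hα, hαp, hplus, hminus⟩ := exists_height_eq_of_eq_sq_add hp11 hφ' hω hxy
  exact sum_cubicChar_eq_or_eq_neg (by lia) c (map_cmA c φ) (map_cmB c φ) hA hB
    (cm_disc_ne_zero h2 h3 hφ') hI hα hαp hplus hminus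

theorem hasseInvariant_cm_sq {x y : ℤ} (hp' : p ≠ 11) (hxy : (p : ℤ) = x ^ 2 + 15 * y ^ 2) :
    hasseInvariant p (cmA φ) (cmB φ) ^ 2 = ((4 * x ^ 2 : ℤ) : ZMod p) := by
  rw [← neg_sq, ← sum_cubicChar_eq_neg_hasseInvariant (by lia)]
  rcases sum_cubicChar_cm hp11 hφ hp' hxy with h | h <;>
  · rw [h]
    push_cast
    ring

omit hp11 hφ in
theorem cmMult_pow_ne [CharP k p] (hp3 : p % 3 = 2) {φ ω : k} (h3 : (3 : k) ≠ 0)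
    (h5 : (5 : k) ≠ 0) (hφ : φ ^ 2 = φ + 1) (hω : ω ^ 2 = -ω - 1) (hφp : φ ^ p = φ) :
    cmMult φ ω ^ p ≠ cmMult φ ω := by
  intro h
  have hfrob : cmMult φ ω ^ p = cmMult φ (ω ^ p) := by
    rw [← frobenius_def, cmMult, map_add, map_mul, map_sub, map_sub, map_mul, map_one, map_ofNat,
      frobenius_def, frobenius_def, hφp, cmMult]
  have hωp : ω ^ p = ω ^ 2 := by
    have hω3 : ω ^ 3 = 1 := by linear_combination (ω - 1) * hω
    rw [← Nat.div_add_mod p 3, hp3, pow_add, pow_mul, hω3, one_pow, one_mul]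
  have hmul : (1 - 2 * φ) * (2 * ω + 1) = 0 := by
    rw [hfrob, hωp, cmMult, cmMult] at h
    linear_combination -h + (1 - 2 * φ) * hω
  rcases mul_eq_zero.1 hmul with h0 | h0
  · exact h5 (by linear_combination (1 - 2 * φ) * h0 - 4 * hφ)
  · exact h3 (by linear_combination 4 * hω - (2 * ω + 1) * h0)

theorem hasseInvariant_cm_eq_zero (hp3 : p % 3 = 2) :
    hasseInvariant p (cmA φ) (cmB φ) = 0 := by
  classical
  let k := AlgebraicClosure (ZMod p)
  let c := algebraMap (ZMod p) k
  have hne {n : ℕ} (h0 : n ≠ 0) (hn : n < 11) : (n : k) ≠ 0 := natCast_ne_zero_of_lt k h0 (by lia)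
  have h2 : (2 : k) ≠ 0 := hne two_ne_zero (by norm_num)
  have h3 : (3 : k) ≠ 0 := hne three_ne_zero (by norm_num)
  have h5 : (5 : k) ≠ 0 := hne (n := 5) (by norm_num) (by norm_num)
  have hφ' : c φ ^ 2 = c φ + 1 := by rw [← map_pow, hφ, map_add, map_one]
  have hφp : c φ ^ p = c φ := by rw [← map_pow, ZMod.pow_card]
  obtain ⟨ω, hω⟩ := exists_sq_eq_neg_sub_one k
  obtain ⟨R, -, hR⟩ := exists_isogeny hφ' hω h2 h3
  have hcartier := hR.pow_mul_hasseInvariant (by lia) (cm_disc_ne_zero h2 h3 hφ')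
  have hzero := (mul_eq_mul_right_iff.1 hcartier).resolve_left
    (cmMult_pow_ne hp3 h3 h5 hφ' hω hφp)
  rw [← map_cmA, ← map_cmB, ← map_hasseInvariant] at hzero
  exact (map_eq_zero c).1 hzero

end HasseInvariant

section Domb

/-- The Domb recurrence, the three-term recurrence which together with two initial values
characterises the numbers `A n`. -/
def IsDombRecurrence (a : ℕ → ℚ) : Prop :=
  ∀ n : ℕ, (n + 2) ^ 3 * a (n + 2) =
    2 * (2 * n + 3) * (5 * n ^ 2 + 15 * n + 12) * a (n + 1) - 64 * (n + 1) ^ 3 * a n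

theorem IsDombRecurrence.ext {a b : ℕ → ℚ} (ha : IsDombRecurrence a) (hb : IsDombRecurrence b)
    (h0 : a 0 = b 0) (h1 : a 1 = b 1) : a = b := by
  suffices h : ∀ n, a n = b n ∧ a (n + 1) = b (n + 1) from funext fun n ↦ (h n).1
  intro n
  induction n with
  | zero => exact ⟨h0, h1⟩
  | succ n ih =>
    refine ⟨ih.2, mul_left_cancel₀ (by positivity : ((n : ℚ) + 2) ^ 3 ≠ 0) ?_⟩
    rw [ha, hb, ih.1, ih.2]

/-- The weights `(2z)! / z!⁴`, extended by `0` to negative `z`; their self-convolution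
is `A n / n!²`. -/
def dombWeight : ℤ → ℚ
  | (i : ℕ) => (2 * i).factorial / (i.factorial : ℚ) ^ 4
  | Int.negSucc _ => 0

theorem dombWeight_of_neg {z : ℤ} (hz : z < 0) : dombWeight z = 0 := by
  obtain ⟨i, rfl⟩ := Int.eq_negSucc_of_lt_zero hz
  rfl

theorem dombWeight_natCast_succ (i : ℕ) :
    ((i : ℚ) + 1) ^ 3 * dombWeight (i + 1) = 2 * (2 * i + 1) * dombWeight i := by
  have hi := Nat.cast_ne_zero (R := ℚ).2 i.factorial_ne_zero
  have hi1 : (i : ℚ) + 1 ≠ 0 := by positivity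
  change ((i : ℚ) + 1) ^ 3 * ((2 * (i + 1)).factorial / ((i + 1).factorial : ℚ) ^ 4) =
    2 * (2 * i + 1) * ((2 * i).factorial / (i.factorial : ℚ) ^ 4)
  rw [mul_add_one, Nat.factorial_succ, Nat.factorial_succ, Nat.factorial_succ]
  push_cast
  field_simp
  ring

theorem two_mul_intCast_sub_one_ne_zero (z : ℤ) : 2 * (z : ℚ) - 1 ≠ 0 := by
  norm_cast
  lia

theorem dombWeight_sub_one (z : ℤ) :
    dombWeight (z - 1) = z ^ 3 * dombWeight z / (2 * (2 * z - 1)) := by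
  rw [eq_div_iff (mul_ne_zero two_ne_zero (two_mul_intCast_sub_one_ne_zero z))]
  rcases lt_trichotomy z 0 with hz | rfl | hz
  · rw [dombWeight_of_neg hz, dombWeight_of_neg (by lia), mul_zero, zero_mul]
  · rw [dombWeight_of_neg (by lia), Int.cast_zero]
    ring
  · obtain ⟨i, rfl⟩ : ∃ i : ℕ, z = i + 1 := ⟨(z - 1).toNat, by lia⟩
    have h := dombWeight_natCast_succ i
    rw [add_sub_cancel_right]
    push_cast
    linear_combination -h

theorem choose_mul_choose_mul_choose_sq (i j : ℕ) :
    (((2 * i).choose i * (2 * j).choose j * (i + j).choose i ^ 2 : ℕ) : ℚ) =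
      (i + j).factorial ^ 2 * (dombWeight i * dombWeight j) := by
  have hi := Nat.cast_ne_zero (R := ℚ).2 i.factorial_ne_zero
  have hj := Nat.cast_ne_zero (R := ℚ).2 j.factorial_ne_zero
  change _ = ((i + j).factorial : ℚ) ^ 2 * ((2 * i).factorial / (i.factorial : ℚ) ^ 4 *
    ((2 * j).factorial / (j.factorial : ℚ) ^ 4))
  push_cast
  rw [two_mul, two_mul, Nat.cast_add_choose, Nat.cast_add_choose, Nat.cast_add_choose]
  field_simp

theorem cast_A_eq_sum_dombWeight {n m : ℕ} (h : n < m) :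
    (A n : ℚ) = n.factorial ^ 2 * ∑ i ∈ range m, dombWeight i * dombWeight (n - i) := by
  rw [A, mul_sum, Nat.cast_sum]
  refine sum_subset_zero_on_sdiff (range_subset_range.2 h) (fun i hi ↦ ?_) fun i hi ↦ ?_
  · simp only [mem_sdiff, mem_range] at hi
    rw [dombWeight_of_neg (z := n - i) (by lia), mul_zero, mul_zero]
  · obtain ⟨j, rfl⟩ := Nat.exists_eq_add_of_le (mem_range_succ_iff.1 hi)
    rw [← Nat.mul_sub, Nat.add_sub_cancel_left, choose_mul_choose_mul_choose_sq, Nat.cast_add,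
      add_sub_cancel_left]

/-- The certificate found by Zeilberger's algorithm for the recurrence of the self-convolution of
`dombWeight`. -/
def dombCertificate (n i : ℕ) : ℚ :=
  i ^ 3 * (n + 1) ^ 2 *
    (4 * i ^ 3 - (18 * n + 30) * i ^ 2 + (26 * n ^ 2 + 89 * n + 74) * i
      - (12 * n ^ 3 + 62 * n ^ 2 + 104 * n + 56)) / (2 * (n + 2 - i) - 1) *
    dombWeight i * dombWeight (n + 2 - i)

theorem dombCertificate_succ_sub (n i : ℕ) :
    dombCertificate n (i + 1) - dombCertificate n i =
      (n + 2) ^ 5 * (n + 1) ^ 2 * (dombWeight i * dombWeight (n + 2 - i))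
        - 2 * (2 * n + 3) * (5 * n ^ 2 + 15 * n + 12) * (n + 1) ^ 2 *
          (dombWeight i * dombWeight (n + 1 - i))
        + 64 * (n + 1) ^ 3 * (dombWeight i * dombWeight (n - i)) := by
  have hi1 : (i : ℚ) + 1 ≠ 0 := by positivity
  have hsucc : dombWeight (i + 1) = 2 * (2 * i + 1) * dombWeight i / ((i : ℚ) + 1) ^ 3 :=
    (eq_div_iff (by positivity)).2 (by rw [mul_comm, dombWeight_natCast_succ])
  generalize hz : (n : ℤ) + 2 - i = z
  have hzq : (n : ℚ) = z + i - 2 := by rw [← hz]; push_cast; ring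
  have h1 := two_mul_intCast_sub_one_ne_zero z
  have h3 := two_mul_intCast_sub_one_ne_zero (z - 1)
  have hw1 := dombWeight_sub_one z
  have hw2 := dombWeight_sub_one (z - 1)
  rw [hw1] at hw2
  rw [dombCertificate, dombCertificate, hz, show (n : ℤ) + 1 - i = z - 1 by lia,
    show (n : ℤ) - i = z - 1 - 1 by lia, Nat.cast_succ, Nat.cast_succ,
    show (n : ℤ) + 2 - (i + 1) = z - 1 by lia, hw2, hw1, hsucc, hzq]
  push_cast at h3 ⊢
  rw [show 2 * ((z : ℚ) + i - 2 + 2 - (i + 1)) - 1 = 2 * (z - 1) - 1 by ring,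
    show 2 * ((z : ℚ) + i - 2 + 2 - i) - 1 = 2 * z - 1 by ring]
  generalize hd1 : 2 * (z : ℚ) - 1 = d₁ at *
  generalize hd3 : 2 * ((z : ℚ) - 1) - 1 = d₃ at *
  field_simp
  rw [← hd1, ← hd3]
  ring

theorem isDombRecurrence_A : IsDombRecurrence fun n ↦ A n := by
  intro n
  have hsum := sum_range_sub (dombCertificate n) (n + 3)
  have hend : dombCertificate n (n + 3) = 0 := by
    rw [dombCertificate, dombWeight_of_neg (z := n + 2 - (n + 3 : ℕ)) (by lia), mul_zero]
  have hstart : dombCertificate n 0 = 0 := by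
    rw [dombCertificate]
    ring
  simp only [dombCertificate_succ_sub, hend, hstart, sum_add_distrib, sum_sub_distrib,
    ← mul_sum] at hsum
  have h2 := cast_A_eq_sum_dombWeight (n := n + 2) (m := n + 3) (by lia)
  have h1 := cast_A_eq_sum_dombWeight (n := n + 1) (m := n + 3) (by lia)
  have h0 := cast_A_eq_sum_dombWeight (n := n) (m := n + 3) (by lia)
  push_cast [Nat.factorial_succ] at h1 h2
  simp only [h2, h1, h0]
  linear_combination (n.factorial : ℚ) ^ 2 * hsum

/-- The coefficients `4ᶻ / z!` of the power series `exp (4t)`, extended by `0` to negative `z`. -/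
def expFourCoeff : ℤ → ℚ
  | (i : ℕ) => 4 ^ i / i.factorial
  | Int.negSucc _ => 0

theorem expFourCoeff_of_neg {z : ℤ} (hz : z < 0) : expFourCoeff z = 0 := by
  obtain ⟨i, rfl⟩ := Int.eq_negSucc_of_lt_zero hz
  rfl

theorem expFourCoeff_sub_one (z : ℤ) : expFourCoeff (z - 1) = z * expFourCoeff z / 4 := by
  rcases lt_trichotomy z 0 with hz | rfl | hz
  · rw [expFourCoeff_of_neg hz, expFourCoeff_of_neg (by lia), mul_zero, zero_div]
  · rw [expFourCoeff_of_neg (by lia), Int.cast_zero, zero_mul, zero_div]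
  · obtain ⟨i, rfl⟩ : ∃ i : ℕ, z = i + 1 := ⟨(z - 1).toNat, by lia⟩
    have hi := Nat.cast_ne_zero (R := ℚ).2 i.factorial_ne_zero
    rw [add_sub_cancel_right]
    change 4 ^ i / (i.factorial : ℚ) =
      ((i + 1 : ℤ) : ℚ) * (4 ^ (i + 1) / (i + 1).factorial) / 4
    rw [Nat.factorial_succ]
    push_cast
    field_simp
    ring

/-- The summand of the representation of `A n` as a single sum in `A_eq_sum_choose`. -/
def dombTerm (n i : ℕ) : ℚ :=
  (n + i).factorial * (2 * i).factorial / i.factorial ^ 5 * expFourCoeff (n - 2 * i)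

theorem dombTerm_of_lt {n i : ℕ} (h : n < 2 * i) : dombTerm n i = 0 := by
  rw [dombTerm, expFourCoeff_of_neg (by lia), mul_zero]

theorem cast_choose_eq_dombTerm (n i : ℕ) :
    (((n + i).choose (3 * i) * ((2 * i).choose i ^ 2 * (3 * i).choose i) * 4 ^ (n - 2 * i) : ℕ) :
      ℚ) = dombTerm n i := by
  rcases lt_or_ge n (2 * i) with h | h
  · rw [dombTerm_of_lt h, Nat.choose_eq_zero_of_lt (by lia), zero_mul, zero_mul, Nat.cast_zero]
  · obtain ⟨j, rfl⟩ := Nat.exists_eq_add_of_le h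
    have hi := Nat.cast_ne_zero (R := ℚ).2 i.factorial_ne_zero
    have hj := Nat.cast_ne_zero (R := ℚ).2 j.factorial_ne_zero
    have h2i := Nat.cast_ne_zero (R := ℚ).2 (2 * i).factorial_ne_zero
    have h3i := Nat.cast_ne_zero (R := ℚ).2 (3 * i).factorial_ne_zero
    rw [dombTerm, show ((2 * i + j : ℕ) : ℤ) - 2 * i = j by lia, Nat.add_sub_cancel_left]
    change _ = ((2 * i + j + i).factorial : ℚ) * (2 * i).factorial / i.factorial ^ 5 *
      (4 ^ j / j.factorial)
    push_cast
    rw [show 2 * i + j + i = 3 * i + j by lia, Nat.cast_add_choose,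
      Nat.cast_choose ℚ (by lia : i ≤ 2 * i), Nat.cast_choose ℚ (by lia : i ≤ 3 * i),
      show 2 * i - i = i by lia, show 3 * i - i = 2 * i by lia]
    field_simp

theorem sum_range_dombTerm {n m : ℕ} (h : n < m) :
    ∑ i ∈ range m, dombTerm n i = ∑ i ∈ range (n + 1), dombTerm n i := by
  refine (sum_subset (range_subset_range.2 h) fun i _ hi ↦ dombTerm_of_lt ?_).symm
  rw [mem_range] at hi
  lia

/-- The certificate found by Zeilberger's algorithm for the recurrence of the sum of `dombTerm`. -/
def dombTermCertificate (n i : ℕ) : ℚ :=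
  -12 * i ^ 4 * (3 * n + 4) *
    ((n + i).factorial * (2 * i).factorial / i.factorial ^ 5 * expFourCoeff (n + 2 - 2 * i))

theorem dombTermCertificate_succ_sub (n i : ℕ) :
    dombTermCertificate n (i + 1) - dombTermCertificate n i =
      (n + 2) ^ 3 * dombTerm (n + 2) i
        - 2 * (2 * n + 3) * (5 * n ^ 2 + 15 * n + 12) * dombTerm (n + 1) i
        + 64 * (n + 1) ^ 3 * dombTerm n i := by
  have hi := Nat.cast_ne_zero (R := ℚ).2 i.factorial_ne_zero
  have hi1 : (i : ℚ) + 1 ≠ 0 := by positivity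
  have he1 := expFourCoeff_sub_one (n + 2 - 2 * i)
  have he2 := expFourCoeff_sub_one (n + 2 - 2 * i - 1)
  rw [he1] at he2
  simp only [dombTermCertificate, dombTerm]
  rw [show (n : ℤ) + 2 - 2 * (i + 1 : ℕ) = n + 2 - 2 * i - 1 - 1 by lia,
    show ((n + 2 : ℕ) : ℤ) - 2 * i = n + 2 - 2 * i by lia,
    show ((n + 1 : ℕ) : ℤ) - 2 * i = n + 2 - 2 * i - 1 by lia,
    show (n : ℤ) - 2 * i = n + 2 - 2 * i - 1 - 1 by lia, he2, he1,
    show n + (i + 1) = n + i + 1 by ring, show n + 2 + i = n + i + 1 + 1 by ring,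
    show n + 1 + i = n + i + 1 by ring, mul_add_one]
  push_cast [Nat.factorial_succ]
  field_simp
  ring

theorem isDombRecurrence_sum_dombTerm :
    IsDombRecurrence fun n ↦ ∑ i ∈ range (n + 1), dombTerm n i := by
  intro n
  have hsum := sum_range_sub (dombTermCertificate n) (n + 3)
  have hend : dombTermCertificate n (n + 3) = 0 := by
    rw [dombTermCertificate, expFourCoeff_of_neg (by lia), mul_zero, mul_zero]
  have hstart : dombTermCertificate n 0 = 0 := by
    rw [dombTermCertificate]
    ring
  simp only [dombTermCertificate_succ_sub, hend, hstart, sum_add_distrib, sum_sub_distrib,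
    ← mul_sum] at hsum
  rw [sum_range_dombTerm (n := n + 1) (by lia), sum_range_dombTerm (n := n) (by lia)] at hsum
  linear_combination hsum

theorem A_eq_sum_choose (n : ℕ) :
    A n = ∑ i ∈ range (n + 1),
      (n + i).choose (3 * i) * ((2 * i).choose i ^ 2 * (3 * i).choose i) * 4 ^ (n - 2 * i) := by
  have h := isDombRecurrence_A.ext isDombRecurrence_sum_dombTerm
    (by simp only [← cast_choose_eq_dombTerm]; norm_cast)
    (by simp only [← cast_choose_eq_dombTerm]; norm_cast)
  have hn := congrFun h n
  simp only [← cast_choose_eq_dombTerm] at hn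
  exact_mod_cast hn

end Domb

section Clausen

open Polynomial

variable {R : Type*} [CommRing R]

theorem coeff_succ_X_sub_X_sq_mul_derivative (y : R[X]) (n : ℕ) :
    ((X - X ^ 2) * derivative y).coeff (n + 1) = (n + 1) * y.coeff (n + 1) - n * y.coeff n := by
  rw [show (X - X ^ 2) * derivative y = X * derivative y - X * (X * derivative y) by ring,
    coeff_sub, coeff_X_mul, coeff_X_mul, coeff_derivative]
  cases n with
  | zero =>
    rw [coeff_X_mul_zero, Nat.cast_zero]
    ring
  | succ n =>
    rw [coeff_X_mul, coeff_derivative, Nat.cast_succ]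
    ring

theorem coeff_derivative_X_sub_X_sq_mul_derivative (y : R[X]) (n : ℕ) :
    (derivative ((X - X ^ 2) * derivative y)).coeff n =
      (n + 1) * ((n + 1) * y.coeff (n + 1) - n * y.coeff n) := by
  rw [coeff_derivative, coeff_succ_X_sub_X_sq_mul_derivative]
  ring

theorem coeff_succ_shiftedLegendre (n k : ℕ) :
    ((k : ℤ) + 1) ^ 2 * (shiftedLegendre n).coeff (k + 1) =
      -(n * (n + 1) - k * (k + 1)) * (shiftedLegendre n).coeff k := by
  have hchoose : (n.choose (k + 1) : ℤ) * (k + 1) = n.choose k * (n - k) := by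
    rcases le_or_gt k n with h | h
    · have := Nat.choose_succ_right_eq n k
      zify [h] at this
      exact this
    · rw [Nat.choose_eq_zero_of_lt h, Nat.choose_eq_zero_of_lt (by lia)]
      ring
  have hadd : ((n : ℤ) + k + 1) * (n + k).choose k = (n + (k + 1)).choose (k + 1) * (k + 1) := by
    exact_mod_cast Nat.add_one_mul_choose_eq (n + k) k
  rw [coeff_shiftedLegendre, coeff_shiftedLegendre, Nat.choose_symm_add, Nat.choose_symm_add,
    pow_succ]
  linear_combination (-1) ^ k * (-1) * ((k : ℤ) + 1) * (n + (k + 1)).choose (k + 1) * hchoose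
    + (-1) ^ k * n.choose k * ((n : ℤ) - k) * hadd

theorem derivative_mul_derivative_shiftedLegendre (n : ℕ) :
    derivative ((X - X ^ 2) * derivative (shiftedLegendre n)) =
      -(C (n * (n + 1) : ℤ) * shiftedLegendre n) := by
  ext k
  rw [coeff_derivative_X_sub_X_sq_mul_derivative, coeff_neg, coeff_C_mul]
  linear_combination coeff_succ_shiftedLegendre n k

/-- The symmetric square of the Legendre operator `y ↦ (w y')' + l y`, where `w = X - X²`: the
third-order operator which annihilates the squares of the solutions of the Legendre equation. -/
noncomputable def legendreSymSq (l : R) : R[X] →ₗ[R] R[X] :=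
  derivative ∘ₗ LinearMap.mulLeft R (X - X ^ 2) ∘ₗ
      (derivative ∘ₗ LinearMap.mulLeft R (X - X ^ 2) ∘ₗ derivative + (2 * l) • LinearMap.id) +
    (2 * l) • (LinearMap.mulLeft R (X - X ^ 2) ∘ₗ derivative)

theorem legendreSymSq_apply (l : R) (y : R[X]) :
    legendreSymSq l y =
      derivative ((X - X ^ 2) * (derivative ((X - X ^ 2) * derivative y) + C (2 * l) * y)) +
        C (2 * l) * ((X - X ^ 2) * derivative y) := by
  rw [← smul_eq_C_mul, ← smul_eq_C_mul]
  rfl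

theorem legendreSymSq_sq {l : R} {y : R[X]}
    (hy : derivative ((X - X ^ 2) * derivative y) = -(C l * y)) : legendreSymSq l (y ^ 2) = 0 := by
  have h1 : (X - X ^ 2) * derivative (y ^ 2) = C 2 * (y * ((X - X ^ 2) * derivative y)) := by
    rw [derivative_sq]
    ring
  have h2 : (X - X ^ 2) * (derivative ((X - X ^ 2) * derivative (y ^ 2)) + C (2 * l) * y ^ 2) =
      C 2 * ((X - X ^ 2) * derivative y) ^ 2 := by
    rw [h1, derivative_C_mul, derivative_mul, hy, C_mul]
    ring
  rw [legendreSymSq_apply, h2, h1, derivative_C_mul, derivative_sq, hy, C_mul, C_ofNat]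
  ring

theorem coeff_legendreSymSq (l : R) (y : R[X]) (n : ℕ) :
    (legendreSymSq l y).coeff n =
      (n + 1) ^ 3 * y.coeff (n + 1) + (2 * n + 1) * (2 * l - n * (n + 1)) * y.coeff n
        + n * ((n - 1) * (n + 1) - 4 * l) * y.coeff (n - 1) := by
  have hmul (z : R[X]) : (X - X ^ 2) * z = X * (z - X * z) := by ring
  rw [legendreSymSq_apply, coeff_add, coeff_C_mul, coeff_derivative,
    hmul (derivative ((X - X ^ 2) * derivative y) + C (2 * l) * y), coeff_X_mul, coeff_sub]
  cases n with
  | zero =>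
    rw [coeff_X_mul_zero, coeff_add, coeff_derivative_X_sub_X_sq_mul_derivative, coeff_C_mul, hmul,
      coeff_X_mul_zero]
    push_cast
    ring
  | succ n =>
    rw [coeff_X_mul, coeff_add, coeff_add, coeff_derivative_X_sub_X_sq_mul_derivative,
      coeff_derivative_X_sub_X_sq_mul_derivative, coeff_C_mul, coeff_C_mul,
      coeff_succ_X_sub_X_sq_mul_derivative, Nat.add_sub_cancel]
    push_cast
    ring

theorem eq_zero_of_legendreSymSq_eq_zero [IsDomain R] [CharZero R] {l : R} {y : R[X]}
    (hy : legendreSymSq l y = 0) (h0 : y.coeff 0 = 0) : y = 0 := by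
  ext n
  induction n using Nat.strong_induction_on with
  | _ n ih =>
    rcases n with _ | n
    · exact h0
    have hcoeff := coeff_legendreSymSq l y n
    rw [hy, ih n (by lia), ih (n - 1) (by lia)] at hcoeff
    refine (mul_eq_zero.1 (?_ : ((n : R) + 1) ^ 3 * y.coeff (n + 1) = 0)).resolve_left
      (pow_ne_zero 3 n.cast_add_one_ne_zero)
    simp only [coeff_zero] at hcoeff
    linear_combination -hcoeff

theorem legendreSymSq_X_sub_X_sq_pow (l : R) (k : ℕ) :
    legendreSymSq l ((X - X ^ 2) ^ k) =
      (1 - 2 * X) * (C ((k : R) ^ 3) * (X - X ^ 2) ^ (k - 1) +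
        C (2 * (2 * k + 1) * (l - k * (k + 1))) * (X - X ^ 2) ^ k) := by
  have hw : derivative (X - X ^ 2 : R[X]) = 1 - 2 * X := by
    rw [derivative_sub, derivative_X, derivative_X_sq, C_ofNat]
  have hq : derivative (1 - 2 * X : R[X]) = -2 := by
    rw [← C_ofNat, derivative_sub, derivative_one, derivative_C_mul, derivative_X]
    ring
  rcases k with _ | k
  · simp only [legendreSymSq_apply, pow_zero, derivative_one, mul_zero, map_zero, zero_add,
      add_zero, mul_one, derivative_mul, derivative_C, hw, Nat.cast_zero, zero_mul, sub_zero,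
      zero_pow three_ne_zero]
  have hpow (m : ℕ) : derivative ((X - X ^ 2 : R[X]) ^ (m + 1)) =
      C (m + 1 : R) * ((X - X ^ 2) ^ m * (1 - 2 * X)) := by
    rw [derivative_pow_succ, hw, mul_assoc]
  have hinner : (X - X ^ 2) * derivative ((X - X ^ 2 : R[X]) ^ (k + 1)) =
      C (k + 1 : R) * ((X - X ^ 2) ^ (k + 1) * (1 - 2 * X)) := by
    rw [hpow]
    ring
  have houter : (X - X ^ 2) * (derivative ((X - X ^ 2) * derivative ((X - X ^ 2 : R[X]) ^ (k + 1)))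
      + C (2 * l) * (X - X ^ 2) ^ (k + 1)) = C ((k + 1 : R) ^ 2) * (X - X ^ 2) ^ (k + 1) +
        C (2 * l - (k + 1) * (4 * k + 6)) * (X - X ^ 2) ^ (k + 2) := by
    rw [hinner, derivative_C_mul, derivative_mul, hpow, hq]
    simp only [map_add, map_sub, map_mul, map_pow, C_ofNat, map_one]
    ring
  rw [legendreSymSq_apply, houter, hinner, derivative_add, derivative_C_mul, derivative_C_mul, hpow,
    hpow, Nat.add_sub_cancel]
  simp only [map_add, map_sub, map_mul, map_pow, C_ofNat, map_one, map_natCast, Nat.cast_succ]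
  ring

theorem coeff_shiftedLegendre_mul_centralBinom_succ (n k : ℕ) :
    (shiftedLegendre n).coeff (k + 1) * (k + 1).centralBinom * ((k : ℤ) + 1) ^ 3 =
      -((shiftedLegendre n).coeff k * k.centralBinom *
        (2 * (2 * k + 1) * (n * (n + 1) - k * (k + 1)))) := by
  have h : ((k : ℤ) + 1) * (k + 1).centralBinom = 2 * (2 * k + 1) * k.centralBinom := by
    exact_mod_cast Nat.succ_mul_centralBinom_succ k
  linear_combination 2 * (2 * (k : ℤ) + 1) * k.centralBinom * coeff_succ_shiftedLegendre n k
    + ((k : ℤ) + 1) ^ 2 * (shiftedLegendre n).coeff (k + 1) * h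

theorem legendreSymSq_sum_X_sub_X_sq_pow (n : ℕ) :
    legendreSymSq (n * (n + 1) : ℤ) (∑ k ∈ range (n + 1),
      C ((shiftedLegendre n).coeff k * k.centralBinom) * (X - X ^ 2) ^ k) = 0 := by
  let t (k : ℕ) : ℤ[X] :=
    C ((shiftedLegendre n).coeff k * k.centralBinom * k ^ 3) * (X - X ^ 2) ^ (k - 1)
  have hterm (k : ℕ) : legendreSymSq (n * (n + 1) : ℤ)
      (C ((shiftedLegendre n).coeff k * k.centralBinom) * (X - X ^ 2) ^ k) =
      (1 - 2 * X) * (t k - t (k + 1)) := by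
    rw [← smul_eq_C_mul, map_smul, smul_eq_C_mul, legendreSymSq_X_sub_X_sq_pow]
    simp only [t, Nat.add_sub_cancel, Nat.cast_succ]
    rw [coeff_shiftedLegendre_mul_centralBinom_succ]
    simp only [C_mul, C_neg]
    ring
  have hn : (shiftedLegendre n).coeff (n + 1) = 0 := by
    rw [coeff_shiftedLegendre, Nat.choose_succ_self, Nat.cast_zero, mul_zero, zero_mul]
  rw [map_sum, sum_congr rfl fun k _ ↦ hterm k, ← mul_sum, sum_range_sub']
  simp only [t, hn, Nat.cast_zero, zero_pow three_ne_zero, mul_zero, zero_mul, map_zero, sub_zero]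

/-- **Clausen's identity** for Legendre polynomials. -/
theorem shiftedLegendre_sq (n : ℕ) :
    shiftedLegendre n ^ 2 =
      ∑ k ∈ range (n + 1), C ((shiftedLegendre n).coeff k * k.centralBinom) * (X - X ^ 2) ^ k := by
  have h0 : (shiftedLegendre n).coeff 0 = 1 := by
    rw [coeff_shiftedLegendre, pow_zero, Nat.choose_zero_right, add_zero, Nat.choose_self]
    rfl
  rw [← sub_eq_zero]
  refine eq_zero_of_legendreSymSq_eq_zero (l := (n * (n + 1) : ℤ)) ?_ ?_
  · rw [map_sub, legendreSymSq_sq (derivative_mul_derivative_shiftedLegendre n),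
      legendreSymSq_sum_X_sub_X_sq_pow, sub_zero]
  · rw [coeff_sub, sq, mul_coeff_zero, finsetSum_coeff, sum_range_succ', sum_eq_zero, h0]
    · simp
    · intro k _
      rw [coeff_C_mul, coeff_zero_eq_eval_zero]
      simp

theorem aeval_shiftedLegendre_sq {φ : R} (hφ : φ ^ 2 = φ + 1) (n : ℕ) :
    aeval φ (shiftedLegendre n) ^ 2 =
      ∑ k ∈ range (n + 1), ((shiftedLegendre n).coeff k : R) * k.centralBinom * (-1) ^ k := by
  rw [← map_pow, shiftedLegendre_sq, map_sum]
  refine sum_congr rfl fun k _ ↦ ?_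
  simp [hφ]

end Clausen

section BinomialCongruences

open Polynomial

theorem succ_sq_mul_choose_mul_choose (k : ℕ) :
    (k + 1) ^ 2 * ((2 * (k + 1)).choose (k + 1) * (3 * (k + 1)).choose (k + 1)) =
      3 * (3 * k + 1) * (3 * k + 2) * ((2 * k).choose k * (3 * k).choose k) := by
  have htrinomial (k : ℕ) :
      (2 * k).choose k * (3 * k).choose k * k.factorial ^ 3 = (3 * k).factorial := by
    have h2 := Nat.add_choose_mul_factorial_mul_factorial k k
    have h3 := Nat.add_choose_mul_factorial_mul_factorial (2 * k) k
    rw [← two_mul] at h2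
    rw [show 2 * k + k = 3 * k by ring, ← h2] at h3
    rw [← h3]
    ring
  have hsucc := htrinomial (k + 1)
  rw [show 3 * (k + 1) = 3 * k + 1 + 1 + 1 by ring, Nat.factorial_succ (3 * k + 1 + 1),
    Nat.factorial_succ (3 * k + 1), Nat.factorial_succ (3 * k), ← htrinomial k,
    Nat.factorial_succ k] at hsucc
  refine Nat.eq_of_mul_eq_mul_right (by positivity : 0 < (k + 1) * k.factorial ^ 3) ?_
  rw [show 3 * (k + 1) = 3 * k + 1 + 1 + 1 by ring]
  linear_combination hsucc

variable {p : ℕ} [hp : Fact p.Prime]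

theorem choose_sub_mul_neg_one_pow {r s : ℕ} (h : s + r < p) :
    ((p - 1 - r).choose s : ZMod p) * (-1) ^ s = (s + r).choose s := by
  induction s with
  | zero => simp
  | succ s ih =>
    have hs : ((s + 1 : ℕ) : ZMod p) ≠ 0 := natCast_ne_zero_of_lt _ s.succ_ne_zero (by lia)
    have hchoose := congrArg (Nat.cast (R := ZMod p)) (Nat.choose_succ_right_eq (p - 1 - r) s)
    have hadd := congrArg (Nat.cast (R := ZMod p)) (Nat.add_one_mul_choose_eq (s + r) s)
    have hcast : ((p - 1 - r - s : ℕ) : ZMod p) = -(1 + r + s) := by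
      rw [Nat.sub_sub, Nat.sub_sub, Nat.cast_sub (by lia), CharP.cast_eq_zero]
      push_cast
      ring
    push_cast [hcast] at hchoose hadd hs
    refine mul_right_cancel₀ hs ?_
    rw [show s + 1 + r = s + r + 1 by ring, ← hadd, ← ih (by lia)]
    linear_combination -(-1) ^ s * hchoose

theorem choose_half_mul_neg_four_pow {m j : ℕ} (hm : p = 2 * m + 1) (hj : j ≤ m) :
    (m.choose j : ZMod p) * (-4) ^ j = (2 * j).choose j := by
  induction j with
  | zero => simp
  | succ j ih =>
    have hs : ((j + 1 : ℕ) : ZMod p) ≠ 0 := natCast_ne_zero_of_lt _ j.succ_ne_zero (by lia)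
    have hchoose := congrArg (Nat.cast (R := ZMod p)) (Nat.choose_succ_right_eq m j)
    have hcentral := congrArg (Nat.cast (R := ZMod p)) (Nat.succ_mul_centralBinom_succ j)
    have hm0 : ((2 * m + 1 : ℕ) : ZMod p) = 0 := hm ▸ CharP.cast_eq_zero (ZMod p) p
    simp only [Nat.centralBinom] at hcentral
    push_cast [Nat.cast_sub (by lia : j ≤ m)] at hchoose hcentral hs hm0
    refine mul_left_cancel₀ hs ?_
    rw [hcentral, ← ih (by lia)]
    linear_combination (-4) ^ (j + 1) * hchoose - 2 * (-4) ^ j * (m.choose j : ZMod p) * hm0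

theorem mod_three_ne_zero (hp3 : p ≠ 3) : p % 3 ≠ 0 := fun h ↦
  hp3 ((Nat.prime_dvd_prime_iff_eq Nat.prime_three hp.out).1 (Nat.dvd_of_mod_eq_zero h)).symm

theorem nine_mul_div_three_mul_div_three_add_one (hp3 : p ≠ 3) :
    (9 : ZMod p) * (p / 3 : ℕ) * ((p / 3 : ℕ) + 1) = -2 := by
  have hdiv : ((3 * (p / 3) + p % 3 : ℕ) : ZMod p) = 0 := by
    rw [Nat.div_add_mod, CharP.cast_eq_zero]
  have hmod : p % 3 = 1 ∨ p % 3 = 2 := by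
    have := mod_three_ne_zero hp3
    lia
  rcases hmod with h | h <;> rw [h] at hdiv <;> push_cast at hdiv
  · linear_combination (3 * ((p / 3 : ℕ) : ZMod p) + 2) * hdiv
  · linear_combination (3 * ((p / 3 : ℕ) : ZMod p) + 1) * hdiv

theorem choose_mul_choose_eq_coeff_shiftedLegendre {n k : ℕ}
    (hn : (9 : ZMod p) * n * (n + 1) = -2) (hk : k < p) :
    ((2 * k).choose k : ZMod p) * (3 * k).choose k =
      27 ^ k * ((shiftedLegendre n).coeff k : ZMod p) := by
  induction k with
  | zero => simp [coeff_shiftedLegendre]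
  | succ k ih =>
    have hs : ((k + 1 : ℕ) : ZMod p) ≠ 0 := natCast_ne_zero_of_lt _ k.succ_ne_zero hk
    have hchoose := congrArg (Nat.cast (R := ZMod p)) (succ_sq_mul_choose_mul_choose k)
    have hcoeff := congrArg (Int.cast (R := ZMod p)) (coeff_succ_shiftedLegendre n k)
    push_cast at hchoose hcoeff hs
    refine mul_left_cancel₀ (pow_ne_zero 2 hs) ?_
    rw [hchoose]
    linear_combination 3 * (3 * (k : ZMod p) + 1) * (3 * k + 2) * ih (by lia)
      - 27 ^ (k + 1) * hcoeff + 3 * 27 ^ k * ((shiftedLegendre n).coeff k : ZMod p) * hn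

theorem natCast_choose_eq_zero {a b : ℕ} (ha : a < p) (hb : b < p) (hab : p ≤ a + b) :
    ((a + b).choose a : ZMod p) = 0 :=
  (CharP.cast_eq_zero_iff (ZMod p) p _).2 (hp.out.dvd_choose_add ha hb hab)

theorem choose_sq_mul_choose_eq_zero {k : ℕ} (h1 : p ≤ 3 * k) (h2 : k < p) :
    ((2 * k).choose k : ZMod p) ^ 2 * (3 * k).choose k = 0 := by
  rcases le_or_gt p (2 * k) with h | h
  · rw [two_mul, natCast_choose_eq_zero h2 h2 (by lia), zero_pow two_ne_zero, zero_mul]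
  · rw [show 3 * k = k + 2 * k by ring, natCast_choose_eq_zero h2 h (by lia), mul_zero]

theorem sum_range_choose_mul_pow {r : ℕ} (hr : r < p) (c : ZMod p) :
    ∑ s ∈ range (p - r), ((s + r).choose s : ZMod p) * c ^ s = (1 - c) ^ (p - 1 - r) := by
  rw [sub_eq_neg_add, add_pow, show p - 1 - r + 1 = p - r by lia]
  refine sum_congr rfl fun s hs ↦ ?_
  rw [← choose_sub_mul_neg_one_pow (by have := mem_range.1 hs; lia), one_pow, neg_pow c]
  ring

theorem sum_range_choose_three_mul_pow {k : ℕ} (hk : 3 * k < p) (c : ZMod p) :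
    ∑ n ∈ range p, ((n + k).choose (3 * k) : ZMod p) * c ^ (n - 2 * k) =
      (1 - c) ^ (p - 1 - 3 * k) := by
  have hsplit : p = 2 * k + ((p - 3 * k) + k) := by lia
  rw [← sum_range_choose_mul_pow hk, congrArg range hsplit, sum_range_add, sum_range_add,
    sum_eq_zero (s := range (2 * k)), sum_eq_zero (s := range k), zero_add, add_zero]
  · refine sum_congr rfl fun s _ ↦ ?_
    rw [show 2 * k + s + k = s + 3 * k by ring, Nat.add_sub_cancel_left, Nat.choose_symm_add]
  · intro i hi
    have hik := mem_range.1 hi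
    rw [show 2 * k + (p - 3 * k + i) + k = 3 * k + (p - 3 * k + i) by ring,
      natCast_choose_eq_zero hk (by lia) (by lia), zero_mul]
  · intro n hn
    rw [Nat.choose_eq_zero_of_lt (by have := mem_range.1 hn; lia), Nat.cast_zero, zero_mul]

end BinomialCongruences

section SumModP

open Polynomial

variable {p : ℕ} [hp : Fact p.Prime]

theorem sum_range_choose_three_mul_four_pow (hp3 : 3 < p) {k : ℕ} (hk : 3 * k < p) :
    (∑ n ∈ range p, ((n + k).choose (3 * k) : ZMod p) * 4 ^ (n - 2 * k)) * (-27) ^ k = 1 := by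
  have h3 : (-3 : ZMod p) ≠ 0 :=
    neg_ne_zero.2 (natCast_ne_zero_of_lt (ZMod p) three_ne_zero hp3)
  rw [sum_range_choose_three_mul_pow hk, show (1 - 4 : ZMod p) = -3 by ring,
    show (-27 : ZMod p) = (-3) ^ 3 by ring, ← pow_mul, ← pow_add,
    show p - 1 - 3 * k + 3 * k = p - 1 by lia, ZMod.pow_card_sub_one_eq_one h3]

theorem sum_A_eq_sum_choose :
    ∑ n ∈ range p, (A n : ZMod p) = ∑ k ∈ range p, ((2 * k).choose k : ZMod p) ^ 2 *
      (3 * k).choose k * ∑ n ∈ range p, ((n + k).choose (3 * k) : ZMod p) * 4 ^ (n - 2 * k) := by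
  have hA (n : ℕ) (hn : n ∈ range p) : (A n : ZMod p) = ∑ k ∈ range p,
      ((2 * k).choose k : ZMod p) ^ 2 * (3 * k).choose k *
        (((n + k).choose (3 * k) : ZMod p) * 4 ^ (n - 2 * k)) := by
    rw [A_eq_sum_choose, Nat.cast_sum]
    refine sum_subset_zero_on_sdiff
      (range_subset_range.2 (Nat.succ_le_of_lt (mem_range.1 hn))) ?_ ?_
    · intro k hk
      have hkn : n < k := by simpa using (mem_sdiff.1 hk).2
      rw [Nat.choose_eq_zero_of_lt (by lia : n + k < 3 * k), Nat.cast_zero, zero_mul, mul_zero]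
    · intro k _
      push_cast
      ring
  simp_rw [sum_congr rfl hA, mul_sum]
  exact sum_comm

theorem sum_A_eq_aeval_shiftedLegendre_sq (hp3 : 3 < p) {φ : ZMod p} (hφ : φ ^ 2 = φ + 1) :
    ∑ n ∈ range p, (A n : ZMod p) = aeval φ (shiftedLegendre (p / 3)) ^ 2 := by
  have hmod := mod_three_ne_zero hp3.ne'
  rw [sum_A_eq_sum_choose, aeval_shiftedLegendre_sq hφ]
  refine (sum_subset_zero_on_sdiff (range_subset_range.2 (by lia)) ?_ ?_).symm
  · intro k hk
    obtain ⟨hkp, hk3⟩ := mem_sdiff.1 hk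
    rw [mem_range] at hkp hk3
    rw [choose_sq_mul_choose_eq_zero (by lia) hkp, zero_mul]
  · intro k hk
    have hk3 := mem_range_succ_iff.1 hk
    have hcoeff := choose_mul_choose_eq_coeff_shiftedLegendre
      (nine_mul_div_three_mul_div_three_add_one hp3.ne') (by lia : k < p)
    have hinner := sum_range_choose_three_mul_four_pow hp3 (by lia : 3 * k < p)
    rw [show (27 : ZMod p) = (-27) * (-1) by ring, mul_pow] at hcoeff
    rw [Nat.centralBinom]
    generalize ∑ n ∈ range p, ((n + k).choose (3 * k) : ZMod p) * 4 ^ (n - 2 * k) = s at *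
    linear_combination -((2 * k).choose k : ZMod p) * s * hcoeff -
      ((2 * k).choose k : ZMod p) * (-1) ^ k * ((shiftedLegendre (p / 3)).coeff k : ZMod p) * hinner

end SumModP

section HasseInvariantLegendre

open Polynomial

theorem coeff_comp_C_mul_X_add_C {F : Type*} [Field F] [Fintype F] {g : F[X]}
    (hg : g.natDegree < 2 * (Fintype.card F - 1)) {a : F} (ha : a ≠ 0) (b : F) :
    (g.comp (C a * X + C b)).coeff (Fintype.card F - 1) = g.coeff (Fintype.card F - 1) := by
  have hcomp : (g.comp (C a * X + C b)).natDegree < 2 * (Fintype.card F - 1) := by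
    rwa [natDegree_comp, natDegree_linear ha, mul_one]
  rw [← neg_inj, ← sum_eval_eq_neg_coeff hg, ← sum_eval_eq_neg_coeff hcomp]
  refine Fintype.sum_equiv ((Equiv.mulLeft₀ a ha).trans (Equiv.addRight b)) _ _ fun u ↦ ?_
  simp

theorem coeff_C_mul_X_pow_add_sq_pow {R : Type*} [CommRing R] (c φ : R) (m : ℕ) :
    ((C c * X ^ 3 + (X + C φ) ^ 2) ^ m).coeff (2 * m) =
      ∑ j ∈ range (m + 1), m.choose j * (2 * m - 2 * j).choose j * (c * φ) ^ j := by
  rw [add_pow, finsetSum_coeff]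
  refine sum_congr rfl fun j hj ↦ ?_
  rw [mem_range_succ_iff] at hj
  have hterm : (C c * X ^ 3) ^ j * ((X + C φ) ^ 2) ^ (m - j) * (m.choose j : R[X]) =
      C (c ^ j * m.choose j) * ((X + C φ) ^ (2 * (m - j)) * X ^ (3 * j)) := by
    rw [C_mul, C_pow, map_natCast, pow_mul, pow_mul]
    ring
  rw [hterm, coeff_C_mul, coeff_mul_X_pow', mul_pow]
  split_ifs with h
  · rw [coeff_X_add_C_pow, show 2 * (m - j) - (2 * m - 3 * j) = j by lia,
      show 2 * m - 3 * j = 2 * (m - j) - j by lia, Nat.choose_symm (by lia), Nat.mul_sub]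
    ring
  · rw [Nat.choose_eq_zero_of_lt (by lia : 2 * m - 2 * j < j)]
    simp

variable {p : ℕ} [hp : Fact p.Prime]

theorem shortCubic_cm_comp (hp3 : 3 < p) {φ : ZMod p} (hφ : φ ^ 2 = φ + 1) :
    (shortCubic (cmA φ) (cmB φ)).comp (C (4 / 3) * X + C 3) =
      C 16 * (C (4 / 27) * X ^ 3 + (X + C φ) ^ 2) := by
  have h3 : (3 : ZMod p) ≠ 0 := natCast_ne_zero_of_lt (ZMod p) three_ne_zero hp3
  have hinv : 3 * C (3⁻¹ : ZMod p) - 1 = 0 := by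
    rw [← C_ofNat, ← C_mul, mul_inv_cancel₀ h3, C_1, sub_self]
  have hφC : C φ ^ 2 = C φ + 1 := by rw [← C_pow, hφ, C_add, C_1]
  rw [show (4 / 27 : ZMod p) = 4 * 3⁻¹ ^ 3 by norm_num [div_eq_mul_inv], div_eq_mul_inv]
  simp only [shortCubic, add_comp, mul_comp, pow_comp, X_comp, C_comp]
  simp only [cmA, cmB, map_sub, map_mul, map_pow, C_ofNat]
  linear_combination (16 * (3 * C 3⁻¹ + 1) * X ^ 2 + 32 * C φ * X) * hinv - 16 * hφC

theorem hasseInvariant_cm_eq_coeff (hp3 : 3 < p) {φ : ZMod p} (hφ : φ ^ 2 = φ + 1) :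
    hasseInvariant p (cmA φ) (cmB φ) =
      ((C (4 / 27) * X ^ 3 + (X + C φ) ^ 2) ^ ((p - 1) / 2)).coeff (p - 1) := by
  have hodd := hp.out.eq_two_or_odd
  have h2 : (2 : ZMod p) ≠ 0 := natCast_ne_zero_of_lt (ZMod p) two_ne_zero (by lia : 2 < p)
  have h3 : (3 : ZMod p) ≠ 0 := natCast_ne_zero_of_lt (ZMod p) three_ne_zero hp3
  have h4 : (4 : ZMod p) ≠ 0 := by
    rw [show (4 : ZMod p) = 2 ^ 2 by ring]
    exact pow_ne_zero 2 h2
  have h16 : (16 : ZMod p) ^ ((p - 1) / 2) = 1 := by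
    rw [show (16 : ZMod p) = 4 ^ 2 by ring, ← pow_mul, show 2 * ((p - 1) / 2) = p - 1 by lia,
      ZMod.pow_card_sub_one_eq_one h4]
  have hdeg : (shortCubic (cmA φ) (cmB φ) ^ ((p - 1) / 2)).natDegree <
      2 * (Fintype.card (ZMod p) - 1) := by
    rw [natDegree_pow, natDegree_shortCubic, ZMod.card]
    lia
  have hcomp := coeff_comp_C_mul_X_add_C hdeg (div_ne_zero h4 h3) 3
  rw [ZMod.card, pow_comp, shortCubic_cm_comp hp3 hφ, mul_pow, ← C_pow, h16, C_1, one_mul] at hcomp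
  rw [hasseInvariant, hcomp]

theorem hasseInvariant_cm_eq_aeval_shiftedLegendre (hp3 : 3 < p) {φ : ZMod p}
    (hφ : φ ^ 2 = φ + 1) :
    hasseInvariant p (cmA φ) (cmB φ) = aeval φ (shiftedLegendre (p / 3)) := by
  have h3 : (3 : ZMod p) ≠ 0 := natCast_ne_zero_of_lt (ZMod p) three_ne_zero hp3
  have h27 : (27 : ZMod p) ≠ 0 := by
    rw [show (27 : ZMod p) = 3 ^ 3 by ring]
    exact pow_ne_zero 3 h3
  have hmod := mod_three_ne_zero hp3.ne'
  obtain ⟨m, hm⟩ : ∃ m, p = 2 * m + 1 := hp.out.odd_of_ne_two (by lia)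
  rw [hasseInvariant_cm_eq_coeff hp3 hφ, show p - 1 = 2 * m by lia,
    Nat.mul_div_cancel_left m two_pos, coeff_C_mul_X_pow_add_sq_pow, aeval_eq_sum_range,
    natDegree_shiftedLegendre]
  refine (sum_subset_zero_on_sdiff (range_subset_range.2 (by lia)) ?_ ?_).symm
  · intro j hj
    obtain ⟨hjm, hj3⟩ := mem_sdiff.1 hj
    rw [mem_range] at hjm hj3
    rw [Nat.choose_eq_zero_of_lt (by lia : 2 * m - 2 * j < j), Nat.cast_zero, mul_zero, zero_mul]
  · intro j hj
    rw [mem_range_succ_iff] at hj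
    have hhalf := choose_half_mul_neg_four_pow hm (by lia : j ≤ m)
    have hneg := choose_sub_mul_neg_one_pow (by lia : j + 2 * j < p)
    have hcoeff := choose_mul_choose_eq_coeff_shiftedLegendre
      (nine_mul_div_three_mul_div_three_add_one hp3.ne') (by lia : j < p)
    rw [show j + 2 * j = 3 * j by ring, show p - 1 - 2 * j = 2 * m - 2 * j by lia] at hneg
    rw [← hhalf, ← hneg] at hcoeff
    have hpow : (4 / 27 * φ) ^ j = (-4) ^ j * (-1) ^ j * φ ^ j / 27 ^ j := by
      rw [← mul_pow, ← mul_pow, ← div_pow]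
      ring
    rw [hpow, mul_div_assoc', eq_div_iff (pow_ne_zero j h27), zsmul_eq_mul]
    linear_combination -φ ^ j * hcoeff

end HasseInvariantLegendre

section QuadraticResidues

variable {p : ℕ} [hp : Fact p.Prime]

theorem eleven_le_of_mod_five (h5 : p % 5 = 1 ∨ p % 5 = 4) : 11 ≤ p := by
  have hprime := hp.out
  by_contra! h
  interval_cases p <;> first | lia | norm_num at hprime

theorem isSquare_five (h5 : p % 5 = 1 ∨ p % 5 = 4) : IsSquare (5 : ZMod p) := by
  have : Fact (Nat.Prime 5) := ⟨Nat.prime_five⟩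
  refine (ZMod.exists_sq_eq_prime_iff_of_mod_four_eq_one (p := 5) (q := p) (by norm_num)
    (by have := eleven_le_of_mod_five h5; lia)).1 ?_
  rw [← ZMod.natCast_mod]
  rcases h5 with h | h <;> rw [h]
  exacts [⟨1, rfl⟩, ⟨2, rfl⟩]

theorem exists_sq_eq_add_one (h5 : p % 5 = 1 ∨ p % 5 = 4) : ∃ φ : ZMod p, φ ^ 2 = φ + 1 := by
  have hp11 := eleven_le_of_mod_five h5
  obtain ⟨r, hr⟩ := isSquare_five h5
  have h2 : (2 : ZMod p) ≠ 0 := natCast_ne_zero_of_lt (ZMod p) two_ne_zero (by lia : 2 < p)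
  refine ⟨(1 + r) / 2, ?_⟩
  field_simp
  linear_combination -hr

theorem isSquare_neg_three (h3 : p % 3 = 1) : IsSquare (-3 : ZMod p) := by
  have : Fact (Nat.Prime 3) := ⟨Nat.prime_three⟩
  obtain ⟨ω, hω⟩ := exists_prime_orderOf_dvd_card (G := (ZMod p)ˣ) 3
    (by rw [ZMod.card_units]; lia)
  have hprim : IsPrimitiveRoot (ω : ZMod p) 3 :=
    IsPrimitiveRoot.coe_units_iff.2 (hω ▸ IsPrimitiveRoot.orderOf ω)
  have hsum := hprim.geom_sum_eq_zero (by norm_num)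
  simp only [sum_range_succ, range_zero, sum_empty] at hsum
  exact ⟨2 * ω + 1, by linear_combination -4 * hsum⟩

end QuadraticResidues

section Representation

/-- Thue's lemma. -/
theorem exists_intCast_eq_mul_sq_lt_sq_lt {n : ℕ} [NeZero n] (hn : ¬IsSquare n) (r : ZMod n) :
    ∃ a b : ℤ, (a : ZMod n) = r * b ∧ a ^ 2 < n ∧ b ^ 2 < n ∧ (a ≠ 0 ∨ b ≠ 0) := by
  have hcard : (univ : Finset (ZMod n)).card < (range (n.sqrt + 1) ×ˢ range (n.sqrt + 1)).card := by
    rw [card_univ, ZMod.card, card_product, card_range]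
    exact Nat.lt_succ_sqrt n
  obtain ⟨⟨x₁, x₂⟩, hx, ⟨y₁, y₂⟩, hy, hne, heq⟩ := exists_ne_map_eq_of_card_lt_of_maps_to hcard
    (f := fun z : ℕ × ℕ ↦ (z.1 : ZMod n) - r * z.2) fun _ _ ↦ mem_coe.2 (mem_univ _)
  simp only [mem_product, mem_range, Nat.lt_succ_iff] at hx hy
  have hlt {u v : ℕ} (hu : u ≤ n.sqrt) (hv : v ≤ n.sqrt) : ((u : ℤ) - v) ^ 2 < n := by
    have hsqrt : n.sqrt ^ 2 < n :=
      (Nat.sqrt_le' n).lt_of_ne fun h ↦ hn ⟨n.sqrt, by rw [← sq, h]⟩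
    calc ((u : ℤ) - v) ^ 2 ≤ (n.sqrt : ℤ) ^ 2 := sq_le_sq' (by lia) (by lia)
      _ < n := by exact_mod_cast hsqrt
  refine ⟨x₁ - y₁, x₂ - y₂, ?_, hlt hx.1 hy.1, hlt hx.2 hy.2, ?_⟩
  · push_cast
    linear_combination heq
  · by_contra! h
    exact hne (Prod.ext (by lia) (by lia))

theorem eq_or_of_sq_add_fifteen_mul_sq_eq_mul {P a b k : ℤ}
    (hP : (P : ZMod 15) = 1 ∨ (P : ZMod 15) = 4) (hk0 : 0 < k) (hk : k < 16)
    (h : a ^ 2 + 15 * b ^ 2 = k * P) :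
    k = 1 ∨ k = 4 ∨ k = 6 ∨ k = 9 ∨ k = 10 ∨ k = 15 := by
  have hres : ∀ P : ZMod 15, P = 1 ∨ P = 4 → ∀ a k : ZMod 15, a ^ 2 = k * P →
      k = 0 ∨ k = 1 ∨ k = 4 ∨ k = 6 ∨ k = 9 ∨ k = 10 := by decide
  have h15 := congrArg (Int.cast (R := ZMod 15)) h
  push_cast at h15
  rw [show (15 : ZMod 15) = 0 by rfl, zero_mul, add_zero] at h15
  have hk15 := hres P hP a k h15
  interval_cases k <;> lia

theorem three_mul_sq_add_five_mul_sq_ne {P u v : ℤ} (hP : Odd P) :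
    3 * u ^ 2 + 5 * v ^ 2 ≠ 2 * P := by
  have hres : ∀ u v : ZMod 4, 3 * u ^ 2 + 5 * v ^ 2 ≠ 2 := by decide
  obtain ⟨q, rfl⟩ := hP
  intro h
  refine hres u v ?_
  have h4 := congrArg (Int.cast (R := ZMod 4)) h
  push_cast at h4
  rw [h4]
  linear_combination (q : ZMod 4) * (by rfl : (4 : ZMod 4) = 0)

theorem two_dvd_of_sq_add_fifteen_mul_sq_eq {P a b : ℤ} (hP : Odd P)
    (h : a ^ 2 + 15 * b ^ 2 = 4 * P) : 2 ∣ a ∧ 2 ∣ b := by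
  have hres : ∀ a b : ZMod 8, a ^ 2 + 15 * b ^ 2 = 4 → 4 * a = 0 ∧ 4 * b = 0 := by decide
  have hdvd {c : ℤ} (hc : 4 * (c : ZMod 8) = 0) : 2 ∣ c := by
    have : (8 : ℤ) ∣ 4 * c := (ZMod.intCast_zmod_eq_zero_iff_dvd (4 * c) 8).1 (by exact_mod_cast hc)
    lia
  obtain ⟨q, rfl⟩ := hP
  have h8 := congrArg (Int.cast (R := ZMod 8)) h
  push_cast at h8
  obtain ⟨ha, hb⟩ := hres a b
    (by linear_combination h8 + (q : ZMod 8) * (by rfl : (8 : ZMod 8) = 0))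
  exact ⟨hdvd ha, hdvd hb⟩

theorem exists_eq_sq_add_of_sq_add_eq_mul {P a b k : ℤ} (hP : Odd P)
    (hP15 : (P : ZMod 15) = 1 ∨ (P : ZMod 15) = 4) (hk0 : 0 < k) (hk : k < 16)
    (h : a ^ 2 + 15 * b ^ 2 = k * P) : ∃ x y : ℤ, P = x ^ 2 + 15 * y ^ 2 := by
  have hprime5 : Prime (5 : ℤ) := Nat.prime_iff_prime_int.1 Nat.prime_five
  rcases eq_or_of_sq_add_fifteen_mul_sq_eq_mul hP15 hk0 hk h with rfl | rfl | rfl | rfl | rfl | rfl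
  · exact ⟨a, b, by linarith⟩
  · obtain ⟨⟨x, rfl⟩, ⟨y, rfl⟩⟩ := two_dvd_of_sq_add_fifteen_mul_sq_eq hP h
    exact ⟨x, y, by linarith⟩
  · obtain ⟨c, rfl⟩ : 3 ∣ a :=
      Int.prime_three.dvd_of_dvd_pow (n := 2) ⟨2 * P - 5 * b ^ 2, by linarith⟩
    exact absurd (by linarith) (three_mul_sq_add_five_mul_sq_ne hP (u := c) (v := b))
  · obtain ⟨x, rfl⟩ : 3 ∣ a :=
      Int.prime_three.dvd_of_dvd_pow (n := 2) ⟨3 * P - 5 * b ^ 2, by linarith⟩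
    obtain ⟨y, rfl⟩ : 3 ∣ b := Int.prime_three.dvd_of_dvd_pow (n := 2) (by lia)
    exact ⟨x, y, by linarith⟩
  · obtain ⟨c, rfl⟩ : 5 ∣ a :=
      hprime5.dvd_of_dvd_pow (n := 2) ⟨2 * P - 3 * b ^ 2, by linarith⟩
    exact absurd (by linarith) (three_mul_sq_add_five_mul_sq_ne hP (u := b) (v := c))
  · have h3 : 3 ∣ a := Int.prime_three.dvd_of_dvd_pow (n := 2) ⟨5 * P - 5 * b ^ 2, by linarith⟩
    have h5 : 5 ∣ a := hprime5.dvd_of_dvd_pow (n := 2) ⟨3 * P - 3 * b ^ 2, by linarith⟩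
    obtain ⟨y, rfl⟩ : 15 ∣ a := by lia
    exact ⟨b, y, by linarith⟩

theorem exists_eq_sq_add_fifteen_mul_sq {p : ℕ} [hp : Fact p.Prime]
    (h15 : p % 15 = 1 ∨ p % 15 = 4) : ∃ x y : ℤ, (p : ℤ) = x ^ 2 + 15 * y ^ 2 := by
  obtain ⟨r, hr⟩ := isSquare_five (p := p) (by lia)
  obtain ⟨s, hs⟩ := isSquare_neg_three (p := p) (by lia)
  obtain ⟨a, b, hab, ha, hb, hne⟩ :=
    exists_intCast_eq_mul_sq_lt_sq_lt hp.out.prime.irreducible.not_isSquare (r * s)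
  obtain ⟨k, hk⟩ : (p : ℤ) ∣ a ^ 2 + 15 * b ^ 2 := by
    rw [← ZMod.intCast_zmod_eq_zero_iff_dvd]
    push_cast
    rw [hab]
    linear_combination 3 * (b : ZMod p) ^ 2 * hr - r ^ 2 * (b : ZMod p) ^ 2 * hs
  have hp0 : (0 : ℤ) < p := by exact_mod_cast hp.out.pos
  have hpos : 0 < a ^ 2 + 15 * b ^ 2 := by
    rcases hne with h | h <;> positivity
  have hk0 : 0 < k := pos_of_mul_pos_right (hk ▸ hpos) hp0.le
  have hk16 : k < 16 := lt_of_mul_lt_mul_left (by linarith) hp0.le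
  have hodd : Odd (p : ℤ) := by
    exact_mod_cast hp.out.odd_of_ne_two (by lia)
  refine exists_eq_sq_add_of_sq_add_eq_mul hodd ?_ hk0 hk16 (by rw [hk]; ring)
  rw [Int.cast_natCast, ← ZMod.natCast_mod]
  rcases h15 with h | h <;> rw [h]
  exacts [Or.inl rfl, Or.inr rfl]

end Representation

theorem sum_A_eq_hasseInvariant_sq {p : ℕ} [Fact p.Prime] (hp3 : 3 < p) {φ : ZMod p}
    (hφ : φ ^ 2 = φ + 1) :
    ∑ n ∈ range p, (A n : ZMod p) = hasseInvariant p (cmA φ) (cmB φ) ^ 2 := by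
  rw [sum_A_eq_aeval_shiftedLegendre_sq hp3 hφ, hasseInvariant_cm_eq_aeval_shiftedLegendre hp3 hφ]

theorem stmt_5 (p : ℕ) [Fact p.Prime] (hp : p % 5 = 1 ∨ p % 5 = 4) :
    ((p % 15 = 1 ∨ p % 15 = 4) →
      (∃ x y : ℤ, (p : ℤ) = x ^ 2 + 15 * y ^ 2) ∧
        ∀ x y : ℤ, (p : ℤ) = x ^ 2 + 15 * y ^ 2 →
          (∑ n ∈ Finset.range p, (A n : ZMod p)) = 4 * (x : ZMod p) ^ 2)
    ∧
    ((p % 15 = 11 ∨ p % 15 = 14) →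
      (∑ n ∈ Finset.range p, (A n : ZMod p)) = 0) := by
  have hp11 := eleven_le_of_mod_five hp
  obtain ⟨φ, hφ⟩ := exists_sq_eq_add_one hp
  have hsum := sum_A_eq_hasseInvariant_sq (by lia) hφ
  refine ⟨fun h ↦ ⟨exists_eq_sq_add_fifteen_mul_sq h, fun x y hxy ↦ ?_⟩, fun h ↦ ?_⟩
  · rw [hsum, hasseInvariant_cm_sq hp11 hφ (by lia) hxy]
    push_cast
    rfl
  · rw [hsum, hasseInvariant_cm_eq_zero hp11 hφ (by lia), zero_pow two_ne_zero]
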